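/- arXiv:1708.04122 — 2 statements merged into one kernel-verified Lean document; each statement's English description precedes it below -/
import Mathlib

section
/- Let N(x) denote the number of zeros ρ = β + iγ of the Riemann zeta-function with 0 < β < 1 and 0 < γ ≤ x, counted with multiplicity. Then for all x ≥ e, |N(x) − (x/2π)·log(x/(2πe)) − 7/8| ≤ 0.15·log x + 3. -/
open MeasureTheory Filter
open scoped FourierTransform Real

/-- The class 𝒜 sharp constant 𝒞(A). -/
noncomputable def Ccal (A : ℝ) : ℝ :=
  sSup { r : ℝ | ∃ F : ℝ → ℂ, Continuous F ∧ Integrable F ∧ F ≠ 0 ∧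
    r = (‖F 0‖ - A * ∫ t in {t : ℝ | 1 ≤ |t|}, ‖𝓕 F t‖) / ∫ x : ℝ, ‖F x‖ }

/-- 𝒞(∞), over the bandlimited class ℰ. -/
noncomputable def CcalInf : ℝ :=
  sSup { r : ℝ | ∃ F : ℝ → ℂ, Continuous F ∧ Integrable F ∧ F ≠ 0 ∧
    Function.support (𝓕 F) ⊆ Set.Icc (-1 : ℝ) 1 ∧
    r = ‖F 0‖ / ∫ x : ℝ, ‖F x‖ }

/-- Fourier transform of a real-valued function, as a real number (its real part). -/
noncomputable def FTr (F : ℝ → ℝ) (t : ℝ) : ℝ := (𝓕 (fun x => (F x : ℂ)) t).re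

/-- The class 𝒜⁺ sharp constant 𝒞⁺(A). -/
noncomputable def CcalPlus (A : ℝ) : ℝ :=
  sSup { r : ℝ | ∃ F : ℝ → ℝ, Continuous F ∧ Integrable F ∧ F ≠ 0 ∧ (∀ x, F (-x) = F x) ∧
    r = (F 0 - A * ∫ t in {t : ℝ | 1 ≤ |t|}, max (FTr F t) 0) / ∫ x : ℝ, |F x| }

/-- 𝒞⁺(∞), over the class ℰ⁺. -/
noncomputable def CcalPlusInf : ℝ :=
  sSup { r : ℝ | ∃ F : ℝ → ℝ, Continuous F ∧ Integrable F ∧ F ≠ 0 ∧ (∀ x, F (-x) = F x) ∧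
    (∀ t : ℝ, 1 ≤ |t| → FTr F t ≤ 0) ∧
    r = F 0 / ∫ x : ℝ, |F x| }

/-- The prime counting function at a real argument. -/
noncomputable def primePi (x : ℝ) : ℕ := Nat.primeCounting ⌊x⌋₊

/-- The Brun–Titchmarsh constant 𝐁. -/
noncomputable def BrunTitchmarsh : ℝ :=
  limsup (fun x : ℝ =>
    ((primePi (x + Real.sqrt x) : ℝ) - (primePi x : ℝ)) / (Real.sqrt x / Real.log x)) atTop

/-!
Let `ξ(s) = s (s - 1) Γ_ℝ(s) ζ(s)`, whose zeros are the zeros of `ζ` in the critical strip. By the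
argument principle on the rectangle `[1 - c, c] × [0, T]` and the symmetries `ξ(s) = ξ(1 - s)` and
`ξ(conj s) = conj (ξ(s))`, the number `N(T)` is `π⁻¹` times the variation of the argument of `ξ`
along `c → c + iT → 1/2 + iT`. The function `ξ(s) e^{-iπ(s - 1/2)/4} / (s (s - 1))` has an explicit
logarithm on `Re s > 1`: Stirling's formula for `log Γ`, with Gudermann's series as remainder, plus
the logarithm of the Euler product. This gives the main term.

The remaining variation, from `c + iT` to `1/2 + iT`, is controlled by Backlund's trick: if the
argument varies by `π k`, then the real part of the `M`-th power of this function has at least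
`M k - 1` zeros on the segment, and their reflections through the functional equation are zeros as
well; Jensen's formula on the disc of centre `c` and radius `2 c - 1` compares them with the
average of the logarithm of the function over the circle, and `M → ∞` removes the rounding. The
average is computed from a convexity (Phragmén–Lindelöf) bound in the strip. With `c = 23 / 20`
everything is explicit for `T ≥ 12`; below `12` there are at most three zeros, because `N` is
monotone and integer valued.
-/

namespace ZetaZeroCount

open Complex Set Topology

/-! ### Stirling's formula for the complex Gamma function -/

section LogGamma

variable {z : ℂ}

/-- The general term of Gudermann's series for the remainder in Stirling's formula. -/
noncomputable def gudermannTerm (z : ℂ) : ℂ :=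
  (z + 1 / 2) * (log (z + 1) - log z) - 1

/-- The remainder in Stirling's formula, as Gudermann's series. -/
noncomputable def stirlingRemainder (z : ℂ) : ℂ := ∑' n : ℕ, gudermannTerm (z + n)

/-- The branch of `log Γ` on the right half plane given by Stirling's formula. -/
noncomputable def logGamma (z : ℂ) : ℂ :=
  (z - 1 / 2) * log z - z + (Real.log (2 * π) / 2 : ℝ) + stirlingRemainder z

lemma ne_zero_of_re_pos (hz : 0 < z.re) : z ≠ 0 := fun h => hz.ne' (by rw [h, zero_re])

lemma re_add_natCast_pos (hz : 0 < z.re) (n : ℕ) : 0 < (z + n).re := by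
  rw [add_re, natCast_re]
  positivity

lemma gudermannTerm_eq_integral (hz : 0 < z.re) :
    gudermannTerm z = ∫ u in (0 : ℝ)..1, (u : ℂ) * (1 - u) / 2 / (z + u) ^ 2 := by
  have hre : ∀ u ∈ uIcc (0 : ℝ) 1, 0 < (z + u).re := fun u hu => by
    rw [uIcc_of_le zero_le_one] at hu
    simp only [add_re, ofReal_re]
    linarith [hu.1]
  have hne : ∀ u ∈ uIcc (0 : ℝ) 1, z + u ≠ 0 := fun u hu => ne_zero_of_re_pos (hre u hu)
  have hderiv : ∀ u ∈ uIcc (0 : ℝ) 1, HasDerivAt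
      (fun u : ℝ => -(u : ℂ) / 2 + (z + 1 / 2) * log (z + u) + z * (1 + z) / 2 * (z + u)⁻¹)
      ((u : ℂ) * (1 - u) / 2 / (z + u) ^ 2) u := by
    intro u hu
    have h0 : HasDerivAt (fun u : ℝ => (u : ℂ)) 1 u := (hasDerivAt_id u).ofReal_comp
    have h1 : HasDerivAt (fun u : ℝ => z + (u : ℂ)) 1 u := h0.const_add z
    have hlog := h1.clog_real (Or.inl (hre u hu))
    have hinv := h1.inv (hne u hu)
    convert! ((h0.neg.div_const 2).add (hlog.const_mul (z + 1 / 2))).add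
      (hinv.const_mul (z * (1 + z) / 2)) using 1
    have := hne u hu
    field_simp
    ring
  rw [intervalIntegral.integral_eq_sub_of_hasDerivAt hderiv]
  · have h0 := hne 0 left_mem_uIcc
    have h1 := hne 1 right_mem_uIcc
    simp only [ofReal_zero, add_zero, ofReal_one] at h0 h1
    simp only [gudermannTerm, ofReal_zero, ofReal_one, add_zero]
    field_simp
    ring
  · exact ContinuousOn.intervalIntegrable
      (ContinuousOn.div (by fun_prop) (by fun_prop) fun u hu => pow_ne_zero _ (hne u hu))

lemma norm_gudermannTerm_le_integral (hz : 0 < z.re) :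
    ‖gudermannTerm z‖ ≤ ∫ u in (0 : ℝ)..1, 1 / 8 * ((z.re + u) ^ 2 + z.im ^ 2)⁻¹ := by
  have hpos : ∀ u ∈ Icc (0 : ℝ) 1, 0 < (z.re + u) ^ 2 + z.im ^ 2 := fun u hu => by
    have : 0 < z.re + u := by linarith [hu.1]
    positivity
  rw [gudermannTerm_eq_integral hz]
  refine intervalIntegral.norm_integral_le_of_norm_le zero_le_one
    (Eventually.of_forall fun u hu => ?_) ?_
  · have hden : ‖(z + u) ^ 2‖ = (z.re + u) ^ 2 + z.im ^ 2 := by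
      rw [norm_pow, ← normSq_eq_norm_sq, normSq_apply]
      simp only [add_re, ofReal_re, add_im, ofReal_im, add_zero]
      ring
    have hnum : ‖(u : ℂ) * (1 - u) / 2‖ = u * (1 - u) / 2 := by
      rw [show (u : ℂ) * (1 - u) / 2 = ((u * (1 - u) / 2 : ℝ) : ℂ) by push_cast; ring, norm_real,
        Real.norm_of_nonneg]
      nlinarith [hu.1, hu.2]
    rw [norm_div, hden, hnum, div_eq_mul_inv]
    exact mul_le_mul_of_nonneg_right (by nlinarith [sq_nonneg (u - 1 / 2)])
      (inv_nonneg.2 (hpos u ⟨hu.1.le, hu.2⟩).le)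
  · apply ContinuousOn.intervalIntegrable
    rw [uIcc_of_le zero_le_one]
    exact continuousOn_const.mul (ContinuousOn.inv₀ (by fun_prop) fun u hu => (hpos u hu).ne')

lemma integral_inv_add_sq {x : ℝ} (hx : 0 < x) :
    ∫ u in (0 : ℝ)..1, ((x + u) ^ 2)⁻¹ = x⁻¹ - (x + 1)⁻¹ := by
  have hpos : ∀ u ∈ uIcc (0 : ℝ) 1, 0 < x + u := fun u hu => by
    rw [uIcc_of_le zero_le_one] at hu
    linarith [hu.1]
  have hderiv : ∀ u ∈ uIcc (0 : ℝ) 1,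
      HasDerivAt (fun u : ℝ => -(x + u)⁻¹) ((x + u) ^ 2)⁻¹ u := fun u hu => by
    convert! (((hasDerivAt_id u).const_add x).inv (hpos u hu).ne').neg using 1
    simp only [id, neg_div, neg_neg, one_div]
  rw [intervalIntegral.integral_eq_sub_of_hasDerivAt hderiv]
  · rw [add_zero]
    ring
  · exact ContinuousOn.intervalIntegrable
      (ContinuousOn.inv₀ (by fun_prop) fun u hu => (pow_pos (hpos u hu) 2).ne')

lemma integral_inv_add_sq_add_sq (x : ℝ) {y : ℝ} (hy : y ≠ 0) :
    ∫ u in (0 : ℝ)..1, ((x + u) ^ 2 + y ^ 2)⁻¹ =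
      y⁻¹ * (Real.arctan ((x + 1) / y) - Real.arctan (x / y)) := by
  have hderiv : ∀ u ∈ uIcc (0 : ℝ) 1,
      HasDerivAt (fun u : ℝ => y⁻¹ * Real.arctan ((x + u) / y)) ((x + u) ^ 2 + y ^ 2)⁻¹ u := by
    intro u _
    convert! (((hasDerivAt_id u).const_add x).div_const y).arctan.const_mul y⁻¹ using 1
    have : (x + u) ^ 2 + y ^ 2 ≠ 0 := by positivity
    have : 1 + ((x + u) / y) ^ 2 ≠ 0 := by positivity
    simp only [id]
    field_simp
    ring
  rw [intervalIntegral.integral_eq_sub_of_hasDerivAt hderiv]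
  · rw [add_zero]
    ring
  · exact ContinuousOn.intervalIntegrable
      (ContinuousOn.inv₀ (by fun_prop) fun u _ => by positivity)

lemma norm_gudermannTerm_le (hz : 0 < z.re) :
    ‖gudermannTerm z‖ ≤ 1 / 8 * ((z.re)⁻¹ - (z.re + 1)⁻¹) := by
  have hpos : ∀ u ∈ Icc (0 : ℝ) 1, 0 < (z.re + u) ^ 2 := fun u hu => by
    have : 0 < z.re + u := by linarith [hu.1]
    positivity
  have hInt : ∀ c : ℝ, 0 ≤ c → IntervalIntegrable
      (fun u : ℝ => 1 / 8 * ((z.re + u) ^ 2 + c)⁻¹) volume 0 1 := fun c hc => by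
    refine ContinuousOn.intervalIntegrable (continuousOn_const.mul ?_)
    rw [uIcc_of_le zero_le_one]
    exact ContinuousOn.inv₀ (by fun_prop) fun u hu => (add_pos_of_pos_of_nonneg (hpos u hu) hc).ne'
  calc ‖gudermannTerm z‖ ≤ ∫ u in (0 : ℝ)..1, 1 / 8 * ((z.re + u) ^ 2 + z.im ^ 2)⁻¹ :=
        norm_gudermannTerm_le_integral hz
    _ ≤ ∫ u in (0 : ℝ)..1, 1 / 8 * ((z.re + u) ^ 2 + 0)⁻¹ := by
        refine intervalIntegral.integral_mono_on zero_le_one (hInt _ (sq_nonneg _))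
          (hInt 0 le_rfl) fun u hu => ?_
        have := hpos u hu
        gcongr
        positivity
    _ = 1 / 8 * ((z.re)⁻¹ - (z.re + 1)⁻¹) := by
        simp only [add_zero]
        rw [intervalIntegral.integral_const_mul, integral_inv_add_sq hz]

lemma norm_gudermannTerm_le_arctan (hz : 0 < z.re) (hy : 0 < z.im) :
    ‖gudermannTerm z‖ ≤
      1 / (8 * z.im) * (Real.arctan ((z.re + 1) / z.im) - Real.arctan (z.re / z.im)) := by
  refine (norm_gudermannTerm_le_integral hz).trans (le_of_eq ?_)
  rw [intervalIntegral.integral_const_mul, integral_inv_add_sq_add_sq _ hy.ne']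
  field_simp

lemma hasSum_sub_succ_of_tendsto {a : ℕ → ℝ} {l : ℝ} (ha : Monotone a)
    (hl : Tendsto a atTop (𝓝 l)) : HasSum (fun n => a (n + 1) - a n) (l - a 0) := by
  rw [hasSum_iff_tendsto_nat_of_nonneg fun n => sub_nonneg.2 (ha n.le_succ)]
  simp_rw [Finset.sum_range_sub]
  exact hl.sub_const _

lemma hasSum_inv_sub_inv_add_one {x : ℝ} (hx : 0 < x) :
    HasSum (fun n : ℕ => (x + n)⁻¹ - (x + n + 1)⁻¹) x⁻¹ := by
  have hlim : Tendsto (fun n : ℕ => -(x + n)⁻¹) atTop (𝓝 (-0)) :=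
    (tendsto_inv_atTop_zero.comp
      (tendsto_atTop_add_const_left _ x tendsto_natCast_atTop_atTop)).neg
  have hmono : Monotone fun n : ℕ => -(x + n)⁻¹ := fun a b hab => by
    have : (a : ℝ) ≤ b := Nat.cast_le.2 hab
    simp only [neg_le_neg_iff]
    gcongr
  simpa [add_assoc, ← sub_eq_neg_add] using hasSum_sub_succ_of_tendsto hmono hlim

lemma norm_gudermannTerm_add_natCast_le (hz : 0 < z.re) (n : ℕ) :
    ‖gudermannTerm (z + n)‖ ≤ 1 / 8 * ((z.re + n)⁻¹ - (z.re + n + 1)⁻¹) := by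
  simpa only [add_re, natCast_re] using norm_gudermannTerm_le (re_add_natCast_pos hz n)

lemma summable_gudermannTerm (hz : 0 < z.re) : Summable fun n : ℕ => gudermannTerm (z + n) :=
  .of_norm_bounded ((hasSum_inv_sub_inv_add_one hz).mul_left _).summable
    (norm_gudermannTerm_add_natCast_le hz)

lemma norm_stirlingRemainder_le (hz : 0 < z.re) : ‖stirlingRemainder z‖ ≤ 1 / (8 * z.re) := by
  rw [← one_div_mul_one_div, one_div z.re]
  exact tsum_of_norm_bounded ((hasSum_inv_sub_inv_add_one hz).mul_left _)
    (norm_gudermannTerm_add_natCast_le hz)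

lemma norm_stirlingRemainder_le_of_im_pos (hz : 0 < z.re) (hy : 0 < z.im) :
    ‖stirlingRemainder z‖ ≤ π / (16 * z.im) := by
  have hlim : Tendsto (fun n : ℕ => Real.arctan ((z.re + n) / z.im)) atTop (𝓝 (π / 2)) :=
    (tendsto_nhds_of_tendsto_nhdsWithin Real.tendsto_arctan_atTop).comp
      ((tendsto_atTop_add_const_left _ _ tendsto_natCast_atTop_atTop).atTop_div_const hy)
  have hmono : Monotone fun n : ℕ => Real.arctan ((z.re + n) / z.im) := fun a b hab => by
    have : (a : ℝ) ≤ b := Nat.cast_le.2 hab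
    exact Real.arctan_mono (by gcongr)
  have hterm (n : ℕ) : ‖gudermannTerm (z + n)‖ ≤ 1 / (8 * z.im) *
      (Real.arctan ((z.re + (n + 1 : ℕ)) / z.im) - Real.arctan ((z.re + n) / z.im)) := by
    simpa [add_assoc] using
      norm_gudermannTerm_le_arctan (re_add_natCast_pos hz n) (by simpa using hy)
  have harctan : 0 ≤ Real.arctan ((z.re + (0 : ℕ)) / z.im) := Real.arctan_nonneg.2 (by positivity)
  calc ‖stirlingRemainder z‖
      ≤ 1 / (8 * z.im) * (π / 2 - Real.arctan ((z.re + (0 : ℕ)) / z.im)) :=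
        tsum_of_norm_bounded ((hasSum_sub_succ_of_tendsto hmono hlim).mul_left _) hterm
    _ ≤ 1 / (8 * z.im) * (π / 2) := by
        gcongr
        linarith
    _ = π / (16 * z.im) := by
        field_simp
        norm_num

lemma differentiableAt_gudermannTerm (hz : 0 < z.re) : DifferentiableAt ℂ gudermannTerm z := by
  have h1 : z ∈ slitPlane := Or.inl hz
  have h2 : z + 1 ∈ slitPlane := Or.inl (by rw [add_re, one_re]; linarith)
  unfold gudermannTerm
  fun_prop (disch := assumption)

lemma differentiableAt_stirlingRemainder (hz : 0 < z.re) :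
    DifferentiableAt ℂ stirlingRemainder z := by
  set d := z.re / 2
  have hd : 0 < d := half_pos hz
  have hU : IsOpen {w : ℂ | d < w.re} := isOpen_lt continuous_const continuous_re
  refine (differentiableOn_tsum_of_summable_norm
    ((hasSum_inv_sub_inv_add_one hd).mul_left (1 / 8)).summable
    (fun n w hw => ?_) hU fun n w hw => ?_).differentiableAt
    (hU.mem_nhds (show d < z.re from half_lt_self hz))
  · exact ((differentiableAt_gudermannTerm (re_add_natCast_pos (hd.trans hw) n)).comp w
      (differentiableAt_id.add_const _)).differentiableWithinAt
  · have hw0 : d < w.re := hw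
    have hw1 : 0 < w.re := hd.trans hw0
    have htelescope : ∀ x : ℝ, 0 < x → x⁻¹ - (x + 1)⁻¹ = (x * (x + 1))⁻¹ := fun x hx => by
      field_simp
      ring
    refine (norm_gudermannTerm_add_natCast_le hw1 n).trans ?_
    rw [htelescope _ (by positivity), htelescope _ (by positivity)]
    gcongr

lemma differentiableAt_logGamma (hz : 0 < z.re) : DifferentiableAt ℂ logGamma z := by
  have h1 : z ∈ slitPlane := Or.inl hz
  have h2 := differentiableAt_stirlingRemainder hz
  unfold logGamma
  fun_prop (disch := assumption)

lemma stirlingRemainder_eq_add (hz : 0 < z.re) :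
    stirlingRemainder z = gudermannTerm z + stirlingRemainder (z + 1) := by
  unfold stirlingRemainder
  rw [(summable_gudermannTerm hz).tsum_eq_zero_add]
  simp only [Nat.cast_zero, add_zero, Nat.cast_add, Nat.cast_one, add_assoc, add_comm (1 : ℂ)]

lemma exp_logGamma_add_one (hz : 0 < z.re) : exp (logGamma (z + 1)) = z * exp (logGamma z) := by
  have : logGamma (z + 1) = log z + logGamma z := by
    unfold logGamma
    rw [stirlingRemainder_eq_add hz]
    unfold gudermannTerm
    ring
  rw [this, Complex.exp_add, exp_log (ne_zero_of_re_pos hz)]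

lemma exp_logGamma_add_natCast (hz : 0 < z.re) (n : ℕ) :
    exp (logGamma (z + n)) = (∏ j ∈ Finset.range n, (z + j)) * exp (logGamma z) := by
  induction n with
  | zero => simp
  | succ n ih =>
    rw [Finset.prod_range_succ, Nat.cast_succ, ← add_assoc,
      exp_logGamma_add_one (re_add_natCast_pos hz n), ih]
    ring

lemma tendsto_stirlingRemainder_add_natCast (hz : 0 < z.re) :
    Tendsto (fun n : ℕ => stirlingRemainder (z + n)) atTop (𝓝 0) := by
  refine squeeze_zero_norm (a := fun n : ℕ => 1 / (8 * (z.re + n))) (fun n => ?_) ?_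
  · simpa only [add_re, natCast_re] using norm_stirlingRemainder_le (re_add_natCast_pos hz n)
  · exact tendsto_const_nhds.div_atTop (Tendsto.const_mul_atTop (by norm_num)
      (tendsto_atTop_add_const_left _ _ tendsto_natCast_atTop_atTop))

lemma log_add_natCast_succ (hz : 0 < z.re) {n : ℕ} (hn : 0 < n) :
    log (z + (n + 1 : ℕ)) = Real.log n + log (1 + (z + 1) / n) := by
  have hn' : (0 : ℝ) < n := Nat.cast_pos.2 hn
  have hnc : (n : ℂ) ≠ 0 := Nat.cast_ne_zero.2 hn.ne'
  have hsplit : z + (n + 1 : ℕ) = (n : ℝ) * (1 + (z + 1) / n) := by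
    push_cast
    field_simp
    ring
  have hre : 0 < (1 + (z + 1) / n).re := by
    rw [add_re, div_natCast_re, add_re, one_re]
    positivity
  rw [hsplit, log_ofReal_mul hn' (ne_zero_of_re_pos hre)]

lemma log_stirling_approximation {n : ℕ} (hn : 0 < n) :
    Real.log (√(2 * n * π) * (n / Real.exp 1) ^ n) =
      (n + 1 / 2) * Real.log n - n + Real.log (2 * π) / 2 := by
  have hn' : (0 : ℝ) < n := Nat.cast_pos.2 hn
  rw [Real.log_mul (by positivity) (by positivity), Real.log_sqrt (by positivity), Real.log_pow,
    Real.log_div hn'.ne' (Real.exp_ne_zero 1), Real.log_exp, mul_right_comm,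
    Real.log_mul (by positivity) hn'.ne']
  ring

lemma tendsto_logGamma_add_natCast_sub (hz : 0 < z.re) :
    Tendsto (fun n : ℕ => logGamma (z + (n + 1 : ℕ)) - z * Real.log n -
      (Real.log (√(2 * n * π) * (n / Real.exp 1) ^ n) : ℝ)) atTop (𝓝 0) := by
  have hlog : Tendsto (fun n : ℕ => n * log (1 + (z + 1) / n)) atTop (𝓝 (z + 1)) := by
    refine Complex.tendsto_nat_mul_log_one_add_of_tendsto (tendsto_const_nhds.congr' ?_)
    filter_upwards [eventually_ne_atTop 0] with n hn
    field_simp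
  have hfactor : Tendsto (fun n : ℕ => (1 + (z + 1 / 2) / n : ℂ)) atTop (𝓝 (1 + 0)) :=
    (tendsto_const_div_atTop_nhds_zero_nat _).const_add _
  have hmain := ((hfactor.mul hlog).sub_const (z + 1)).add
    ((tendsto_stirlingRemainder_add_natCast hz).comp (tendsto_add_atTop_nat 1))
  simp only [add_zero, one_mul, sub_self] at hmain
  refine hmain.congr' ?_
  filter_upwards [eventually_gt_atTop 0] with n hn
  have hn' : (n : ℂ) ≠ 0 := Nat.cast_ne_zero.2 hn.ne'
  simp only [Function.comp_apply, logGamma]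
  rw [log_add_natCast_succ hz hn, log_stirling_approximation hn]
  push_cast
  field_simp
  ring

lemma tendsto_exp_logGamma_div_factorial (hz : 0 < z.re) :
    Tendsto (fun n : ℕ => exp (logGamma (z + (n + 1 : ℕ))) / ((n : ℂ) ^ z * n.factorial)) atTop
      (𝓝 1) := by
  have hexp := (continuous_exp.tendsto 0).comp (tendsto_logGamma_add_natCast_sub hz)
  have hfact : Tendsto (fun n : ℕ => ((√(2 * n * π) * (n / Real.exp 1) ^ n / n.factorial : ℝ) : ℂ))
      atTop (𝓝 1) := by
    have hne : ∀ᶠ n : ℕ in atTop, (n.factorial : ℝ) ≠ 0 :=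
      Eventually.of_forall fun n => Nat.cast_ne_zero.2 n.factorial_ne_zero
    exact (continuous_ofReal.tendsto 1).comp ((Asymptotics.isEquivalent_iff_tendsto_one hne).1
      Stirling.factorial_isEquivalent_stirling.symm)
  have hmul := hexp.mul hfact
  rw [Complex.exp_zero, one_mul] at hmul
  refine hmul.congr' ?_
  filter_upwards [eventually_gt_atTop 0] with n hn
  have hpos : 0 < √(2 * n * π) * (n / Real.exp 1) ^ n := by
    have : (0 : ℝ) < n := Nat.cast_pos.2 hn
    positivity
  have hpos' : ((√(2 * n * π) * (n / Real.exp 1) ^ n : ℝ) : ℂ) ≠ 0 := ofReal_ne_zero.2 hpos.ne'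
  rw [Function.comp_apply, Complex.exp_sub, Complex.exp_sub, ← ofReal_exp, Real.exp_log hpos,
    ofReal_div, ofReal_natCast, cpow_def_of_ne_zero (Nat.cast_ne_zero.2 hn.ne'), ← natCast_log,
    mul_comm z]
  field_simp

lemma exp_logGamma (hz : 0 < z.re) : exp (logGamma z) = Gamma z := by
  have hmul := (tendsto_exp_logGamma_div_factorial hz).mul (GammaSeq_tendsto_Gamma z)
  rw [one_mul] at hmul
  refine tendsto_nhds_unique (tendsto_const_nhds.congr' ?_) hmul
  filter_upwards [eventually_ne_atTop 0] with n hn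
  have hprod : ∏ j ∈ Finset.range (n + 1), (z + j) ≠ 0 :=
    Finset.prod_ne_zero_iff.2 fun j _ => ne_zero_of_re_pos (re_add_natCast_pos hz j)
  have hpow : (n : ℂ) ^ z ≠ 0 := cpow_ne_zero_iff.2 (Or.inl (Nat.cast_ne_zero.2 hn))
  have hfact : (n.factorial : ℂ) ≠ 0 := Nat.cast_ne_zero.2 n.factorial_ne_zero
  rw [exp_logGamma_add_natCast hz, GammaSeq]
  field_simp

end LogGamma

/-! ### The logarithm of the zeta function to the right of the critical strip -/

section LogZeta

variable {s : ℂ} {σ : ℝ}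

/-- The branch of `log ζ` on the half plane `1 < re s` given by the Euler product. -/
noncomputable def logZeta (s : ℂ) : ℂ := ∑' p : Nat.Primes, -log (1 - (p : ℂ) ^ (-s))

/-- The real logarithm of `ζ σ` for real `σ > 1`, which majorizes `logZeta` on the line
`re s = σ`. -/
noncomputable def logZetaReal (σ : ℝ) : ℝ := ∑' p : Nat.Primes, -Real.log (1 - (p : ℝ) ^ (-σ))

lemma exp_logZeta (hs : 1 < s.re) : exp (logZeta s) = riemannZeta s :=
  riemannZeta_eulerProduct_exp_log hs

lemma convexOn_neg_log_one_sub : ConvexOn ℝ (Iio 1) fun x : ℝ => -Real.log (1 - x) := by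
  have h := strictConcaveOn_log_Ioi.concaveOn.neg.comp_affineMap
    (AffineMap.const ℝ ℝ 1 - AffineMap.id ℝ ℝ)
  refine h.subset (fun x hx => ?_) (convex_Iio 1)
  simpa using hx

lemma monotoneOn_neg_log_one_sub : MonotoneOn (fun x : ℝ => -Real.log (1 - x)) (Iio 1) :=
  fun _ _ _ hy hxy => neg_le_neg (Real.log_le_log (sub_pos.2 hy) (sub_le_sub_left hxy 1))

lemma norm_neg_log_one_sub_le {w : ℂ} (hw : ‖w‖ < 1) :
    ‖-log (1 - w)‖ ≤ -Real.log (1 - ‖w‖) := by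
  have hreal : HasSum (fun n : ℕ => ‖w‖ ^ (n + 1) / (n + 1)) (-Real.log (1 - ‖w‖)) :=
    Real.hasSum_pow_div_log_of_abs_lt_one (by rwa [abs_norm])
  rw [← (hasSum_taylorSeries_neg_log' hw).tsum_eq]
  refine tsum_of_norm_bounded hreal fun n => le_of_eq ?_
  rw [norm_div, norm_pow, ← Nat.cast_succ, norm_natCast, Nat.cast_succ]

lemma norm_prime_cpow (p : Nat.Primes) (s : ℂ) : ‖(p : ℂ) ^ (-s)‖ = (p : ℝ) ^ (-s.re) := by
  rw [← neg_re, norm_natCast_cpow_of_pos p.prop.pos]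

lemma prime_rpow_neg_lt_one (p : Nat.Primes) (hσ : 0 < σ) : (p : ℝ) ^ (-σ) < 1 :=
  Real.rpow_lt_one_of_one_lt_of_neg (Nat.one_lt_cast.2 p.prop.one_lt) (neg_lt_zero.2 hσ)

lemma convexOn_neg_log_prime (p : Nat.Primes) :
    ConvexOn ℝ (Ioi 0) fun σ : ℝ => -Real.log (1 - (p : ℝ) ^ (-σ)) := by
  have hp : (0 : ℝ) < p := Nat.cast_pos.2 p.prop.pos
  have hpow : ConvexOn ℝ (Ioi 0) fun σ : ℝ => (p : ℝ) ^ (-σ) := by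
    simp_rw [Real.rpow_neg_eq_inv_rpow]
    exact (convexOn_rpow_left (inv_pos.2 hp)).subset (subset_univ _) (convex_Ioi 0)
  have himage : (fun σ : ℝ => (p : ℝ) ^ (-σ)) '' Ioi 0 ⊆ Iio 1 := by
    rintro _ ⟨σ, hσ, rfl⟩
    exact prime_rpow_neg_lt_one p hσ
  have hconvex : Convex ℝ ((fun σ : ℝ => (p : ℝ) ^ (-σ)) '' Ioi 0) :=
    (isPreconnected_Ioi.image _ (Continuous.continuousOn
      (Real.continuous_const_rpow hp.ne' |>.comp continuous_neg))).ordConnected.convex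
  exact (convexOn_neg_log_one_sub.subset himage hconvex).comp hpow
    (monotoneOn_neg_log_one_sub.mono himage)

lemma antitoneOn_neg_log_prime (p : Nat.Primes) :
    AntitoneOn (fun σ : ℝ => -Real.log (1 - (p : ℝ) ^ (-σ))) (Ioi 0) :=
  fun _ ha _ hb h => monotoneOn_neg_log_one_sub (prime_rpow_neg_lt_one p hb)
    (prime_rpow_neg_lt_one p ha) (Real.rpow_le_rpow_of_exponent_le
      (Nat.one_le_cast.2 p.prop.one_lt.le) (neg_le_neg h))

lemma summable_neg_log_prime (hσ : 1 < σ) :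
    Summable fun p : Nat.Primes => -Real.log (1 - (p : ℝ) ^ (-σ)) := by
  simp_rw [sub_eq_add_neg]
  exact (Real.summable_log_one_add_of_summable
    (Nat.Primes.summable_rpow.2 (neg_lt_neg hσ)).neg).neg

lemma norm_neg_log_one_sub_prime_cpow_le (p : Nat.Primes) (hs : 0 < s.re) :
    ‖-log (1 - (p : ℂ) ^ (-s))‖ ≤ -Real.log (1 - (p : ℝ) ^ (-s.re)) := by
  rw [← norm_prime_cpow]
  exact norm_neg_log_one_sub_le (by simpa only [norm_prime_cpow] using prime_rpow_neg_lt_one p hs)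

lemma norm_logZeta_le (hs : 1 < s.re) : ‖logZeta s‖ ≤ logZetaReal s.re :=
  tsum_of_norm_bounded (summable_neg_log_prime hs).hasSum fun p =>
    norm_neg_log_one_sub_prime_cpow_le p (zero_lt_one.trans hs)

lemma differentiableAt_neg_log_one_sub_prime_cpow (p : Nat.Primes) (hs : 0 < s.re) :
    DifferentiableAt ℂ (fun s : ℂ => -log (1 - (p : ℂ) ^ (-s))) s := by
  have hp : (p : ℂ) ≠ 0 := Nat.cast_ne_zero.2 p.prop.ne_zero
  have hslit : 1 - (p : ℂ) ^ (-s) ∈ slitPlane := by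
    have hre := re_le_norm ((p : ℂ) ^ (-s))
    rw [norm_prime_cpow] at hre
    exact Or.inl (by rw [sub_re, one_re]; linarith [prime_rpow_neg_lt_one p hs])
  exact (((differentiableAt_id.neg.const_cpow (Or.inl hp)).const_sub 1).clog hslit).neg

lemma differentiableAt_logZeta (hs : 1 < s.re) : DifferentiableAt ℂ logZeta s := by
  obtain ⟨d, hd1, hds⟩ := exists_between hs
  have hd0 : 0 < d := zero_lt_one.trans hd1
  have hU : IsOpen {w : ℂ | d < w.re} := isOpen_lt continuous_const continuous_re
  refine (differentiableOn_tsum_of_summable_norm (summable_neg_log_prime hd1)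
    (fun p w hw => ?_) hU fun p w hw => ?_).differentiableAt (hU.mem_nhds hds)
  · exact (differentiableAt_neg_log_one_sub_prime_cpow p (hd0.trans hw)).differentiableWithinAt
  · exact (norm_neg_log_one_sub_prime_cpow_le p (hd0.trans hw)).trans
      (antitoneOn_neg_log_prime p hd0 (hd0.trans hw) (le_of_lt hw))

lemma convexOn_tsum {ι : Type*} {S : Set ℝ} {f : ι → ℝ → ℝ} (hS : Convex ℝ S)
    (hf : ∀ i, ConvexOn ℝ S (f i)) (hsum : ∀ x ∈ S, Summable fun i => f i x) :
    ConvexOn ℝ S fun x => ∑' i, f i x := by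
  refine ⟨hS, fun x hx y hy a b ha hb hab => ?_⟩
  have hx' := (hsum x hx).const_smul a
  have hy' := (hsum y hy).const_smul b
  rw [← (hsum x hx).tsum_const_smul, ← (hsum y hy).tsum_const_smul, ← hx'.tsum_add hy']
  exact (hsum _ (hS hx hy ha hb hab)).tsum_le_tsum (fun i => (hf i).2 hx hy ha hb hab)
    (hx'.add hy')

lemma convexOn_logZetaReal : ConvexOn ℝ (Ioi 1) logZetaReal :=
  convexOn_tsum (convex_Ioi 1)
    (fun p => (convexOn_neg_log_prime p).subset (Ioi_subset_Ioi zero_le_one) (convex_Ioi 1))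
    fun _ => summable_neg_log_prime

lemma antitoneOn_logZetaReal : AntitoneOn logZetaReal (Ioi 1) := fun _ ha _ hb h =>
  (summable_neg_log_prime hb).tsum_le_tsum
    (fun p => antitoneOn_neg_log_prime p (mem_Ioi.2 (zero_lt_one.trans ha))
      (mem_Ioi.2 (zero_lt_one.trans hb)) h) (summable_neg_log_prime ha)

lemma ofReal_logZetaReal (hσ : 1 < σ) : (logZetaReal σ : ℂ) = logZeta σ := by
  unfold logZeta logZetaReal
  rw [ofReal_tsum]
  refine tsum_congr fun p => ?_
  have := prime_rpow_neg_lt_one p (zero_lt_one.trans hσ)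
  rw [ofReal_neg, ofReal_log (by linarith), ofReal_sub, ofReal_cpow (by positivity), ofReal_neg,
    ofReal_one, ofReal_natCast]

lemma ofReal_exp_logZetaReal (hσ : 1 < σ) : (Real.exp (logZetaReal σ) : ℂ) = riemannZeta σ := by
  rw [ofReal_exp, ofReal_logZetaReal hσ, exp_logZeta (by rwa [ofReal_re])]

lemma exp_logZetaReal (hσ : 1 < σ) :
    Real.exp (logZetaReal σ) = ∑' n : ℕ, 1 / ((n : ℝ) + 1) ^ σ := by
  rw [← ofReal_inj, ofReal_exp_logZetaReal hσ,
    zeta_eq_tsum_one_div_nat_add_one_cpow (by rwa [ofReal_re]), ofReal_tsum]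
  refine tsum_congr fun n => ?_
  rw [ofReal_div, ofReal_cpow (by positivity)]
  push_cast
  rfl

lemma two_mul_rpow_le_add {p x u : ℝ} (hp : p ≤ 0) (h0 : 0 < x - u) (h1 : 0 < x + u) :
    2 * x ^ p ≤ (x - u) ^ p + (x + u) ^ p := by
  have hx : 0 < x := by linarith
  have hsq : ∀ y : ℝ, 0 < y → y ^ p = (y ^ (p / 2)) ^ 2 := fun y hy => by
    rw [← Real.rpow_natCast, ← Real.rpow_mul hy.le, Nat.cast_ofNat, div_mul_cancel₀ p two_ne_zero]
  have hmul : (x * x) ^ (p / 2) ≤ ((x - u) * (x + u)) ^ (p / 2) :=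
    Real.rpow_le_rpow_of_nonpos (mul_pos h0 h1) (by nlinarith [sq_nonneg u]) (by linarith)
  rw [Real.mul_rpow hx.le hx.le, Real.mul_rpow h0.le h1.le] at hmul
  rw [hsq x hx, hsq _ h0, hsq _ h1]
  nlinarith [sq_nonneg ((x - u) ^ (p / 2) - (x + u) ^ (p / 2))]

/-- The midpoint rule underestimates the integral of the convex function `y ^ (-(1 + η))`. -/
lemma rpow_neg_le_sub {η x : ℝ} (hη : 0 < η) (hx : 1 / 2 < x) :
    x ^ (-(1 + η)) ≤ ((x - 1 / 2) ^ (-η) - (x + 1 / 2) ^ (-η)) / η := by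
  have hderiv : ∀ u ∈ Icc (0 : ℝ) (1 / 2), HasDerivAt
      (fun u : ℝ => ((x - u) ^ (-η) - (x + u) ^ (-η)) / η - 2 * u * x ^ (-(1 + η)))
      ((x - u) ^ (-(1 + η)) + (x + u) ^ (-(1 + η)) - 2 * x ^ (-(1 + η))) u := by
    intro u hu
    have hsub := ((hasDerivAt_id u).const_sub x).rpow_const (p := -η)
      (Or.inl (by linarith [hu.2] : 0 < x - u).ne')
    have hadd := ((hasDerivAt_id u).const_add x).rpow_const (p := -η)
      (Or.inl (by linarith [hu.1] : 0 < x + u).ne')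
    convert! ((hsub.sub hadd).div_const η).sub
      (((hasDerivAt_id u).const_mul 2).mul_const (x ^ (-(1 + η)))) using 1
    simp only [id, show -η - 1 = -(1 + η) by ring]
    field_simp
    ring
  have hmono := monotoneOn_of_deriv_nonneg (convex_Icc (0 : ℝ) (1 / 2))
    (fun u hu => (hderiv u hu).continuousAt.continuousWithinAt)
    (fun u hu => (hderiv u (interior_subset hu)).differentiableAt.differentiableWithinAt)
    (fun u hu => by
      have hu' := interior_subset hu
      rw [(hderiv u hu').deriv, sub_nonneg]
      exact two_mul_rpow_le_add (by linarith) (by linarith [hu'.2]) (by linarith [hu'.1]))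
  have := hmono (left_mem_Icc.2 one_half_pos.le) (right_mem_Icc.2 one_half_pos.le)
    one_half_pos.le
  simp only [sub_zero, add_zero, sub_self, zero_div, mul_zero, zero_mul] at this
  linarith

lemma hasSum_rpow_neg_sub_succ {η : ℝ} (hη : 0 < η) :
    HasSum (fun n : ℕ => ((3 / 2 + n : ℝ) ^ (-η) - (3 / 2 + (n + 1 : ℕ) : ℝ) ^ (-η)) / η)
      ((3 / 2) ^ (-η) / η) := by
  have hlim : Tendsto (fun n : ℕ => -((3 / 2 + n : ℝ) ^ (-η) / η)) atTop (𝓝 (-(0 / η))) :=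
    (((tendsto_rpow_neg_atTop hη).comp
      (tendsto_atTop_add_const_left _ _ tendsto_natCast_atTop_atTop)).div_const η).neg
  have hmono : Monotone fun n : ℕ => -((3 / 2 + n : ℝ) ^ (-η) / η) := fun a b hab => by
    have hcast : (a : ℝ) ≤ b := Nat.cast_le.2 hab
    have := Real.rpow_le_rpow_of_nonpos (x := 3 / 2 + (a : ℝ)) (y := 3 / 2 + b) (z := -η)
      (by positivity) (by linarith) (by linarith)
    simp only [neg_le_neg_iff]
    gcongr
  convert! hasSum_sub_succ_of_tendsto hmono hlim using 1
  · ext n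
    ring
  · simp

lemma exp_logZetaReal_one_add_le {η : ℝ} (hη : 0 < η) :
    Real.exp (logZetaReal (1 + η)) ≤ 1 + (3 / 2) ^ (-η) / η := by
  have hsum : Summable fun n : ℕ => 1 / ((n : ℝ) + 1) ^ (1 + η) := by
    simpa using (summable_nat_add_iff 1).2
      (Real.summable_one_div_nat_rpow.2 (by linarith : 1 < 1 + η))
  have hterm (n : ℕ) : 1 / (((n + 1 : ℕ) : ℝ) + 1) ^ (1 + η) ≤
      ((3 / 2 + n : ℝ) ^ (-η) - (3 / 2 + (n + 1 : ℕ) : ℝ) ^ (-η)) / η := by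
    convert! rpow_neg_le_sub hη (x := n + 2) (by linarith [(n.cast_nonneg : (0 : ℝ) ≤ n)]) using 1
    · rw [Real.rpow_neg (by positivity), one_div]
      push_cast
      ring_nf
    · push_cast
      ring_nf
  rw [exp_logZetaReal (by linarith), hsum.tsum_eq_zero_add]
  refine add_le_add (by simp) ?_
  exact hasSum_le hterm ((summable_nat_add_iff 1).2 hsum).hasSum (hasSum_rpow_neg_sub_succ hη)

lemma logZetaReal_le_two : logZetaReal (23 / 20) ≤ 2 := by
  have hzeta := exp_logZetaReal_one_add_le (η := 3 / 20) (by norm_num)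
  have hpow : (3 / 2 : ℝ) ^ (-(3 / 20) : ℝ) ≤ 0.942 := by
    refine le_of_pow_le_pow_left₀ (n := 20) (by norm_num) (by norm_num) ?_
    rw [← Real.rpow_natCast, ← Real.rpow_mul (by norm_num)]
    norm_num
  have hexp : (7.28 : ℝ) ≤ Real.exp 2 := by
    rw [← one_add_one_eq_two, Real.exp_add]
    nlinarith [Real.exp_one_gt_d9]
  rw [show (1 + 3 / 20 : ℝ) = 23 / 20 by norm_num] at hzeta
  rw [← Real.exp_le_exp]
  linarith

lemma logZetaReal_two_le : logZetaReal 2 ≤ 1 / 2 := by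
  have hzeta : Real.exp (logZetaReal 2) = π ^ 2 / 6 := by
    have := ofReal_exp_logZetaReal one_lt_two
    rw [ofReal_ofNat, riemannZeta_two] at this
    exact_mod_cast this
  rw [← Real.exp_le_exp, hzeta]
  refine le_of_pow_le_pow_left₀ two_ne_zero (Real.exp_pos _).le ?_
  rw [← Real.exp_nat_mul, Nat.cast_ofNat, mul_one_div_cancel two_ne_zero]
  have hpi : π ^ 2 / 6 ≤ 1.645 := by nlinarith [Real.pi_lt_d4, Real.pi_pos]
  calc (π ^ 2 / 6) ^ 2 ≤ 1.645 ^ 2 := by gcongr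
    _ ≤ Real.exp 1 := by linarith [Real.exp_one_gt_d9]

lemma logZetaReal_add_mul_le {x : ℝ} (h0 : 0 ≤ x) (h1 : x ≤ 1) :
    logZetaReal (23 / 20 + 13 / 10 * x) ≤ 2 - 3 / 2 * x := by
  have hconvex := convexOn_logZetaReal.2 (x := 23 / 20) (y := 49 / 20) (mem_Ioi.2 (by norm_num))
    (mem_Ioi.2 (by norm_num)) (sub_nonneg.2 h1) h0 (sub_add_cancel 1 x)
  have hanti := antitoneOn_logZetaReal (a := 2) (b := 49 / 20) (mem_Ioi.2 one_lt_two)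
    (mem_Ioi.2 (by norm_num)) (by norm_num)
  simp only [smul_eq_mul] at hconvex
  rw [show (1 - x) * (23 / 20) + x * (49 / 20) = 23 / 20 + 13 / 10 * x by ring] at hconvex
  nlinarith [logZetaReal_le_two, logZetaReal_two_le]

end LogZeta

/-! ### The Riemann xi function -/

section Xi

open ComplexConjugate

variable {s : ℂ}

/-- The entire function `s (s - 1) Λ(s)`, where `Λ` is the completed zeta function. -/
noncomputable def xi (s : ℂ) : ℂ := 1 + s * (s - 1) * completedRiemannZeta₀ s

lemma differentiable_xi : Differentiable ℂ xi := by
  have := differentiable_completedZeta₀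
  unfold xi
  fun_prop

lemma xi_one : xi 1 = 1 := by rw [xi, sub_self, mul_zero, zero_mul, add_zero]

lemma xi_one_sub (s : ℂ) : xi (1 - s) = xi s := by
  unfold xi
  rw [completedRiemannZeta₀_one_sub]
  ring

lemma xi_eq_mul_completedRiemannZeta (h0 : s ≠ 0) (h1 : s ≠ 1) :
    xi s = s * (s - 1) * completedRiemannZeta s := by
  have h2 : 1 - s ≠ 0 := sub_ne_zero.2 h1.symm
  rw [xi, completedRiemannZeta_eq]
  field_simp
  ring

lemma xi_eq_mul_riemannZeta (h0 : 0 < s.re) (h1 : s ≠ 1) :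
    xi s = s * (s - 1) * Gammaℝ s * riemannZeta s := by
  have hs := ne_zero_of_re_pos h0
  rw [xi_eq_mul_completedRiemannZeta hs h1, riemannZeta_def_of_ne_zero hs]
  have := Gammaℝ_ne_zero_of_re_pos h0
  field_simp

lemma xi_eq_zero_iff_of_re_pos (h0 : 0 < s.re) (h1 : s ≠ 1) : xi s = 0 ↔ riemannZeta s = 0 := by
  rw [xi_eq_mul_riemannZeta h0 h1, mul_eq_zero_iff_left]
  exact mul_ne_zero (mul_ne_zero (ne_zero_of_re_pos h0) (sub_ne_zero.2 h1))
    (Gammaℝ_ne_zero_of_re_pos h0)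

lemma xi_ne_zero_of_one_le_re (hs : 1 ≤ s.re) : xi s ≠ 0 := by
  rcases eq_or_ne s 1 with rfl | h1
  · exact xi_one.trans_ne one_ne_zero
  · exact (xi_eq_zero_iff_of_re_pos (zero_lt_one.trans_le hs) h1).not.2
      (riemannZeta_ne_zero_of_one_le_re hs)

lemma re_mem_Ioo_of_xi_eq_zero (hs : xi s = 0) : s.re ∈ Ioo 0 1 := by
  refine ⟨not_le.1 fun h => ?_, not_le.1 fun h => xi_ne_zero_of_one_le_re h hs⟩
  rw [← xi_one_sub] at hs
  exact xi_ne_zero_of_one_le_re (by rw [sub_re, one_re]; linarith) hs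

lemma ne_one_of_re_lt_one (hs : s.re < 1) : s ≠ 1 := fun h => hs.ne (by rw [h, one_re])

lemma xi_eq_zero_iff : xi s = 0 ↔ riemannZeta s = 0 ∧ 0 < s.re ∧ s.re < 1 := by
  refine ⟨fun h => ?_, fun ⟨h, h0, h1⟩ => ?_⟩
  · have hs := re_mem_Ioo_of_xi_eq_zero h
    exact ⟨(xi_eq_zero_iff_of_re_pos hs.1 (ne_one_of_re_lt_one hs.2)).1 h, hs⟩
  · exact (xi_eq_zero_iff_of_re_pos h0 (ne_one_of_re_lt_one h1)).2 h

lemma Gammaℝ_conj (s : ℂ) : Gammaℝ (conj s) = conj (Gammaℝ s) := by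
  have hpi : (π : ℂ) ^ (-conj s / 2) = conj ((π : ℂ) ^ (-s / 2)) := by
    have harg : arg (π : ℂ) ≠ π := by
      rw [arg_ofReal_of_nonneg Real.pi_pos.le]
      exact Real.pi_pos.ne
    have h := cpow_conj (π : ℂ) (-s / 2) harg
    rw [conj_ofReal] at h
    rw [← h, map_div₀, map_neg, map_ofNat]
  rw [Gammaℝ_def, Gammaℝ_def, hpi, map_mul, ← Gamma_conj, map_div₀, map_ofNat]

lemma xi_conj (s : ℂ) : xi (conj s) = conj (xi s) := by
  have of_re_pos : ∀ s : ℂ, 0 < s.re → xi (conj s) = conj (xi s) := by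
    intro s hs
    rcases eq_or_ne s 1 with rfl | h1
    · rw [map_one, xi_one, map_one]
    have h1' : conj s ≠ 1 := fun h => h1 (by simpa using congrArg conj h)
    rw [xi_eq_mul_riemannZeta hs h1, xi_eq_mul_riemannZeta (by rwa [conj_re]) h1',
      riemannZeta_conj, Gammaℝ_conj]
    simp only [map_mul, map_sub, map_one]
  rcases lt_or_ge 0 s.re with h | h
  · exact of_re_pos s h
  · have hre : 0 < (1 - s).re := by
      rw [sub_re, one_re]
      linarith
    rw [← xi_one_sub, ← xi_one_sub s, ← of_re_pos _ hre, map_sub, map_one]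

end Xi

/-! ### The sign of xi on the real axis -/

section CompletedZetaDensity

/-- The function on `(0, ∞)` whose Mellin transform at `s / 2` is `2 Λ₀(s)`: the theta kernel with
its leading terms at `0` and `∞` removed. -/
noncomputable def completedZetaDensity (x : ℝ) : ℝ :=
  (Ioi 1).indicator (fun x => HurwitzZeta.evenKernel 0 x - 1) x +
    (Ioo 0 1).indicator (fun x => HurwitzZeta.evenKernel 0 x - x ^ (-(1 / 2) : ℝ)) x

lemma one_le_evenKernel_zero {x : ℝ} (hx : 0 < x) : 1 ≤ HurwitzZeta.evenKernel 0 x := by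
  simpa using le_hasSum (HurwitzZeta.hasSum_int_evenKernel 0 hx) 0
    fun n _ => (Real.exp_pos _).le

lemma rpow_le_evenKernel_zero {x : ℝ} (hx : 0 < x) :
    x ^ (-(1 / 2) : ℝ) ≤ HurwitzZeta.evenKernel 0 x := by
  rw [HurwitzZeta.evenKernel_functional_equation, ← HurwitzZeta.evenKernel_eq_cosKernel_of_zero,
    Real.rpow_neg hx.le, ← one_div]
  exact le_mul_of_one_le_right (by positivity) (one_le_evenKernel_zero (by positivity))

lemma completedZetaDensity_nonneg (x : ℝ) : 0 ≤ completedZetaDensity x :=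
  add_nonneg
    (indicator_nonneg (fun _ hx =>
      sub_nonneg.2 (one_le_evenKernel_zero (zero_lt_one.trans (mem_Ioi.1 hx)))) x)
    (indicator_nonneg (fun _ hx => sub_nonneg.2 (rpow_le_evenKernel_zero hx.1)) x)

lemma hurwitzEvenFEPair_zero_f_modif (x : ℝ) :
    (HurwitzZeta.hurwitzEvenFEPair 0).f_modif x = completedZetaDensity x := by
  have hf₀ : (HurwitzZeta.hurwitzEvenFEPair 0).f₀ = 1 := if_pos rfl
  rw [WeakFEPair.f_modif, Pi.add_apply, completedZetaDensity, hf₀]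
  simp only [indicator_apply]
  split_ifs <;> simp [HurwitzZeta.hurwitzEvenFEPair]

lemma hasMellin_completedZetaDensity (s : ℂ) :
    HasMellin (fun x => (completedZetaDensity x : ℂ)) (s / 2) (2 * completedRiemannZeta₀ s) := by
  have h := (HurwitzZeta.hurwitzEvenFEPair 0).isStrongFEPair_toStrongFEPair.hasMellin (s / 2)
  have hf : (HurwitzZeta.hurwitzEvenFEPair 0).f_modif = fun x => (completedZetaDensity x : ℂ) :=
    funext hurwitzEvenFEPair_zero_f_modif
  have hΛ : completedRiemannZeta₀ s =
      mellin (HurwitzZeta.hurwitzEvenFEPair 0).f_modif (s / 2) / 2 := rfl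
  rw [hΛ, mul_div_cancel₀ _ (two_ne_zero' ℂ), ← hf]
  exact ⟨h.1, rfl⟩

variable {a b : ℝ} {s : ℂ}

lemma norm_cpow_mul_completedZetaDensity (s : ℂ) {x : ℝ} (hx : x ∈ Ioi (0 : ℝ)) :
    ‖(x : ℂ) ^ (s / 2 - 1) • (completedZetaDensity x : ℂ)‖ =
      x ^ (s.re / 2 - 1) * completedZetaDensity x := by
  rw [norm_smul, norm_cpow_eq_rpow_re_of_pos hx, norm_real,
    Real.norm_of_nonneg (completedZetaDensity_nonneg x), sub_re, one_re, div_ofNat_re]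

lemma integrableOn_rpow_mul_completedZetaDensity (σ : ℝ) :
    IntegrableOn (fun x : ℝ => x ^ (σ / 2 - 1) * completedZetaDensity x) (Ioi 0) :=
  IntegrableOn.congr_fun (hasMellin_completedZetaDensity σ).1.norm
    (fun _ hx => norm_cpow_mul_completedZetaDensity σ hx) measurableSet_Ioi

lemma two_mul_norm_completedRiemannZeta₀_le (s : ℂ) :
    2 * ‖completedRiemannZeta₀ s‖ ≤
      ∫ x in Ioi (0 : ℝ), x ^ (s.re / 2 - 1) * completedZetaDensity x := by
  have h := congrArg norm (hasMellin_completedZetaDensity s).2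
  rw [norm_mul, Complex.norm_two] at h
  rw [← h, ← setIntegral_congr_fun measurableSet_Ioi
    fun _ hx => norm_cpow_mul_completedZetaDensity s hx]
  exact norm_integral_le_integral_norm _

lemma two_mul_norm_completedRiemannZeta₀_ofReal (σ : ℝ) :
    2 * ‖completedRiemannZeta₀ σ‖ =
      ∫ x in Ioi (0 : ℝ), x ^ (σ / 2 - 1) * completedZetaDensity x := by
  have h : 2 * completedRiemannZeta₀ σ =
      ((∫ x in Ioi (0 : ℝ), x ^ (σ / 2 - 1) * completedZetaDensity x : ℝ) : ℂ) := by
    rw [← (hasMellin_completedZetaDensity σ).2, mellin, ← integral_complex_ofReal]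
    refine setIntegral_congr_fun measurableSet_Ioi fun x hx => ?_
    rw [smul_eq_mul, ofReal_mul, ofReal_cpow (mem_Ioi.1 hx).le, ofReal_sub, ofReal_div,
      ofReal_ofNat, ofReal_one]
  have hnonneg : 0 ≤ ∫ x in Ioi (0 : ℝ), x ^ (σ / 2 - 1) * completedZetaDensity x :=
    setIntegral_nonneg measurableSet_Ioi fun x hx =>
      mul_nonneg (Real.rpow_nonneg (mem_Ioi.1 hx).le _) (completedZetaDensity_nonneg x)
  simpa only [norm_mul, Complex.norm_two, norm_real, Real.norm_of_nonneg hnonneg]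
    using congrArg norm h

lemma rpow_le_rpow_add_rpow {x a b c : ℝ} (hx : 0 < x) (ha : a ≤ c) (hb : c ≤ b) :
    x ^ c ≤ x ^ a + x ^ b := by
  have := Real.rpow_pos_of_pos hx a
  have := Real.rpow_pos_of_pos hx b
  rcases le_total 1 x with h1 | h1
  · linarith [Real.rpow_le_rpow_of_exponent_le h1 hb]
  · linarith [Real.rpow_le_rpow_of_exponent_ge hx h1 ha]

lemma norm_completedRiemannZeta₀_le (ha : a ≤ s.re) (hb : s.re ≤ b) :
    ‖completedRiemannZeta₀ s‖ ≤ ‖completedRiemannZeta₀ a‖ + ‖completedRiemannZeta₀ b‖ := by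
  have hInt := integrableOn_rpow_mul_completedZetaDensity
  have hmono : ∫ x in Ioi (0 : ℝ), x ^ (s.re / 2 - 1) * completedZetaDensity x ≤
      ∫ x in Ioi (0 : ℝ), (x ^ (a / 2 - 1) * completedZetaDensity x +
        x ^ (b / 2 - 1) * completedZetaDensity x) :=
    setIntegral_mono_on (hInt _) ((hInt a).add (hInt b)) measurableSet_Ioi fun x hx => by
      rw [← add_mul]
      exact mul_le_mul_of_nonneg_right
        (rpow_le_rpow_add_rpow hx (by linarith) (by linarith)) (completedZetaDensity_nonneg x)
  rw [integral_add (hInt a) (hInt b), ← two_mul_norm_completedRiemannZeta₀_ofReal a,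
    ← two_mul_norm_completedRiemannZeta₀_ofReal b] at hmono
  linarith [two_mul_norm_completedRiemannZeta₀_le s]

lemma norm_completedRiemannZeta₀_one_le : ‖completedRiemannZeta₀ 1‖ ≤ 4 / 3 := by
  have h : completedRiemannZeta₀ 1 =
      (((Real.eulerMascheroniConstant - Real.log (4 * π)) / 2 + 1 : ℝ) : ℂ) := by
    rw [completedRiemannZeta₀_one]
    push_cast [ofReal_log (show 0 ≤ 4 * π by positivity)]
    rfl
  have hlog : 0 ≤ Real.log (4 * π) := Real.log_nonneg (by linarith [Real.pi_gt_three])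
  have hlog' : Real.log (4 * π) ≤ Real.log (2 ^ 4) :=
    Real.log_le_log (by positivity) (by linarith [Real.pi_lt_four])
  rw [Real.log_pow, Nat.cast_ofNat] at hlog'
  rw [h, norm_real, Real.norm_eq_abs, abs_le]
  constructor <;> linarith [Real.log_two_lt_d9, Real.eulerMascheroniConstant_lt_two_thirds,
    Real.one_half_lt_eulerMascheroniConstant]

/-- On `(0, 1)`, `|x (x - 1)| ≤ 1 / 4` while `|Λ₀(x)| ≤ Λ₀(0) + Λ₀(1) < 4`. -/
lemma xi_ofReal_ne_zero (x : ℝ) : xi x ≠ 0 := by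
  intro hx
  obtain ⟨h0, h1⟩ := re_mem_Ioo_of_xi_eq_zero hx
  rw [ofReal_re] at h0 h1
  have hΛ : ‖completedRiemannZeta₀ x‖ ≤ 8 / 3 := by
    have h := norm_completedRiemannZeta₀_le (a := 0) (b := 1) (s := x) h0.le h1.le
    rw [ofReal_zero, ofReal_one, ← completedRiemannZeta₀_one_sub 0, sub_zero] at h
    linarith [norm_completedRiemannZeta₀_one_le]
  have hquad : ‖(x : ℂ) * (x - 1)‖ ≤ 1 / 4 := by
    rw [← ofReal_one, ← ofReal_sub, ← ofReal_mul, norm_real, Real.norm_eq_abs, abs_le]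
    constructor <;> nlinarith [sq_nonneg (x - 1 / 2)]
  have hprod : ‖(x : ℂ) * (x - 1)‖ * ‖completedRiemannZeta₀ x‖ = 1 := by
    rw [← norm_mul, eq_neg_of_add_eq_zero_right hx, norm_neg, norm_one]
  nlinarith [norm_nonneg ((x : ℂ) * (x - 1))]

end CompletedZetaDensity

/-! ### The rotated completed zeta function -/

section ArctanBounds

variable {σ t : ℝ}

lemma pi_div_two_sub_arctan_div (hσ : 0 < σ) (ht : 0 < t) :
    π / 2 - Real.arctan (t / σ) = Real.arctan (σ / t) := by
  rw [← Real.arctan_inv_of_pos (div_pos ht hσ), inv_div]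

lemma arctan_le_self {y : ℝ} (hy : 0 ≤ y) : Real.arctan y ≤ y := by
  simpa only [Real.tan_arctan] using
    Real.le_tan (Real.arctan_nonneg.2 hy) (Real.arctan_lt_pi_div_two y)

lemma div_one_add_sq_le_arctan {y : ℝ} (hy : 0 ≤ y) : y / (1 + y ^ 2) ≤ Real.arctan y := by
  have h := Real.sin_le (x := 2 * Real.arctan y)
    (mul_nonneg zero_le_two (Real.arctan_nonneg.2 hy))
  have hsqrt : √(1 + y ^ 2) * √(1 + y ^ 2) = 1 + y ^ 2 := Real.mul_self_sqrt (by positivity)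
  rw [Real.sin_two_mul, Real.sin_arctan, Real.cos_arctan, mul_assoc, div_mul_div_comm, hsqrt,
    mul_one] at h
  linarith

lemma mul_arctan_complement_le (hσ : 0 < σ) (ht : 0 ≤ t) :
    t * (π / 2 - Real.arctan (t / σ)) ≤ σ := by
  rcases ht.eq_or_lt with rfl | ht
  · simpa using hσ.le
  calc t * (π / 2 - Real.arctan (t / σ)) = t * Real.arctan (σ / t) := by
        rw [pi_div_two_sub_arctan_div hσ ht]
    _ ≤ t * (σ / t) := by
        gcongr
        exact arctan_le_self (div_pos hσ ht).le
    _ = σ := mul_div_cancel₀ _ ht.ne'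

lemma le_mul_arctan_complement (hσ : 0 < σ) (ht : 0 < t) :
    σ - σ ^ 3 / t ^ 2 ≤ t * (π / 2 - Real.arctan (t / σ)) := by
  have hdiff : t * (σ / t / (1 + (σ / t) ^ 2)) - (σ - σ ^ 3 / t ^ 2) =
      σ ^ 5 / (t ^ 2 * (t ^ 2 + σ ^ 2)) := by
    field_simp
    ring
  have hpos : 0 ≤ σ ^ 5 / (t ^ 2 * (t ^ 2 + σ ^ 2)) := by positivity
  calc σ - σ ^ 3 / t ^ 2 ≤ t * (σ / t / (1 + (σ / t) ^ 2)) := by linarith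
    _ ≤ t * Real.arctan (σ / t) := by
        gcongr
        exact div_one_add_sq_le_arctan (div_pos hσ ht).le
    _ = t * (π / 2 - Real.arctan (t / σ)) := by rw [pi_div_two_sub_arctan_div hσ ht]

end ArctanBounds

section RotatedZeta

variable {s : ℂ}

/-- The completed zeta function multiplied by `exp (-π i (s - 1/2) / 4)`, which removes its
exponential decay in the upper half plane. -/
noncomputable def rotatedZeta (s : ℂ) : ℂ :=
  xi s / (s * (s - 1)) * exp (-(π / 4 * (s - 1 / 2) * I))

/-- The branch of the logarithm of `rotatedZeta` on the half plane `1 < re s`. -/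
noncomputable def logRotatedZeta (s : ℂ) : ℂ :=
  -(s / 2 * (Real.log π : ℝ)) + logGamma (s / 2) + logZeta s - π / 4 * (s - 1 / 2) * I

lemma re_half_pos (hs : 1 < s.re) : 0 < (s / 2).re := by
  rw [div_ofNat_re]
  linarith

lemma exp_logRotatedZeta (hs : 1 < s.re) : exp (logRotatedZeta s) = rotatedZeta s := by
  have h0 : 0 < s.re := zero_lt_one.trans hs
  have hs0 := ne_zero_of_re_pos h0
  have hs1 : s ≠ 1 := fun h => hs.ne' (by rw [h, one_re])
  have hs2 : s - 1 ≠ 0 := sub_ne_zero.2 hs1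
  have hpi : exp (-(s / 2 * (Real.log π : ℝ))) = (π : ℂ) ^ (-s / 2) := by
    rw [cpow_def_of_ne_zero (ofReal_ne_zero.2 Real.pi_ne_zero), ofReal_log Real.pi_pos.le]
    ring_nf
  rw [logRotatedZeta, rotatedZeta, xi_eq_mul_riemannZeta h0 hs1, sub_eq_add_neg, Complex.exp_add,
    Complex.exp_add, Complex.exp_add, hpi, exp_logGamma (re_half_pos hs), exp_logZeta hs,
    Gammaℝ_def]
  field_simp

lemma differentiableAt_logRotatedZeta (hs : 1 < s.re) : DifferentiableAt ℂ logRotatedZeta s := by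
  have hΓ : DifferentiableAt ℂ (fun s : ℂ => logGamma (s / 2)) s :=
    DifferentiableAt.comp (g := logGamma) (f := fun s : ℂ => s / 2) s
      (differentiableAt_logGamma (re_half_pos hs)) (by fun_prop)
  have hζ := differentiableAt_logZeta hs
  unfold logRotatedZeta
  fun_prop

lemma re_log_half (s : ℂ) : (log (s / 2)).re = Real.log (‖s‖ / 2) := by
  rw [log_re, norm_div, Complex.norm_two]

lemma arg_eq_arctan (hs : 0 < s.re) : arg s = Real.arctan (s.im / s.re) := by
  have h := abs_lt.1 (abs_arg_lt_pi_div_two_iff.2 (Or.inl hs))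
  rw [← tan_arg, Real.arctan_tan h.1 h.2]

lemma im_log_half (hs : 0 < s.re) : (log (s / 2)).im = Real.arctan (s.im / s.re) := by
  have h : s / 2 = ((2⁻¹ : ℝ) : ℂ) * s := by
    push_cast
    ring
  rw [log_im, h, arg_real_mul _ (by norm_num), arg_eq_arctan hs]

lemma log_div_two_mul_pi {x : ℝ} (hx : 0 < x) :
    Real.log (x / (2 * π)) = Real.log (x / 2) - Real.log π := by
  rw [← div_div, Real.log_div (by positivity) Real.pi_ne_zero]

lemma re_logRotatedZeta (hs : 1 < s.re) :
    (logRotatedZeta s).re = (s.re - 1) / 2 * Real.log (‖s‖ / (2 * π)) + Real.log 2 / 2 +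
      (s.im / 2 * (π / 2 - Real.arctan (s.im / s.re)) - s.re / 2) +
      (stirlingRemainder (s / 2)).re + (logZeta s).re := by
  have h0 : 0 < s.re := zero_lt_one.trans hs
  unfold logRotatedZeta logGamma
  simp only [add_re, sub_re, neg_re, mul_re, ofReal_re, ofReal_im, I_re, I_im, sub_im, mul_im,
    div_ofNat_re, div_ofNat_im, one_re, one_im, re_log_half s, im_log_half h0,
    log_div_two_mul_pi (norm_pos_iff.2 (ne_zero_of_re_pos h0)),
    Real.log_mul two_ne_zero Real.pi_ne_zero]
  ring

lemma im_logRotatedZeta (hs : 1 < s.re) :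
    (logRotatedZeta s).im = s.im / 2 * (Real.log (‖s‖ / (2 * π)) - 1) +
      (s.re - 1) / 2 * Real.arctan (s.im / s.re) - π / 4 * (s.re - 1 / 2) +
      (stirlingRemainder (s / 2)).im + (logZeta s).im := by
  have h0 : 0 < s.re := zero_lt_one.trans hs
  unfold logRotatedZeta logGamma
  simp only [add_im, sub_re, neg_im, mul_re, ofReal_re, ofReal_im, I_re, I_im, sub_im, mul_im,
    div_ofNat_re, div_ofNat_im, one_re, one_im, re_log_half s, im_log_half h0,
    log_div_two_mul_pi (norm_pos_iff.2 (ne_zero_of_re_pos h0))]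
  ring

lemma norm_stirlingRemainder_half_le (hs : 1 < s.re) :
    ‖stirlingRemainder (s / 2)‖ ≤ 1 / (4 * s.re) := by
  have h := norm_stirlingRemainder_le (re_half_pos hs)
  rwa [div_ofNat_re, show 8 * (s.re / 2) = 4 * s.re by ring] at h

lemma norm_stirlingRemainder_half_le_of_im_pos (hs : 1 < s.re) (ht : 0 < s.im) :
    ‖stirlingRemainder (s / 2)‖ ≤ π / (8 * s.im) := by
  have h := norm_stirlingRemainder_le_of_im_pos (re_half_pos hs)
    (by rwa [div_ofNat_im, div_pos_iff_of_pos_right two_pos])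
  rwa [div_ofNat_im, show 16 * (s.im / 2) = 8 * s.im by ring] at h

lemma norm_rotatedZeta_le (hs : 1 < s.re) (ht : 0 ≤ s.im) :
    ‖rotatedZeta s‖ ≤ Real.exp ((s.re - 1) / 2 * Real.log (‖s‖ / (2 * π)) + Real.log 2 / 2 +
      1 / (4 * s.re) + logZetaReal s.re) := by
  rw [← exp_logRotatedZeta hs, norm_exp, Real.exp_le_exp, re_logRotatedZeta hs]
  linarith [mul_arctan_complement_le (zero_lt_one.trans hs) ht,
    (re_le_norm _).trans (norm_logZeta_le hs),
    (re_le_norm _).trans (norm_stirlingRemainder_half_le hs)]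

lemma neg_re_logRotatedZeta_le (hs : 1 < s.re) (ht : 0 < s.im) :
    -(logRotatedZeta s).re ≤ -((s.re - 1) / 2 * Real.log (s.im / (2 * π))) - Real.log 2 / 2 +
      s.re ^ 3 / (2 * s.im ^ 2) + π / (8 * s.im) - (logZeta s).re := by
  have harctan := le_mul_arctan_complement (zero_lt_one.trans hs) ht
  have hrem := (neg_le_abs _).trans
    ((abs_re_le_norm _).trans (norm_stirlingRemainder_half_le_of_im_pos hs ht))
  have hlog : (s.re - 1) / 2 * Real.log (s.im / (2 * π)) ≤
      (s.re - 1) / 2 * Real.log (‖s‖ / (2 * π)) := by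
    have : 0 ≤ s.re - 1 := by linarith
    gcongr
    exact im_le_norm s
  have hcube : s.re ^ 3 / (2 * s.im ^ 2) = s.re ^ 3 / s.im ^ 2 / 2 := by ring
  rw [re_logRotatedZeta hs, hcube]
  linarith

lemma log_norm_div_im (ht : 0 < s.im) :
    Real.log (‖s‖ / s.im) = Real.log (1 + s.re ^ 2 / s.im ^ 2) / 2 := by
  have h : 1 + s.re ^ 2 / s.im ^ 2 = (‖s‖ / s.im) ^ 2 := by
    rw [div_pow, ← normSq_eq_norm_sq, normSq_apply]
    field_simp
    ring
  rw [h, Real.log_pow, Nat.cast_ofNat, mul_div_cancel_left₀ _ two_ne_zero]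

lemma abs_im_mul_log_norm_div_im_le (ht : 0 < s.im) :
    |s.im / 2 * Real.log (‖s‖ / s.im)| ≤ s.re ^ 2 / 4 / s.im := by
  have hsq : 0 ≤ s.re ^ 2 / s.im ^ 2 := by positivity
  have hnonneg : 0 ≤ Real.log (1 + s.re ^ 2 / s.im ^ 2) := Real.log_nonneg (by linarith)
  have hle := Real.log_le_sub_one_of_pos (x := 1 + s.re ^ 2 / s.im ^ 2) (by linarith)
  rw [add_sub_cancel_left] at hle
  rw [log_norm_div_im ht, abs_of_nonneg (by positivity)]
  calc s.im / 2 * (Real.log (1 + s.re ^ 2 / s.im ^ 2) / 2)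
      ≤ s.im / 2 * (s.re ^ 2 / s.im ^ 2 / 2) := by gcongr
    _ = s.re ^ 2 / 4 / s.im := by
        field_simp
        ring

lemma abs_arctan_complement_mul_le (hs : 1 < s.re) (ht : 0 < s.im) :
    |(s.re - 1) / 2 * (π / 2 - Real.arctan (s.im / s.re))| ≤ s.re * (s.re - 1) / 2 / s.im := by
  have : 0 ≤ s.re - 1 := by linarith
  have hpos : 0 ≤ π / 2 - Real.arctan (s.im / s.re) := by
    linarith [Real.arctan_lt_pi_div_two (s.im / s.re)]
  rw [abs_of_nonneg (by positivity), le_div_iff₀ ht]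
  nlinarith [mul_arctan_complement_le (zero_lt_one.trans hs) ht.le]

lemma abs_im_logRotatedZeta_sub_le (hs : 1 < s.re) (ht : 0 < s.im) :
    |(logRotatedZeta s).im - s.im / 2 * (Real.log (s.im / (2 * π)) - 1) + π / 8 -
      (logZeta s).im| ≤ (s.re ^ 2 / 4 + s.re * (s.re - 1) / 2 + π / 8) / s.im := by
  have hnorm : 0 < ‖s‖ := norm_pos_iff.2 (ne_zero_of_re_pos (zero_lt_one.trans hs))
  have hlog : Real.log (‖s‖ / (2 * π)) = Real.log (s.im / (2 * π)) + Real.log (‖s‖ / s.im) := by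
    rw [← Real.log_mul (by positivity) (by positivity)]
    congr 1
    field_simp
  have hrem := (abs_im_le_norm _).trans (norm_stirlingRemainder_half_le_of_im_pos hs ht)
  have hnum := abs_im_mul_log_norm_div_im_le ht
  have harctan := abs_arctan_complement_mul_le hs ht
  rw [← div_div] at hrem
  rw [im_logRotatedZeta hs, hlog, add_div, add_div]
  rw [abs_le] at hrem hnum harctan ⊢
  constructor <;> linarith

end RotatedZeta

/-! ### Growth of the rotated zeta function in the critical strip -/

section Growth

open ComplexConjugate

variable {s : ℂ}

lemma rotatedZeta_one_sub_conj (s : ℂ) : rotatedZeta (1 - conj s) = conj (rotatedZeta s) := by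
  unfold rotatedZeta
  rw [xi_one_sub, xi_conj, map_mul, map_div₀, ← exp_conj]
  simp only [map_neg, map_mul, map_div₀, map_sub, map_one, conj_ofReal, conj_I, map_ofNat]
  ring_nf

lemma differentiableAt_rotatedZeta (h0 : s ≠ 0) (h1 : s ≠ 1) :
    DifferentiableAt ℂ rotatedZeta s := by
  have hx := differentiable_xi s
  have h2 : s * (s - 1) ≠ 0 := mul_ne_zero h0 (sub_ne_zero.2 h1)
  unfold rotatedZeta
  fun_prop (disch := assumption)

/-- The function to which the Phragmén–Lindelöf principle is applied. The exponent `83 / 80` is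
`1 + (c - 1) / 4` for `c = 23 / 20`, so that `boundedXi` is bounded on the line `re s = c`. -/
noncomputable def boundedXi (s : ℂ) : ℂ :=
  xi s * exp (-(π / 4 * (s - 1 / 2) * I)) * exp (-((83 / 80 : ℝ) * log ((s + 1) * (2 - s))))

/-- The logarithm of the bound for `boundedXi` in the strip `-3 / 20 ≤ re s ≤ 23 / 20`. -/
noncomputable def logBoundedXiBound : ℝ :=
  2 + Real.log 2 / 2 + 5 / 23 - 3 / 40 * Real.log (2 * π)

lemma norm_exp_rotation (s : ℂ) :
    ‖exp (-(π / 4 * (s - 1 / 2) * I))‖ = Real.exp (π / 4 * s.im) := by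
  rw [norm_exp]
  simp [div_ofNat_re, div_ofNat_im]

lemma norm_xi_mul_exp (h0 : s ≠ 0) (h1 : s ≠ 1) :
    ‖xi s‖ * Real.exp (π / 4 * s.im) = ‖s * (s - 1)‖ * ‖rotatedZeta s‖ := by
  rw [rotatedZeta, norm_mul (xi s / _), norm_div, norm_exp_rotation]
  have : ‖s * (s - 1)‖ ≠ 0 := norm_ne_zero_iff.2 (mul_ne_zero h0 (sub_ne_zero.2 h1))
  field_simp

lemma norm_boundedXi (s : ℂ) : ‖boundedXi s‖ = ‖xi s‖ * Real.exp (π / 4 * s.im) *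
    Real.exp (-(83 / 80 * Real.log ‖(s + 1) * (2 - s)‖)) := by
  rw [boundedXi, norm_mul, norm_mul, norm_exp_rotation, norm_exp, neg_re, re_ofReal_mul, log_re]

lemma norm_boundedXi_eq_mul_norm_rotatedZeta (h0 : s ≠ 0) (h1 : s ≠ 1) :
    ‖boundedXi s‖ = ‖s * (s - 1)‖ * ‖rotatedZeta s‖ *
      Real.exp (-(83 / 80 * Real.log ‖(s + 1) * (2 - s)‖)) := by
  rw [norm_boundedXi, norm_xi_mul_exp h0 h1]

lemma re_quadratic (s : ℂ) :
    ((s + 1) * (2 - s)).re = (s.re + 1) * (2 - s.re) + s.im ^ 2 := by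
  simp only [mul_re, add_re, sub_re, add_im, sub_im, one_re, one_im, re_ofNat, im_ofNat]
  ring

lemma re_quadratic_pos (h0 : -1 < s.re) (h1 : s.re < 2) : 0 < ((s + 1) * (2 - s)).re := by
  have := mul_pos (neg_lt_iff_pos_add.1 h0) (sub_pos.2 h1)
  rw [re_quadratic]
  positivity

lemma norm_quadratic_pos (h0 : -1 < s.re) (h1 : s.re < 2) : 0 < ‖(s + 1) * (2 - s)‖ :=
  (re_quadratic_pos h0 h1).trans_le (re_le_norm _)

lemma one_le_norm_quadratic (h0 : -1 < s.re) (h1 : s.re < 2) (ht : 1 ≤ |s.im|) :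
    1 ≤ ‖(s + 1) * (2 - s)‖ := by
  have := mul_pos (neg_lt_iff_pos_add.1 h0) (sub_pos.2 h1)
  have : 1 ≤ s.im ^ 2 := (one_le_sq_iff_one_le_abs _).2 ht
  refine le_trans ?_ (re_le_norm _)
  rw [re_quadratic]
  linarith

lemma norm_sq_le_norm_quadratic (h0 : 0 ≤ s.re) (h1 : s.re ≤ 5 / 4) :
    ‖s‖ ^ 2 ≤ ‖(s + 1) * (2 - s)‖ := by
  refine le_trans ?_ (re_le_norm _)
  rw [re_quadratic, ← normSq_eq_norm_sq, normSq_apply]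
  nlinarith

lemma norm_sub_one_le_norm (hs : 1 / 2 ≤ s.re) : ‖s - 1‖ ≤ ‖s‖ := by
  refine le_of_sq_le_sq ?_ (norm_nonneg s)
  rw [← normSq_eq_norm_sq, ← normSq_eq_norm_sq, normSq_apply, normSq_apply, sub_re, sub_im, one_re,
    one_im]
  linarith

lemma differentiableAt_boundedXi (h0 : -1 < s.re) (h1 : s.re < 2) :
    DifferentiableAt ℂ boundedXi s := by
  have hx := differentiable_xi s
  have hq : (s + 1) * (2 - s) ∈ slitPlane := Or.inl (re_quadratic_pos h0 h1)
  unfold boundedXi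
  fun_prop (disch := assumption)

lemma norm_boundedXi_le_of_re_eq_of_im_nonneg (hs : s.re = 23 / 20) (ht : 0 ≤ s.im) :
    ‖boundedXi s‖ ≤ Real.exp logBoundedXiBound := by
  have hs0 : s ≠ 0 := ne_zero_of_re_pos (by rw [hs]; norm_num)
  have hs1 : s ≠ 1 := fun h => by norm_num [h] at hs
  have hnorm : 0 < ‖s‖ := norm_pos_iff.2 hs0
  have hsq : ‖s‖ ^ 2 ≤ ‖(s + 1) * (2 - s)‖ :=
    norm_sq_le_norm_quadratic (by rw [hs]; norm_num) (by rw [hs]; norm_num)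
  have hprod : ‖s * (s - 1)‖ ≤ ‖s‖ ^ 2 := by
    rw [norm_mul, sq]
    gcongr
    exact norm_sub_one_le_norm (by rw [hs]; norm_num)
  have hlog : 2 * Real.log ‖s‖ ≤ Real.log ‖(s + 1) * (2 - s)‖ := by
    simpa only [Real.log_pow, Nat.cast_ofNat] using Real.log_le_log (by positivity) hsq
  have hdiv : Real.log (‖s‖ / (2 * π)) = Real.log ‖s‖ - Real.log (2 * π) :=
    Real.log_div hnorm.ne' (by positivity)
  have hrot := norm_rotatedZeta_le (s := s) (by rw [hs]; norm_num) ht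
  rw [hs] at hrot
  rw [norm_boundedXi_eq_mul_norm_rotatedZeta hs0 hs1]
  set Q := ‖(s + 1) * (2 - s)‖
  calc ‖s * (s - 1)‖ * ‖rotatedZeta s‖ * Real.exp (-(83 / 80 * Real.log Q))
      ≤ Real.exp (Real.log Q) * Real.exp ((23 / 20 - 1) / 2 * Real.log (‖s‖ / (2 * π)) +
        Real.log 2 / 2 + 1 / (4 * (23 / 20)) + logZetaReal (23 / 20)) *
        Real.exp (-(83 / 80 * Real.log Q)) := by
        rw [Real.exp_log ((pow_pos hnorm 2).trans_le hsq)]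
        gcongr
        exact hprod.trans hsq
    _ ≤ Real.exp logBoundedXiBound := by
        rw [← Real.exp_add, ← Real.exp_add, Real.exp_le_exp, hdiv, logBoundedXiBound]
        linarith [logZetaReal_le_two]

lemma norm_boundedXi_le_norm_boundedXi_conj (ht : s.im ≤ 0) :
    ‖boundedXi s‖ ≤ ‖boundedXi (conj s)‖ := by
  have h : (conj s + 1) * (2 - conj s) = conj ((s + 1) * (2 - s)) := by
    simp only [map_mul, map_add, map_sub, map_one, map_ofNat]
  rw [norm_boundedXi, norm_boundedXi, xi_conj, norm_conj, h, norm_conj, conj_im]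
  gcongr
  linarith

lemma norm_boundedXi_one_sub_conj (s : ℂ) : ‖boundedXi (1 - conj s)‖ = ‖boundedXi s‖ := by
  have h : (1 - conj s + 1) * (2 - (1 - conj s)) = conj ((s + 1) * (2 - s)) := by
    simp only [map_mul, map_add, map_sub, map_one, map_ofNat]
    ring
  rw [norm_boundedXi, norm_boundedXi, xi_one_sub, xi_conj, norm_conj, h, norm_conj, sub_im, one_im,
    conj_im, zero_sub, neg_neg]

lemma norm_boundedXi_le_of_re_eq (hs : s.re = 23 / 20) :
    ‖boundedXi s‖ ≤ Real.exp logBoundedXiBound := by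
  rcases le_total 0 s.im with h | h
  · exact norm_boundedXi_le_of_re_eq_of_im_nonneg hs h
  · exact (norm_boundedXi_le_norm_boundedXi_conj h).trans
      (norm_boundedXi_le_of_re_eq_of_im_nonneg (by rwa [conj_re]) (by rwa [conj_im, neg_nonneg]))

lemma norm_xi_le {a b : ℝ} (ha : a ≤ s.re) (hb : s.re ≤ b) :
    ‖xi s‖ ≤ 1 + ‖s‖ * ‖s - 1‖ * (‖completedRiemannZeta₀ a‖ + ‖completedRiemannZeta₀ b‖) := by
  refine (norm_add_le _ _).trans ?_
  rw [norm_one, norm_mul, norm_mul]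
  gcongr
  exact norm_completedRiemannZeta₀_le ha hb

lemma norm_le_two_mul_exp_abs_im (hs : |s.re| ≤ 2) : ‖s‖ ≤ 2 * Real.exp |s.im| := by
  linarith [norm_le_abs_re_add_abs_im s, Real.add_one_le_exp |s.im|, abs_nonneg s.im]

lemma norm_boundedXi_le_norm_xi_mul_exp (h0 : -1 < s.re) (h1 : s.re < 2) (ht : 1 ≤ |s.im|) :
    ‖boundedXi s‖ ≤ ‖xi s‖ * Real.exp |s.im| := by
  have hlog := Real.log_nonneg (one_le_norm_quadratic h0 h1 ht)
  rw [norm_boundedXi, ← mul_one (‖xi s‖ * Real.exp |s.im|)]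
  gcongr
  · nlinarith [le_abs_self s.im, abs_nonneg s.im, Real.pi_pos, Real.pi_lt_four]
  · rw [Real.exp_le_one_iff]
    linarith

lemma boundedXi_isBigO : boundedXi =O[comap (_root_.abs ∘ im) atTop ⊓
    𝓟 (re ⁻¹' Ioo (-(3 / 20)) (23 / 20))] fun z => Real.exp (3 * Real.exp (1 * |z.im|)) := by
  set M := ‖completedRiemannZeta₀ ((-(3 / 20) : ℝ) : ℂ)‖ +
    ‖completedRiemannZeta₀ ((23 / 20 : ℝ) : ℂ)‖
  have : 0 ≤ M := by positivity
  refine Asymptotics.IsBigO.of_bound (1 + 4 * M) ?_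
  rw [eventually_inf_principal, eventually_comap]
  filter_upwards [eventually_ge_atTop 1] with r hr s hsr ⟨ha, hb⟩
  rw [Function.comp_apply] at hsr
  have hs : ‖s‖ ≤ 2 * Real.exp r :=
    hsr ▸ norm_le_two_mul_exp_abs_im (abs_le.2 ⟨by linarith, by linarith⟩)
  have hs1 : ‖s - 1‖ ≤ 2 * Real.exp r := by
    have h := norm_le_two_mul_exp_abs_im (s := s - 1)
    rw [sub_re, sub_im, one_re, one_im, sub_zero, hsr] at h
    exact h (abs_le.2 ⟨by linarith, by linarith⟩)
  have hexp : 1 ≤ Real.exp r ^ 2 := one_le_pow₀ (Real.one_le_exp (by linarith))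
  have hxi : ‖xi s‖ ≤ (1 + 4 * M) * Real.exp r ^ 2 :=
    calc ‖xi s‖ ≤ 1 + 2 * Real.exp r * (2 * Real.exp r) * M := by
          refine (norm_xi_le ha.le hb.le).trans ?_
          gcongr
      _ ≤ (1 + 4 * M) * Real.exp r ^ 2 := by linarith
  rw [Real.norm_of_nonneg (Real.exp_pos _).le, hsr, one_mul]
  calc ‖boundedXi s‖ ≤ ‖xi s‖ * Real.exp r := hsr ▸ norm_boundedXi_le_norm_xi_mul_exp
        (by linarith) (by linarith) (hsr.symm ▸ hr)
    _ ≤ (1 + 4 * M) * Real.exp r ^ 2 * Real.exp r := by gcongr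
    _ = (1 + 4 * M) * Real.exp (3 * r) := by
        rw [mul_assoc, ← pow_succ, ← Real.exp_nat_mul]
        norm_num
    _ ≤ (1 + 4 * M) * Real.exp (3 * Real.exp r) := by
        gcongr
        linarith [Real.add_one_le_exp r]

lemma norm_boundedXi_le (h0 : -(3 / 20) ≤ s.re) (h1 : s.re ≤ 23 / 20) :
    ‖boundedXi s‖ ≤ Real.exp logBoundedXiBound := by
  refine PhragmenLindelof.vertical_strip (a := -(3 / 20)) (b := 23 / 20) ?_
    ⟨1, ?_, 3, boundedXi_isBigO⟩ (fun z hz => ?_) (fun z => norm_boundedXi_le_of_re_eq) h0 h1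
  · refine DifferentiableOn.diffContOnCl fun z hz => ?_
    rw [closure_preimage_re, closure_Ioo (by norm_num)] at hz
    exact (differentiableAt_boundedXi (by linarith [hz.1])
      (by linarith [hz.2])).differentiableWithinAt
  · rw [lt_div_iff₀ (by norm_num)]
    linarith [Real.pi_gt_three]
  · rw [← norm_boundedXi_one_sub_conj]
    refine norm_boundedXi_le_of_re_eq ?_
    rw [sub_re, one_re, conj_re, hz]
    norm_num

lemma norm_rotatedZeta_eq_mul_norm_boundedXi (h0 : s ≠ 0) (h1 : s ≠ 1) :
    ‖rotatedZeta s‖ = ‖boundedXi s‖ *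
      Real.exp (83 / 80 * Real.log ‖(s + 1) * (2 - s)‖ - Real.log ‖s * (s - 1)‖) := by
  have hp : 0 < ‖s * (s - 1)‖ := norm_pos_iff.2 (mul_ne_zero h0 (sub_ne_zero.2 h1))
  rw [norm_boundedXi_eq_mul_norm_rotatedZeta h0 h1, Real.exp_sub, Real.exp_log hp, Real.exp_neg]
  field_simp

lemma log_norm_quadratic_sub_le (h0 : -1 < s.re) (h1 : s.re < 2) (ht : 21 / 2 ≤ s.im) :
    Real.log ‖(s + 1) * (2 - s)‖ - Real.log ‖s * (s - 1)‖ ≤ 8 / 441 := by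
  have hp : 21 / 2 * (21 / 2) ≤ ‖s * (s - 1)‖ := by
    have him : s.im ≤ ‖s - 1‖ := by simpa only [sub_im, one_im, sub_zero] using im_le_norm (s - 1)
    rw [norm_mul]
    exact mul_le_mul (ht.trans (im_le_norm s)) (ht.trans him) (by norm_num) (norm_nonneg _)
  have hp0 : 0 < ‖s * (s - 1)‖ := by linarith
  have hq0 := norm_quadratic_pos h0 h1
  have hqp : ‖(s + 1) * (2 - s)‖ ≤ ‖s * (s - 1)‖ + 2 := by
    rw [show (s + 1) * (2 - s) = 2 - s * (s - 1) by ring, add_comm, ← Complex.norm_two]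
    exact norm_sub_le _ _
  have hdiv : ‖(s + 1) * (2 - s)‖ / ‖s * (s - 1)‖ ≤ 1 + 8 / 441 := by
    rw [div_le_iff₀ hp0]
    linarith
  rw [← Real.log_div hq0.ne' hp0.ne']
  linarith [Real.log_le_sub_one_of_pos (div_pos hq0 hp0)]

lemma log_add_le_log_add_div {x y : ℝ} (hx : 0 < x) (hy : 0 ≤ y) :
    Real.log (x + y) ≤ Real.log x + y / x := by
  have h := Real.log_le_sub_one_of_pos (x := (x + y) / x) (by positivity)
  rw [Real.log_div (by positivity) hx.ne', add_div, div_self hx.ne'] at h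
  linarith

lemma log_norm_quadratic_le (h0 : -1 < s.re) (h1 : s.re < 2) {r : ℝ} (hr : 21 / 2 ≤ r)
    (hs : ‖s‖ ≤ r) : Real.log ‖(s + 1) * (2 - s)‖ ≤ 2 * Real.log r + 2 / 7 := by
  have hr0 : 0 < r := by linarith
  have hq : ‖(s + 1) * (2 - s)‖ ≤ (r + 1) * (r + 2) := by
    rw [norm_mul]
    gcongr
    · exact (norm_add_le _ _).trans (by rw [norm_one]; gcongr)
    · exact (norm_sub_le _ _).trans (by rw [Complex.norm_two]; linarith)
  have hlog := Real.log_le_log (norm_quadratic_pos h0 h1) hq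
  rw [Real.log_mul (by positivity) (by positivity)] at hlog
  have hdiv : 1 / r + 2 / r ≤ 2 / 7 := by
    rw [← add_div, div_le_div_iff₀ hr0 (by norm_num)]
    linarith
  linarith [log_add_le_log_add_div hr0 zero_le_one, log_add_le_log_add_div hr0 zero_le_two]

lemma ne_zero_of_im_pos (hs : 0 < s.im) : s ≠ 0 := fun h => hs.ne' (by rw [h, zero_im])

lemma ne_one_of_im_pos (hs : 0 < s.im) : s ≠ 1 := fun h => hs.ne' (by rw [h, one_im])

lemma norm_rotatedZeta_le_of_re_le {r : ℝ} (h0 : -(3 / 20) ≤ s.re) (h1 : s.re ≤ 23 / 20)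
    (ht : 21 / 2 ≤ s.im) (hr : ‖s‖ ≤ r) :
    ‖rotatedZeta s‖ ≤ Real.exp (9 / 4 + Real.log 2 / 2 + 3 / 40 * Real.log (r / (2 * π))) := by
  have ht0 : 0 < s.im := by linarith
  have hr0 : 21 / 2 ≤ r := ht.trans ((im_le_norm s).trans hr)
  have hsub := log_norm_quadratic_sub_le (s := s) (by linarith) (by linarith) ht
  have hlog := log_norm_quadratic_le (s := s) (by linarith) (by linarith) hr0 hr
  have hdiv : Real.log (r / (2 * π)) = Real.log r - Real.log (2 * π) :=
    Real.log_div (by linarith) (by positivity)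
  rw [norm_rotatedZeta_eq_mul_norm_boundedXi (ne_zero_of_im_pos ht0) (ne_one_of_im_pos ht0)]
  refine (mul_le_mul_of_nonneg_right (norm_boundedXi_le h0 h1) (Real.exp_pos _).le).trans ?_
  rw [← Real.exp_add, Real.exp_le_exp, hdiv, logBoundedXiBound]
  linarith

lemma norm_rotatedZeta_le_exp {r : ℝ} (h0 : -(3 / 20) ≤ s.re) (h1 : s.re ≤ 49 / 20)
    (ht : 21 / 2 ≤ s.im) (hr : ‖s‖ ≤ r) :
    ‖rotatedZeta s‖ ≤ Real.exp (9 / 4 + Real.log 2 / 2 + 3 / 40 * Real.log (r / (2 * π)) +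
      max 0 ((s.re - 23 / 20) / (13 / 10)) * (13 / 20 * Real.log (r / (2 * π)) - 3 / 2)) := by
  rcases le_total s.re (23 / 20) with h | h
  · rw [max_eq_left (by linarith [h]), zero_mul, add_zero]
    exact norm_rotatedZeta_le_of_re_le h0 h ht hr
  rw [max_eq_right (by linarith)]
  refine (norm_rotatedZeta_le (by linarith) (by linarith)).trans (Real.exp_le_exp.2 ?_)
  set x := (s.re - 23 / 20) / (13 / 10) with hx
  have hs : s.re = 23 / 20 + 13 / 10 * x := by rw [hx]; ring
  have hζ := logZetaReal_add_mul_le (x := x) (by linarith) (by linarith)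
  rw [← hs] at hζ
  have hlog : (s.re - 1) / 2 * Real.log (‖s‖ / (2 * π)) ≤
      (s.re - 1) / 2 * Real.log (r / (2 * π)) := by
    have : 0 < ‖s‖ := by linarith [im_le_norm s]
    have : 0 ≤ s.re - 1 := by linarith
    gcongr
  have hdiv : 1 / (4 * s.re) ≤ 1 / 4 := by
    rw [div_le_div_iff₀ (by linarith) (by norm_num)]
    linarith
  rw [show (s.re - 1) / 2 = 3 / 40 + 13 / 20 * x by rw [hs]; ring] at hlog ⊢
  linarith

end Growth

/-! ### Zeros, Jensen's formula and the variation of the argument -/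

lemma one_le_divisor_of_eq_zero {F : ℂ → ℂ} {U : Set ℂ} {c u : ℂ} (hF : AnalyticOnNhd ℂ F U)
    (hU : IsPreconnected U) (hcU : c ∈ U) (hc : F c ≠ 0) (huU : u ∈ U) (hu : F u = 0) :
    1 ≤ MeromorphicOn.divisor F U u := by
  have hne : analyticOrderAt F u ≠ ⊤ := fun htop =>
    hc (hF.eqOn_zero_of_preconnected_of_eventuallyEq_zero hU huU (analyticOrderAt_eq_top.1 htop)
      hcU)
  have hne0 : analyticOrderAt F u ≠ 0 := (hF u huU).analyticOrderAt_ne_zero.2 hu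
  obtain ⟨n, hn⟩ := ENat.ne_top_iff_exists.1 hne
  rw [MeromorphicOn.AnalyticOnNhd.divisor_apply hF huU, ← hn]
  rw [← hn, Nat.cast_ne_zero] at hne0
  exact Nat.one_le_cast.2 (Nat.one_le_iff_ne_zero.2 hne0)

section Jensen

variable {F : ℂ → ℂ} {c : ℂ} {R : ℝ}

lemma log_mul_inv_norm_sub_nonneg {u : ℂ} (hu : u ∈ Metric.closedBall c R) :
    0 ≤ Real.log (R * ‖c - u‖⁻¹) := by
  rcases eq_or_ne u c with rfl | huc
  · simp
  rw [Metric.mem_closedBall, dist_comm, dist_eq_norm] at hu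
  have : 0 < ‖c - u‖ := norm_pos_iff.2 (sub_ne_zero.2 huc.symm)
  rw [← div_eq_mul_inv]
  exact Real.log_nonneg (by rwa [le_div_iff₀ this, one_mul])

lemma sum_log_le_finsum_divisor (hF : AnalyticOnNhd ℂ F (Metric.closedBall c R)) (hc : F c ≠ 0)
    (S : Finset ℂ) (hS : ∀ u ∈ S, u ∈ Metric.closedBall c R ∧ F u = 0) :
    ∑ u ∈ S, Real.log (R * ‖c - u‖⁻¹) ≤
      ∑ᶠ u, (MeromorphicOn.divisor F (Metric.closedBall c R) u : ℝ) *
        Real.log (R * ‖c - u‖⁻¹) := by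
  classical
  set D := MeromorphicOn.divisor F (Metric.closedBall c R) with hD
  have hnonneg : ∀ u, 0 ≤ (D u : ℝ) * Real.log (R * ‖c - u‖⁻¹) := by
    intro u
    by_cases hu : u ∈ Metric.closedBall c R
    · exact mul_nonneg (Int.cast_nonneg (MeromorphicOn.AnalyticOnNhd.divisor_nonneg hF u))
        (log_mul_inv_norm_sub_nonneg hu)
    · rw [hD, Function.locallyFinsuppWithin.apply_eq_zero_of_notMem _ hu, Int.cast_zero, zero_mul]
  have hfin : (Function.support fun u => (D u : ℝ) * Real.log (R * ‖c - u‖⁻¹)).Finite :=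
    (D.finiteSupport (isCompact_closedBall c R)).subset fun _ _ => by simp_all
  rw [finsum_eq_sum_of_support_subset (s := S ∪ hfin.toFinset) _ (by simp)]
  refine le_trans (Finset.sum_le_sum fun u hu => ?_)
    (Finset.sum_le_sum_of_subset_of_nonneg Finset.subset_union_left fun u _ _ => hnonneg u)
  obtain ⟨huR, hu0⟩ := hS u hu
  have hcR : c ∈ Metric.closedBall c R :=
    Metric.mem_closedBall_self (dist_nonneg.trans (Metric.mem_closedBall.1 huR))
  exact le_mul_of_one_le_left (log_mul_inv_norm_sub_nonneg huR)
    (mod_cast one_le_divisor_of_eq_zero hF (convex_closedBall c R).isPreconnected hcR hc huR hu0)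

lemma sum_log_le_circleAverage (hR : 0 < R) {B : ℂ → ℝ}
    (hF : AnalyticOnNhd ℂ F (Metric.closedBall c R)) (hc : F c ≠ 0)
    (hB : CircleIntegrable B c R) (hB0 : ∀ z ∈ Metric.sphere c R, 0 ≤ B z)
    (hFB : ∀ z ∈ Metric.sphere c R, ‖F z‖ ≤ Real.exp (B z)) (S : Finset ℂ)
    (hS : ∀ u ∈ S, u ∈ Metric.closedBall c R ∧ F u = 0) :
    ∑ u ∈ S, Real.log (R * ‖c - u‖⁻¹) + Real.log ‖F c‖ ≤ Real.circleAverage B c R := by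
  have hsum := sum_log_le_finsum_divisor hF hc S hS
  rw [← abs_of_pos hR] at hF hB0 hFB
  have jensen := hF.circleAverage_log_norm hR.ne' hc
  have hmono : Real.circleAverage (fun z => Real.log ‖F z‖) c R ≤ Real.circleAverage B c R := by
    refine Real.circleAverage_mono
      (hF.mono Metric.sphere_subset_closedBall).meromorphicOn.circleIntegrable_log_norm hB
      fun z hz => ?_
    rcases eq_or_ne (F z) 0 with h | h
    · rw [h, norm_zero, Real.log_zero]
      exact hB0 z hz
    · exact (Real.log_le_iff_le_exp (norm_pos_iff.2 h)).2 (hFB z hz)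
  rw [jensen, abs_of_pos hR] at hmono
  linarith

end Jensen

lemma integral_max_zero_cos : ∫ θ in (0 : ℝ)..2 * π, max 0 (Real.cos θ) = 2 := by
  have hInt : ∀ a b : ℝ, IntervalIntegrable (fun θ => max 0 (Real.cos θ)) volume a b :=
    fun a b => (by fun_prop : Continuous fun θ => max 0 (Real.cos θ)).intervalIntegrable a b
  have hπ := Real.pi_pos
  have hfirst : ∫ θ in (0 : ℝ)..π / 2, max 0 (Real.cos θ) =
      ∫ θ in (0 : ℝ)..π / 2, Real.cos θ := by
    refine intervalIntegral.integral_congr fun θ hθ => max_eq_right ?_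
    rw [uIcc_of_le (by linarith)] at hθ
    exact Real.cos_nonneg_of_neg_pi_div_two_le_of_le (by linarith [hθ.1]) hθ.2
  have hmiddle : ∫ θ in (π / 2 : ℝ)..π + π / 2, max 0 (Real.cos θ) =
      ∫ θ in (π / 2 : ℝ)..π + π / 2, 0 := by
    refine intervalIntegral.integral_congr fun θ hθ => max_eq_left ?_
    rw [uIcc_of_le (by linarith)] at hθ
    exact Real.cos_nonpos_of_pi_div_two_le_of_le hθ.1 hθ.2
  have hlast : ∫ θ in (π + π / 2 : ℝ)..2 * π, max 0 (Real.cos θ) =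
      ∫ θ in (π + π / 2 : ℝ)..2 * π, Real.cos θ := by
    refine intervalIntegral.integral_congr fun θ hθ => max_eq_right ?_
    rw [uIcc_of_le (by linarith)] at hθ
    rw [← Real.cos_sub_two_pi]
    exact Real.cos_nonneg_of_neg_pi_div_two_le_of_le (by linarith [hθ.1]) (by linarith [hθ.2])
  rw [← intervalIntegral.integral_add_adjacent_intervals (hInt 0 (π / 2)) (hInt _ _),
    ← intervalIntegral.integral_add_adjacent_intervals (hInt (π / 2) (π + π / 2)) (hInt _ _),
    hfirst, hmiddle, hlast, integral_cos, integral_cos, add_comm π (π / 2), Real.sin_add_pi]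
  norm_num

lemma circleAverage_add_mul_max_re (a b : ℝ) (c : ℂ) {R : ℝ} (hR : R ≠ 0) :
    Real.circleAverage (fun z => a + max 0 ((z.re - c.re) / R) * b) c R = a + b / π := by
  have hcos : ∀ θ, a + max 0 (((circleMap c R θ).re - c.re) / R) * b =
      a + max 0 (Real.cos θ) * b := by
    intro θ
    have h : (circleMap c R θ).re = c.re + R * Real.cos θ := by
      simp [circleMap, exp_ofReal_mul_I_re]
    rw [h, add_sub_cancel_left, mul_div_cancel_left₀ _ hR]
  rw [Real.circleAverage_def]
  simp_rw [hcos]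
  rw [intervalIntegral.integral_add intervalIntegrable_const
      (Continuous.intervalIntegrable (by fun_prop) _ _),
    intervalIntegral.integral_mul_const, integral_max_zero_cos,
    intervalIntegral.integral_const, sub_zero, smul_eq_mul, smul_eq_mul]
  field_simp

lemma sub_sub_one_le_card_Ioo_floor_ceil (x y : ℝ) :
    y - x - 1 ≤ (Finset.Ioo ⌊x⌋ ⌈y⌉).card := by
  have h : ((⌈y⌉ - ⌊x⌋ - 1 : ℤ) : ℝ) ≤ ((⌈y⌉ - ⌊x⌋ - 1).toNat : ℝ) := by
    exact_mod_cast Int.self_le_toNat _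
  push_cast at h
  rw [Int.card_Ioo]
  linarith [Int.floor_le x, Int.le_ceil y]

lemma exists_finset_sin_eq_zero {A : ℝ → ℝ} {u v : ℝ} (huv : u ≤ v)
    (hA : ContinuousOn A (Icc u v)) :
    ∃ S : Finset ℝ, |A v - A u| / π - 1 ≤ S.card ∧ ∀ x ∈ S, x ∈ Ioo u v ∧ Real.sin (A x) = 0 := by
  wlog h : A u ≤ A v generalizing A
  · obtain ⟨S, hcard, hS⟩ := this (A := fun x => -A x) hA.neg (neg_le_neg (le_of_not_ge h))
    refine ⟨S, ?_, fun x hx => ⟨(hS x hx).1, neg_eq_zero.1 (Real.sin_neg _ ▸ (hS x hx).2)⟩⟩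
    rwa [neg_sub_neg, abs_sub_comm] at hcard
  have hmeet : ∀ k ∈ Finset.Ioo ⌊A u / π⌋ ⌈A v / π⌉, ∃ x ∈ Ioo u v, A x = k * π := by
    intro k hk
    rw [Finset.mem_Ioo, Int.floor_lt, Int.lt_ceil, div_lt_iff₀ Real.pi_pos,
      lt_div_iff₀ Real.pi_pos] at hk
    exact intermediate_value_Ioo huv hA hk
  choose! x hx hAx using hmeet
  refine ⟨(Finset.Ioo ⌊A u / π⌋ ⌈A v / π⌉).image x, ?_, fun y hy => ?_⟩
  · rw [Finset.card_image_of_injOn, abs_of_nonneg (sub_nonneg.2 h), sub_div]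
    · exact sub_sub_one_le_card_Ioo_floor_ceil _ _
    · intro k hk l hl hkl
      have h := hAx k hk
      rw [hkl, hAx l hl] at h
      exact_mod_cast (mul_right_cancel₀ Real.pi_ne_zero h).symm
  · obtain ⟨k, hk, rfl⟩ := Finset.mem_image.1 hy
    exact ⟨hx k hk, by rw [hAx k hk, Real.sin_int_mul_pi]⟩

/-! ### Backlund's argument -/

section Backlund

open ComplexConjugate

/-- The mean of `e ^ (i φ) g(z) ^ M` and of its reflection under `z ↦ 1 - z`, with conjugate
coefficients. If `g (1 - x) = conj (g x)` for real `x`, it equals `Re (e ^ (i φ) g(x) ^ M)` there,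
so that its zeros record the variation of `M * arg g`. -/
noncomputable def backlundMean (g : ℂ → ℂ) (M : ℕ) (φ : ℝ) (z : ℂ) : ℂ :=
  (exp (φ * I) * g z ^ M + conj (exp (φ * I)) * g (1 - z) ^ M) / 2

variable {g : ℂ → ℂ} {M : ℕ} {φ : ℝ}

lemma backlundMean_ofReal {x : ℝ} {w : ℂ} (hsym : g (1 - x) = conj (g x)) (hgw : g x = exp w) :
    backlundMean g M φ x = (Real.exp (M * w.re) * Real.cos (M * w.im + φ) : ℝ) := by
  have hexp : exp (φ * I) * exp w ^ M = exp (M * w + φ * I) := by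
    rw [← Complex.exp_nat_mul, ← Complex.exp_add, add_comm]
  rw [backlundMean, hsym, hgw, ← map_pow, ← map_mul, hexp, add_conj, exp_re]
  simp

lemma backlundMean_one_sub_eq_zero (hφ : φ = 0 ∨ φ = -(π / 2)) {z : ℂ}
    (h : backlundMean g M φ z = 0) : backlundMean g M φ (1 - z) = 0 := by
  have hconj : conj (exp (φ * I)) = exp (φ * I) ∨ conj (exp (φ * I)) = -exp (φ * I) := by
    rcases hφ with rfl | rfl
    · simp
    · right
      have : exp ((-(π / 2) : ℝ) * I) = -I := by
        push_cast
        rw [neg_mul, Complex.exp_neg, exp_pi_div_two_mul_I, inv_I]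
      rw [this, map_neg, conj_I]
  rw [backlundMean] at h ⊢
  rw [sub_sub_cancel]
  rcases hconj with hconj | hconj <;> rw [hconj] at h ⊢
  · rw [add_comm, h]
  · linear_combination -h

lemma norm_backlundMean_le {z : ℂ} {b : ℝ} (hz : ‖g z‖ ≤ Real.exp b)
    (hz' : ‖g (1 - z)‖ ≤ Real.exp b) : ‖backlundMean g M φ z‖ ≤ Real.exp (M * b) := by
  rw [backlundMean, norm_div, Complex.norm_two, div_le_iff₀ two_pos, Real.exp_nat_mul]
  refine (norm_add_le _ _).trans ?_
  rw [norm_mul, norm_mul, norm_conj, norm_exp_ofReal_mul_I, one_mul, one_mul, norm_pow, norm_pow]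
  have h := pow_le_pow_left₀ (norm_nonneg _) hz M
  have h' := pow_le_pow_left₀ (norm_nonneg _) hz' M
  linarith

lemma analyticOnNhd_backlundMean {s : Set ℂ} (hg : AnalyticOnNhd ℂ g s)
    (hg' : AnalyticOnNhd ℂ (fun z => g (1 - z)) s) : AnalyticOnNhd ℂ (backlundMean g M φ) s :=
  fun z hz => ((analyticAt_const.mul ((hg z hz).pow M)).add
    (analyticAt_const.mul ((hg' z hz).pow M))).div_const

lemma exists_half_le_cos_sq (y : ℝ) :
    ∃ φ : ℝ, (φ = 0 ∨ φ = -(π / 2)) ∧ 1 / 2 ≤ Real.cos (y + φ) ^ 2 := by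
  rcases le_total (1 / 2) (Real.cos y ^ 2) with h | h
  · exact ⟨0, Or.inl rfl, by rwa [add_zero]⟩
  · refine ⟨-(π / 2), Or.inr rfl, ?_⟩
    rw [← sub_eq_add_neg, Real.cos_sub_pi_div_two, Real.sin_sq]
    linarith

lemma sub_log_two_div_two_le_log_norm {a k : ℝ} (hk : 1 / 2 ≤ k ^ 2) :
    a - Real.log 2 / 2 ≤ Real.log ‖Real.exp a * k‖ := by
  have hk0 : k ≠ 0 := by
    rintro rfl
    norm_num at hk
  have hlog := Real.log_le_log one_half_pos hk
  rw [Real.log_pow, one_div, Real.log_inv, Nat.cast_two] at hlog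
  rw [Real.norm_eq_abs, Real.log_abs, Real.log_mul (Real.exp_ne_zero _) hk0, Real.log_exp]
  linarith

section ReflectedPairs

variable {c : ℝ}

lemma norm_sub_of_lt {x : ℝ} (hx : x < c) : ‖(c : ℂ) - x‖ = c - x := by
  rw [← ofReal_sub, norm_real, Real.norm_of_nonneg (sub_nonneg.2 hx.le)]

lemma two_mul_log_two_le_log_add_log {x : ℝ} (hx : x ∈ Ioo (1 / 2) c) :
    2 * Real.log 2 ≤ Real.log ((2 * c - 1) * ‖(c : ℂ) - x‖⁻¹) +
      Real.log ((2 * c - 1) * ‖(c : ℂ) - (1 - x : ℝ)‖⁻¹) := by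
  obtain ⟨hx1, hx2⟩ := hx
  have hR : 0 < 2 * c - 1 := by linarith
  have hd : 0 < c - x := by linarith
  have hd' : 0 < c - (1 - x) := by linarith
  rw [norm_sub_of_lt hx2, norm_sub_of_lt (by linarith), ← Real.log_mul (by positivity)
      (by positivity), ← div_eq_mul_inv, ← div_eq_mul_inv, div_mul_div_comm, ← Nat.cast_two,
    ← Real.log_pow]
  refine Real.log_le_log (by positivity) ?_
  rw [le_div_iff₀ (mul_pos hd hd')]
  push_cast
  -- AM-GM: the two distances from `c` add up to `2 * c - 1`
  linarith [four_mul_le_sq_add (c - x) (c - (1 - x))]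

open Classical in
lemma card_mul_two_mul_log_two_le {S : Finset ℝ} (hS : ∀ x ∈ S, x ∈ Ioo (1 / 2) c) :
    S.card * (2 * Real.log 2) ≤ ∑ u ∈ S.image (fun x : ℝ => (x : ℂ)) ∪
      S.image (fun x : ℝ => ((1 - x : ℝ) : ℂ)), Real.log ((2 * c - 1) * ‖(c : ℂ) - u‖⁻¹) := by
  have hdisj : Disjoint (S.image fun x : ℝ => (x : ℂ))
      (S.image fun x : ℝ => ((1 - x : ℝ) : ℂ)) := by
    simp only [Finset.disjoint_left, Finset.mem_image, not_exists, not_and]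
    rintro _ ⟨x, hx, rfl⟩ y hy hyx
    have : 1 - y = x := ofReal_injective hyx
    linarith [(hS x hx).1, (hS y hy).1]
  have hinj : Function.Injective fun x : ℝ => ((1 - x : ℝ) : ℂ) :=
    ofReal_injective.comp sub_right_injective
  rw [Finset.sum_union hdisj, Finset.sum_image ofReal_injective.injOn,
    Finset.sum_image hinj.injOn, ← Finset.sum_add_distrib, ← nsmul_eq_mul]
  exact Finset.card_nsmul_le_sum _ _ _ fun x hx => two_mul_log_two_le_log_add_log (hS x hx)

lemma ofReal_mem_closedBall_iff {x R : ℝ} :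
    (x : ℂ) ∈ Metric.closedBall (c : ℂ) R ↔ |x - c| ≤ R := by
  rw [Metric.mem_closedBall, dist_eq, ← ofReal_sub, norm_real, Real.norm_eq_abs]

end ReflectedPairs

variable {l : ℝ → ℂ} {c : ℝ}

lemma exists_finset_backlundMean_eq_zero (hc : 1 / 2 ≤ c)
    (hsym : ∀ x : ℝ, g (1 - x) = conj (g x)) (hl : ContinuousOn l (Icc (1 / 2) c))
    (hgl : ∀ x ∈ Icc (1 / 2) c, g x = exp (l x)) :
    ∃ S : Finset ℝ, M * (|(l c).im - (l (1 / 2)).im| / π) - 1 ≤ S.card ∧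
      ∀ x ∈ S, x ∈ Ioo (1 / 2) c ∧ backlundMean g M φ x = 0 := by
  obtain ⟨S, hcard, hS⟩ := exists_finset_sin_eq_zero (A := fun x => M * (l x).im + φ + π / 2) hc
    (((continuousOn_const.mul (continuous_im.comp_continuousOn hl)).add_const φ).add_const _)
  refine ⟨S, ?_, fun x hx => ⟨(hS x hx).1, ?_⟩⟩
  · rwa [add_sub_add_right_eq_sub, add_sub_add_right_eq_sub, ← mul_sub, abs_mul, Nat.abs_cast,
      mul_div_assoc] at hcard
  · have hsin := (hS x hx).2
    rw [Real.sin_add_pi_div_two] at hsin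
    rw [backlundMean_ofReal (hsym x) (hgl x (Ioo_subset_Icc_self (hS x hx).1)), hsin, mul_zero,
      ofReal_zero]

variable {B : ℂ → ℝ}

lemma backlund_pow (hc : 1 / 2 < c)
    (hg : AnalyticOnNhd ℂ g (Metric.closedBall c (2 * c - 1)))
    (hg' : AnalyticOnNhd ℂ (fun z => g (1 - z)) (Metric.closedBall c (2 * c - 1)))
    (hsym : ∀ x : ℝ, g (1 - x) = conj (g x)) (hl : ContinuousOn l (Icc (1 / 2) c))
    (hgl : ∀ x ∈ Icc (1 / 2) c, g x = exp (l x)) (hB : CircleIntegrable B c (2 * c - 1))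
    (hB0 : ∀ z ∈ Metric.sphere (c : ℂ) (2 * c - 1), 0 ≤ B z)
    (hgB : ∀ z ∈ Metric.sphere (c : ℂ) (2 * c - 1), ‖g z‖ ≤ Real.exp (B z))
    (hgB' : ∀ z ∈ Metric.sphere (c : ℂ) (2 * c - 1), ‖g (1 - z)‖ ≤ Real.exp (B z)) (M : ℕ) :
    (M * (|(l c).im - (l (1 / 2)).im| / π) - 1) * (2 * Real.log 2) + M * (l c).re ≤
      M * Real.circleAverage B c (2 * c - 1) + Real.log 2 / 2 := by
  classical
  obtain ⟨φ, hφ, hcos⟩ := exists_half_le_cos_sq (M * (l c).im)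
  obtain ⟨S, hcard, hS⟩ := exists_finset_backlundMean_eq_zero (M := M) (φ := φ) hc.le hsym hl hgl
  have hFc := backlundMean_ofReal (M := M) (φ := φ) (hsym c) (hgl c (right_mem_Icc.2 hc.le))
  have hFc0 : backlundMean g M φ c ≠ 0 := by
    rw [hFc, ofReal_ne_zero]
    refine mul_ne_zero (Real.exp_ne_zero _) fun h => ?_
    norm_num [h] at hcos
  have hFcle : M * (l c).re - Real.log 2 / 2 ≤ Real.log ‖backlundMean g M φ c‖ := by
    rw [hFc, norm_real]
    exact sub_log_two_div_two_le_log_norm hcos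
  have jensen := sum_log_le_circleAverage (B := fun z => M * B z) (by linarith)
    (analyticOnNhd_backlundMean hg hg') hFc0 (hB.const_fun_smul (a := (M : ℝ)))
    (fun z hz => mul_nonneg M.cast_nonneg (hB0 z hz))
    (fun z hz => norm_backlundMean_le (hgB z hz) (hgB' z hz))
    (S.image (fun x : ℝ => (x : ℂ)) ∪ S.image fun x : ℝ => ((1 - x : ℝ) : ℂ)) ?_
  · have hsum := card_mul_two_mul_log_two_le fun x hx => (hS x hx).1
    have havg : Real.circleAverage (fun z => M * B z) c (2 * c - 1) =
        M * Real.circleAverage B c (2 * c - 1) :=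
      Real.circleAverage_fun_smul (a := (M : ℝ)) (f := B)
    have hmul := mul_le_mul_of_nonneg_right hcard (by positivity : 0 ≤ 2 * Real.log 2)
    linarith
  · simp only [Finset.mem_union, Finset.mem_image]
    rintro _ (⟨x, hx, rfl⟩ | ⟨x, hx, rfl⟩) <;> obtain ⟨⟨hx1, hx2⟩, hx0⟩ := hS x hx
    · exact ⟨ofReal_mem_closedBall_iff.2 (abs_le.2 ⟨by linarith, by linarith⟩), hx0⟩
    · refine ⟨ofReal_mem_closedBall_iff.2 (abs_le.2 ⟨by linarith, by linarith⟩), ?_⟩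
      rw [ofReal_sub, ofReal_one, backlundMean_one_sub_eq_zero hφ hx0]

lemma le_of_forall_nat_mul_le {a b C : ℝ} (h : ∀ M : ℕ, M * a ≤ M * b + C) : a ≤ b := by
  by_contra! hab
  obtain ⟨M, hM⟩ := exists_nat_gt (C / (a - b))
  rw [div_lt_iff₀ (by linarith)] at hM
  linarith [h M]

lemma abs_im_sub_im_le_circleAverage (hc : 1 / 2 < c)
    (hg : AnalyticOnNhd ℂ g (Metric.closedBall c (2 * c - 1)))
    (hg' : AnalyticOnNhd ℂ (fun z => g (1 - z)) (Metric.closedBall c (2 * c - 1)))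
    (hsym : ∀ x : ℝ, g (1 - x) = conj (g x)) (hl : ContinuousOn l (Icc (1 / 2) c))
    (hgl : ∀ x ∈ Icc (1 / 2) c, g x = exp (l x)) (hB : CircleIntegrable B c (2 * c - 1))
    (hB0 : ∀ z ∈ Metric.sphere (c : ℂ) (2 * c - 1), 0 ≤ B z)
    (hgB : ∀ z ∈ Metric.sphere (c : ℂ) (2 * c - 1), ‖g z‖ ≤ Real.exp (B z))
    (hgB' : ∀ z ∈ Metric.sphere (c : ℂ) (2 * c - 1), ‖g (1 - z)‖ ≤ Real.exp (B z)) :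
    |(l c).im - (l (1 / 2)).im| / π * (2 * Real.log 2) + (l c).re ≤
      Real.circleAverage B c (2 * c - 1) := by
  refine le_of_forall_nat_mul_le (C := Real.log 2 / 2 + 2 * Real.log 2) fun M => ?_
  linarith [backlund_pow hc hg hg' hsym hl hgl hB hB0 hgB hgB' M]

end Backlund

/-! ### The argument principle for a rectangle -/

section Factorization

variable {F : ℂ → ℂ}

lemma analyticOrderAt_ne_top_of_differentiable (hF : Differentiable ℂ F) (hF0 : F ≠ 0) (w : ℂ) :
    analyticOrderAt F w ≠ ⊤ := by
  obtain ⟨s, hs⟩ := Function.ne_iff.1 hF0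
  refine AnalyticOnNhd.analyticOrderAt_ne_top_of_isPreconnected (U := univ) (x := s)
    (fun z _ => hF.analyticAt z) isPreconnected_univ (mem_univ _) (mem_univ _) ?_
  rw [analyticOrderAt_eq_zero.2 (Or.inr hs)]
  exact ENat.zero_ne_top

lemma exists_eq_pow_mul {n : ℕ} {w : ℂ} (hF : Differentiable ℂ F)
    (hn : analyticOrderAt F w = n) :
    ∃ h : ℂ → ℂ, Differentiable ℂ h ∧ (∀ s, F s = (s - w) ^ n * h s) ∧ h w ≠ 0 := by
  induction n generalizing F with
  | zero =>
    exact ⟨F, hF, fun s => by rw [pow_zero, one_mul],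
      (hF.analyticAt w).analyticOrderAt_eq_zero.1 hn⟩
  | succ n ih =>
    have hFw : F w = 0 := (hF.analyticAt w).analyticOrderAt_ne_zero.1 (by rw [hn]; norm_cast)
    have hd : Differentiable ℂ (dslope F w) := by
      rw [← differentiableOn_univ] at hF ⊢
      exact (Complex.differentiableOn_dslope univ_mem).2 hF
    have hmul : F = (· - w) * dslope F w := funext fun s => (sub_smul_dslope_of_zero hFw s).symm
    have hord : analyticOrderAt (dslope F w) w = n := by
      rw [hmul, analyticOrderAt_mul (by fun_prop) (hd.analyticAt w),
        analyticOrderAt_id_sub_const_self, Nat.cast_add_one, add_comm _ 1] at hn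
      exact ENat.add_right_injective_of_ne_top ENat.one_ne_top hn
    obtain ⟨h, hh, hFh, hw⟩ := ih hd hord
    refine ⟨h, hh, fun s => ?_, hw⟩
    rw [pow_succ', mul_assoc, ← hFh, ← smul_eq_mul, sub_smul_dslope_of_zero hFw]

lemma exists_eq_prod_mul (hF : Differentiable ℂ F) (hF0 : F ≠ 0) (Z : Finset ℂ) :
    ∃ h : ℂ → ℂ, Differentiable ℂ h ∧
      (∀ s, F s = (∏ ρ ∈ Z, (s - ρ) ^ analyticOrderNatAt F ρ) * h s) ∧ ∀ ρ ∈ Z, h ρ ≠ 0 := by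
  classical
  induction Z using Finset.induction_on with
  | empty => exact ⟨F, hF, fun s => by rw [Finset.prod_empty, one_mul], by simp⟩
  | insert w Z hw ih =>
    obtain ⟨h, hh, hFh, hZ⟩ := ih
    set P : ℂ → ℂ := fun s => ∏ ρ ∈ Z, (s - ρ) ^ analyticOrderNatAt F ρ
    have hP : Differentiable ℂ P := by fun_prop
    have hPw : P w ≠ 0 := Finset.prod_ne_zero_iff.2 fun ρ hρ =>
      pow_ne_zero _ (sub_ne_zero.2 fun e => hw (e ▸ hρ))
    have hord : analyticOrderAt h w = analyticOrderNatAt F w := by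
      have hmul : F = P * h := funext hFh
      rw [Nat.cast_analyticOrderNatAt (analyticOrderAt_ne_top_of_differentiable hF hF0 w)]
      conv_rhs => rw [hmul, analyticOrderAt_mul (hP.analyticAt w) (hh.analyticAt w),
        (hP.analyticAt w).analyticOrderAt_eq_zero.2 hPw, zero_add]
    obtain ⟨k, hk, hhk, hkw⟩ := exists_eq_pow_mul hh hord
    refine ⟨k, hk, fun s => ?_, fun ρ hρ => ?_⟩
    · rw [Finset.prod_insert hw, hFh, hhk, mul_left_comm, mul_assoc]
    · rcases Finset.mem_insert.1 hρ with rfl | hρ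
      · exact hkw
      · exact right_ne_zero_of_mul (hhk ρ ▸ hZ ρ hρ)

end Factorization

section Rectangle

/-- The boundary of the rectangle `[a, b] × [p, q]`. -/
def rectBoundary (a b p q : ℝ) : Set ℂ :=
  (Icc a b ×ℂ Icc p q) \ (Ioo a b ×ℂ Ioo p q)

/-- The integral along the boundary of the rectangle `[a, b] × [p, q]`, counterclockwise. -/
noncomputable def rectIntegral (f : ℂ → ℂ) (a b p q : ℝ) : ℂ :=
  (∫ x : ℝ in a..b, f (x + p * I)) - (∫ x : ℝ in a..b, f (x + q * I)) +
    I * (∫ y : ℝ in p..q, f (b + y * I)) - I * (∫ y : ℝ in p..q, f (a + y * I))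

variable {a b p q : ℝ} {f g : ℂ → ℂ}

lemma horizontal_mem_rectBoundary (hab : a ≤ b) (hpq : p ≤ q) {x y : ℝ} (hx : x ∈ uIcc a b)
    (hy : y = p ∨ y = q) : (x + y * I : ℂ) ∈ rectBoundary a b p q := by
  rw [uIcc_of_le hab] at hx
  rcases hy with rfl | rfl <;> simp [rectBoundary, mem_reProdIm, hpq, hx.1, hx.2]

lemma vertical_mem_rectBoundary (hab : a ≤ b) (hpq : p ≤ q) {x y : ℝ} (hx : x = a ∨ x = b)
    (hy : y ∈ uIcc p q) : (x + y * I : ℂ) ∈ rectBoundary a b p q := by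
  rw [uIcc_of_le hpq] at hy
  rcases hx with rfl | rfl <;> simp [rectBoundary, mem_reProdIm, hab, hy.1, hy.2]

lemma intervalIntegrable_horizontal (hab : a ≤ b) (hpq : p ≤ q)
    (hf : ContinuousOn f (rectBoundary a b p q)) {y : ℝ} (hy : y = p ∨ y = q) :
    IntervalIntegrable (fun x : ℝ => f (x + y * I)) volume a b :=
  (hf.comp (by fun_prop) fun _ hx =>
    horizontal_mem_rectBoundary hab hpq hx hy).intervalIntegrable

lemma intervalIntegrable_vertical (hab : a ≤ b) (hpq : p ≤ q)
    (hf : ContinuousOn f (rectBoundary a b p q)) {x : ℝ} (hx : x = a ∨ x = b) :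
    IntervalIntegrable (fun y : ℝ => f (x + y * I)) volume p q :=
  (hf.comp (by fun_prop) fun _ hy => vertical_mem_rectBoundary hab hpq hx hy).intervalIntegrable

lemma rectIntegral_add (hab : a ≤ b) (hpq : p ≤ q) (hf : ContinuousOn f (rectBoundary a b p q))
    (hg : ContinuousOn g (rectBoundary a b p q)) :
    rectIntegral (fun s => f s + g s) a b p q =
      rectIntegral f a b p q + rectIntegral g a b p q := by
  have horizontal {y : ℝ} (hy : y = p ∨ y = q) :=
    intervalIntegral.integral_add (intervalIntegrable_horizontal hab hpq hf hy)
      (intervalIntegrable_horizontal hab hpq hg hy)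
  have vertical {x : ℝ} (hx : x = a ∨ x = b) :=
    intervalIntegral.integral_add (intervalIntegrable_vertical hab hpq hf hx)
      (intervalIntegrable_vertical hab hpq hg hx)
  simp only [rectIntegral, horizontal (Or.inl rfl), horizontal (Or.inr rfl),
    vertical (Or.inl rfl), vertical (Or.inr rfl)]
  ring

lemma rectIntegral_const_mul (c : ℂ) (f : ℂ → ℂ) :
    rectIntegral (fun s => c * f s) a b p q = c * rectIntegral f a b p q := by
  simp only [rectIntegral, intervalIntegral.integral_const_mul]
  ring

lemma rectIntegral_congr (hab : a ≤ b) (hpq : p ≤ q) (h : EqOn f g (rectBoundary a b p q)) :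
    rectIntegral f a b p q = rectIntegral g a b p q := by
  have horizontal {y : ℝ} (hy : y = p ∨ y = q) :
      ∫ x : ℝ in a..b, f (x + y * I) = ∫ x : ℝ in a..b, g (x + y * I) :=
    intervalIntegral.integral_congr fun x hx => h (horizontal_mem_rectBoundary hab hpq hx hy)
  have vertical {x : ℝ} (hx : x = a ∨ x = b) :
      ∫ y : ℝ in p..q, f (x + y * I) = ∫ y : ℝ in p..q, g (x + y * I) :=
    intervalIntegral.integral_congr fun y hy => h (vertical_mem_rectBoundary hab hpq hx hy)
  rw [rectIntegral, rectIntegral, horizontal (Or.inl rfl), horizontal (Or.inr rfl),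
    vertical (Or.inl rfl), vertical (Or.inr rfl)]

lemma rectIntegral_eq_zero (hab : a ≤ b) (hpq : p ≤ q)
    (hf : ∀ s ∈ Icc a b ×ℂ Icc p q, DifferentiableAt ℂ f s) : rectIntegral f a b p q = 0 := by
  have h := Complex.integral_boundary_rect_eq_zero_of_differentiableOn f ⟨a, p⟩ ⟨b, q⟩ ?_
  · simpa only [rectIntegral, smul_eq_mul] using h
  · rw [uIcc_of_le hab, uIcc_of_le hpq]
    exact fun s hs => (hf s hs).differentiableWithinAt

lemma hasDerivAt_horizontal (y : ℝ) (w : ℂ) (x : ℝ) :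
    HasDerivAt (fun x : ℝ => (x + y * I - w : ℂ)) 1 x :=
  ((hasDerivAt_id x).ofReal_comp.add_const _).sub_const _

lemma hasDerivAt_vertical (x : ℝ) (w : ℂ) (y : ℝ) :
    HasDerivAt (fun y : ℝ => (x + y * I - w : ℂ)) I y := by
  simpa using (((hasDerivAt_id y).ofReal_comp.mul_const I).const_add (x : ℂ)).sub_const w

lemma integral_inv_horizontal {w : ℂ} (hq : q - w.im ≠ 0) :
    ∫ x : ℝ in a..b, (x + q * I - w)⁻¹ = log (b + q * I - w) - log (a + q * I - w) := by
  have hne : ∀ x : ℝ, (x + q * I - w : ℂ) ∈ slitPlane := fun x => Or.inr (by simpa using hq)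
  refine intervalIntegral.integral_eq_sub_of_hasDerivAt
    (f := fun x : ℝ => log (x + q * I - w)) (fun x _ => ?_)
    (Continuous.intervalIntegrable (Continuous.inv₀ (by fun_prop)
      fun x => slitPlane_ne_zero (hne x)) _ _)
  rw [← one_div]
  exact (hasDerivAt_horizontal q w x).clog_real (hne x)

lemma integral_inv_vertical_right {w : ℂ} (hb : w.re < b) :
    I * ∫ y : ℝ in p..q, (b + y * I - w)⁻¹ = log (b + q * I - w) - log (b + p * I - w) := by
  have hne : ∀ y : ℝ, (b + y * I - w : ℂ) ∈ slitPlane := fun y => Or.inl (by simpa using hb)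
  rw [← intervalIntegral.integral_const_mul]
  refine intervalIntegral.integral_eq_sub_of_hasDerivAt
    (f := fun y : ℝ => log (b + y * I - w)) (fun y _ => ?_)
    (Continuous.intervalIntegrable (continuous_const.mul (Continuous.inv₀ (by fun_prop)
      fun y => slitPlane_ne_zero (hne y))) _ _)
  rw [← div_eq_mul_inv]
  exact (hasDerivAt_vertical b w y).clog_real (hne y)

-- the negative real axis is crossed here, so that the principal logarithm is taken of `w - s`
lemma integral_inv_vertical_left {w : ℂ} (ha : a < w.re) :
    I * ∫ y : ℝ in p..q, (a + y * I - w)⁻¹ =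
      log (-(a + q * I - w)) - log (-(a + p * I - w)) := by
  have hne : ∀ y : ℝ, -(a + y * I - w : ℂ) ∈ slitPlane := fun y => Or.inl (by simpa using ha)
  have hne0 : ∀ y : ℝ, (a + y * I - w : ℂ) ≠ 0 := fun y =>
    neg_ne_zero.1 (slitPlane_ne_zero (hne y))
  rw [← intervalIntegral.integral_const_mul]
  refine intervalIntegral.integral_eq_sub_of_hasDerivAt
    (f := fun y : ℝ => log (-(a + y * I - w))) (fun y _ => ?_)
    (Continuous.intervalIntegrable (continuous_const.mul (Continuous.inv₀ (by fun_prop) hne0)) _ _)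
  rw [← div_eq_mul_inv, ← neg_div_neg_eq]
  exact (hasDerivAt_vertical a w y).fun_neg.clog_real (hne y)

lemma log_neg_of_im_pos {z : ℂ} (hz : 0 < z.im) : log (-z) = log z - π * I := by
  rw [log, log, norm_neg, arg_neg_eq_arg_sub_pi_of_im_pos hz]
  push_cast
  ring

lemma log_neg_of_im_neg {z : ℂ} (hz : z.im < 0) : log (-z) = log z + π * I := by
  rw [log, log, norm_neg, arg_neg_eq_arg_add_pi_of_im_neg hz]
  push_cast
  ring

lemma rectIntegral_inv_sub {w : ℂ} (hw : w ∈ Ioo a b ×ℂ Ioo p q) :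
    rectIntegral (fun s => (s - w)⁻¹) a b p q = 2 * π * I := by
  obtain ⟨⟨ha, hb⟩, hp, hq⟩ := hw
  rw [rectIntegral, integral_inv_horizontal (sub_neg.2 hp).ne,
    integral_inv_horizontal (sub_pos.2 hq).ne', integral_inv_vertical_right hb,
    integral_inv_vertical_left ha, log_neg_of_im_pos (by simpa using hq),
    log_neg_of_im_neg (by simpa using hp)]
  ring

lemma sub_ne_zero_of_mem_rectBoundary {s w : ℂ} (hs : s ∈ rectBoundary a b p q)
    (hw : w ∈ Ioo a b ×ℂ Ioo p q) : s - w ≠ 0 :=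
  sub_ne_zero.2 fun h => hs.2 (h ▸ hw)

lemma rectIntegral_sum_inv_sub_add {H : ℂ → ℂ} (hab : a ≤ b) (hpq : p ≤ q)
    (hH : ContinuousOn H (rectBoundary a b p q)) (m : ℂ → ℂ) (Z : Finset ℂ)
    (hZ : ∀ ρ ∈ Z, ρ ∈ Ioo a b ×ℂ Ioo p q) :
    rectIntegral (fun s => ∑ ρ ∈ Z, m ρ * (s - ρ)⁻¹ + H s) a b p q =
      2 * π * I * ∑ ρ ∈ Z, m ρ + rectIntegral H a b p q := by
  classical
  have hcont : ∀ ρ ∈ Z, ContinuousOn (fun s => m ρ * (s - ρ)⁻¹) (rectBoundary a b p q) :=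
    fun ρ hρ => continuousOn_const.mul
      (ContinuousOn.inv₀ (by fun_prop) fun s hs => sub_ne_zero_of_mem_rectBoundary hs (hZ ρ hρ))
  induction Z using Finset.induction_on with
  | empty => simp
  | insert w Z hw ih =>
    rw [Finset.forall_mem_insert] at hZ hcont
    simp only [Finset.sum_insert hw, add_assoc]
    rw [rectIntegral_add hab hpq hcont.1 ((continuousOn_finsetSum _ hcont.2).fun_add hH),
      ih hZ.2 hcont.2, rectIntegral_const_mul, rectIntegral_inv_sub hZ.1]
    ring

lemma logDeriv_prod_sub_pow_mul {h : ℂ → ℂ} (n : ℂ → ℕ) {Z : Finset ℂ} {s : ℂ}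
    (hs : ∀ ρ ∈ Z, s - ρ ≠ 0) (hh0 : h s ≠ 0) (hh : DifferentiableAt ℂ h s) :
    logDeriv (fun s => (∏ ρ ∈ Z, (s - ρ) ^ n ρ) * h s) s =
      ∑ ρ ∈ Z, (n ρ : ℂ) * (s - ρ)⁻¹ + logDeriv h s := by
  have hpow : ∀ ρ ∈ Z, (s - ρ) ^ n ρ ≠ 0 := fun ρ hρ => pow_ne_zero _ (hs ρ hρ)
  rw [logDeriv_mul s (Finset.prod_ne_zero_iff.2 hpow) hh0 (by fun_prop) hh,
    logDeriv_prod (f := fun ρ s => (s - ρ) ^ n ρ) hpow fun ρ _ => by fun_prop]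
  refine congrArg (· + _) (Finset.sum_congr rfl fun ρ _ => ?_)
  rw [logDeriv_fun_pow (by fun_prop), logDeriv_apply, deriv_sub_const, deriv_id'', one_div]

lemma rectIntegral_logDeriv {F : ℂ → ℂ} (hF : Differentiable ℂ F) (hF0 : F ≠ 0) (hab : a ≤ b)
    (hpq : p ≤ q) {Z : Finset ℂ} (hZ : ∀ ρ ∈ Z, ρ ∈ Ioo a b ×ℂ Ioo p q)
    (hzero : ∀ s ∈ Icc a b ×ℂ Icc p q, F s = 0 → s ∈ Z) :
    rectIntegral (logDeriv F) a b p q = 2 * π * I * ∑ ρ ∈ Z, (analyticOrderNatAt F ρ : ℂ) := by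
  obtain ⟨h, hh, hFh, hhZ⟩ := exists_eq_prod_mul hF hF0 Z
  have hh0 : ∀ s ∈ Icc a b ×ℂ Icc p q, h s ≠ 0 := fun s hs h0 =>
    hhZ s (hzero s hs (by rw [hFh, h0, mul_zero])) h0
  have hlog : ∀ s ∈ Icc a b ×ℂ Icc p q, DifferentiableAt ℂ (logDeriv h) s := fun s hs =>
    ((hh.analyticAt s).deriv.differentiableAt).div (hh s) (hh0 s hs)
  have hEq : EqOn (logDeriv F)
      (fun s => ∑ ρ ∈ Z, (analyticOrderNatAt F ρ : ℂ) * (s - ρ)⁻¹ + logDeriv h s)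
      (rectBoundary a b p q) := fun s hs => by
    conv_lhs => rw [funext hFh]
    exact logDeriv_prod_sub_pow_mul _
      (fun ρ hρ => sub_ne_zero_of_mem_rectBoundary hs (hZ ρ hρ)) (hh0 s hs.1) (hh s)
  rw [rectIntegral_congr hab hpq hEq, rectIntegral_sum_inv_sub_add hab hpq
    (fun s hs => (hlog s hs.1).continuousAt.continuousWithinAt) _ Z hZ,
    rectIntegral_eq_zero hab hpq hlog, add_zero]

end Rectangle

/-! ### The number of zeros in terms of a continuous argument -/

section Counting

open ComplexConjugate

variable {s : ℂ} {c T : ℝ}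

lemma logDeriv_xi_one_sub (s : ℂ) : logDeriv xi (1 - s) = -logDeriv xi s := by
  have h : deriv (fun z => xi (1 - z)) s = deriv xi s := by simp_rw [xi_one_sub]
  rw [deriv_comp_const_sub] at h
  rw [logDeriv_apply, logDeriv_apply, xi_one_sub, ← h, neg_div, neg_neg]

lemma logDeriv_xi_conj (s : ℂ) : logDeriv xi (conj s) = conj (logDeriv xi s) := by
  have hxi : conj ∘ xi ∘ conj = xi := funext fun z => by simp [xi_conj]
  have h := congrFun (deriv_conj_conj (f := xi)) (conj s)
  rw [hxi, Function.comp_apply, Function.comp_apply, conj_conj] at h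
  rw [logDeriv_apply, logDeriv_apply, h, xi_conj, map_div₀]

lemma logDeriv_xi_one_sub_add_mul_I (x y : ℝ) :
    logDeriv xi ((1 - x : ℝ) + y * I) = -conj (logDeriv xi (x + y * I)) := by
  rw [← logDeriv_xi_conj, ← logDeriv_xi_one_sub]
  congr 1
  simp only [ofReal_sub, ofReal_one, map_add, map_mul, conj_ofReal, conj_I]
  ring

lemma continuous_logDeriv_xi_comp {γ : ℝ → ℂ} (hγ : Continuous γ) (h0 : ∀ x, xi (γ x) ≠ 0) :
    Continuous fun x => logDeriv xi (γ x) :=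
  ((differentiable_xi.contDiff.continuous_deriv (n := 1) le_rfl).comp hγ).div
    (differentiable_xi.continuous.comp hγ) h0

lemma continuous_logDeriv_xi_horizontal (hT : ∀ x : ℝ, xi (x + T * I) ≠ 0) :
    Continuous fun x : ℝ => logDeriv xi (x + T * I) :=
  continuous_logDeriv_xi_comp (by fun_prop) hT

lemma integral_logDeriv_xi_ofReal (c : ℝ) :
    ∫ x : ℝ in (1 - c)..c, logDeriv xi (x + (0 : ℝ) * I) = 0 := by
  have h := intervalIntegral.integral_comp_sub_left (a := 1 - c) (b := c)
    (fun x : ℝ => logDeriv xi (x + (0 : ℝ) * I)) 1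
  have hodd (x : ℝ) : logDeriv xi ((1 - x : ℝ) + (0 : ℝ) * I) =
      -logDeriv xi (x + (0 : ℝ) * I) := by
    simpa using logDeriv_xi_one_sub x
  simp_rw [hodd, sub_sub_cancel] at h
  rw [intervalIntegral.integral_neg] at h
  exact self_eq_neg.1 h.symm

lemma integral_logDeriv_xi_horizontal (hT : ∀ x : ℝ, xi (x + T * I) ≠ 0) :
    ∫ x : ℝ in (1 - c)..c, logDeriv xi (x + T * I) =
      (2 * (∫ x : ℝ in (1 / 2)..c, logDeriv xi (x + T * I)).im : ℝ) * I := by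
  have hcont := continuous_logDeriv_xi_horizontal hT
  have h := intervalIntegral.integral_comp_sub_left (a := 1 / 2) (b := c)
    (fun x : ℝ => logDeriv xi (x + T * I)) 1
  simp_rw [logDeriv_xi_one_sub_add_mul_I] at h
  rw [intervalIntegral.integral_neg, intervalIntegral.intervalIntegral_conj,
    show (1 - 1 / 2 : ℝ) = 1 / 2 by norm_num] at h
  rw [← intervalIntegral.integral_add_adjacent_intervals (b := 1 / 2)
    (hcont.intervalIntegrable _ _) (hcont.intervalIntegrable _ _), ← h, neg_add_eq_sub, sub_conj]

lemma integral_logDeriv_xi_vertical_one_sub (c T : ℝ) :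
    ∫ y : ℝ in 0..T, logDeriv xi ((1 - c : ℝ) + y * I) =
      -conj (∫ y : ℝ in 0..T, logDeriv xi (c + y * I)) := by
  simp_rw [logDeriv_xi_one_sub_add_mul_I]
  rw [intervalIntegral.integral_neg, intervalIntegral.intervalIntegral_conj]

lemma pi_mul_eq_of_rectIntegral_logDeriv_xi {n : ℝ} (hT : ∀ x : ℝ, xi (x + T * I) ≠ 0)
    (hn : rectIntegral (logDeriv xi) (1 - c) c 0 T = 2 * π * I * n) :
    π * n = (∫ y : ℝ in 0..T, logDeriv xi (c + y * I)).re -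
      (∫ x : ℝ in (1 / 2)..c, logDeriv xi (x + T * I)).im := by
  rw [rectIntegral, integral_logDeriv_xi_ofReal, integral_logDeriv_xi_horizontal hT,
    integral_logDeriv_xi_vertical_one_sub, mul_neg, sub_neg_eq_add, add_assoc, ← mul_add,
    add_conj] at hn
  refine mul_left_cancel₀ two_ne_zero (ofReal_injective (mul_right_cancel₀ I_ne_zero ?_))
  push_cast at hn ⊢
  linear_combination -hn

/-- The branch of the logarithm of `xi` on the half plane `1 < re s`. -/
noncomputable def logXi (s : ℂ) : ℂ :=
  logRotatedZeta s + (log s + log (s - 1) + π / 4 * (s - 1 / 2) * I)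

lemma xi_eq_mul_rotatedZeta (h0 : s ≠ 0) (h1 : s ≠ 1) :
    xi s = rotatedZeta s * exp (log s + log (s - 1) + π / 4 * (s - 1 / 2) * I) := by
  rw [rotatedZeta, Complex.exp_add, Complex.exp_add, exp_log h0, exp_log (sub_ne_zero.2 h1),
    Complex.exp_neg]
  field_simp [sub_ne_zero.2 h1]

lemma exp_logXi (hs : 1 < s.re) : exp (logXi s) = xi s := by
  have h1 : s ≠ 1 := fun h => hs.ne' (by rw [h, one_re])
  rw [logXi, Complex.exp_add, exp_logRotatedZeta hs,
    xi_eq_mul_rotatedZeta (ne_zero_of_re_pos (zero_lt_one.trans hs)) h1]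

lemma differentiableAt_logXi (hs : 1 < s.re) : DifferentiableAt ℂ logXi s := by
  have := differentiableAt_logRotatedZeta hs
  have : s ∈ slitPlane := Or.inl (zero_lt_one.trans hs)
  have : s - 1 ∈ slitPlane := Or.inl (by simpa using hs)
  unfold logXi
  fun_prop (disch := assumption)

lemma hasDerivAt_logXi (hs : 1 < s.re) : HasDerivAt logXi (logDeriv xi s) s := by
  have hd := (differentiableAt_logXi hs).hasDerivAt
  have hxi : (fun z => exp (logXi z)) =ᶠ[𝓝 s] xi := by
    filter_upwards [(isOpen_lt continuous_const continuous_re).mem_nhds hs] with z hz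
      using exp_logXi hz
  rwa [logDeriv_apply, ← hxi.deriv_eq, hd.cexp.deriv, exp_logXi hs,
    mul_div_cancel_left₀ _ (xi_ne_zero_of_one_le_re hs.le)]

lemma re_pi_div_four_mul_sub_half (s : ℂ) :
    ((π : ℂ) / 4 * (s - 1 / 2)).re = π / 4 * (s.re - 1 / 2) := by
  simp

lemma im_logXi (s : ℂ) : (logXi s).im =
    (logRotatedZeta s).im + arg s + arg (s - 1) + π / 4 * (s.re - 1 / 2) := by
  rw [logXi, add_im, add_im, add_im, log_im, log_im, mul_I_im, re_pi_div_four_mul_sub_half]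
  ring

lemma im_stirlingRemainder_ofReal {x : ℝ} (hx : 0 ≤ x) : (stirlingRemainder x).im = 0 := by
  have h (n : ℕ) : gudermannTerm (x + n) =
      (((x + n + 1 / 2) * (Real.log (x + n + 1) - Real.log (x + n)) - 1 : ℝ) : ℂ) := by
    rw [gudermannTerm]
    push_cast [ofReal_log (by positivity : 0 ≤ x + n), ofReal_log (by positivity : 0 ≤ x + n + 1)]
    ring
  rw [stirlingRemainder, tsum_congr h, ← ofReal_tsum, ofReal_im]

lemma im_logXi_ofReal (hc : 1 < c) : (logXi c).im = 0 := by
  have hstirling := im_stirlingRemainder_ofReal (x := c / 2) (by linarith)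
  rw [ofReal_div, ofReal_ofNat] at hstirling
  rw [im_logXi, im_logRotatedZeta (by rwa [ofReal_re]), hstirling, ← ofReal_logZetaReal hc,
    ← ofReal_one, ← ofReal_sub, arg_ofReal_of_nonneg (by linarith),
    arg_ofReal_of_nonneg (by linarith)]
  simp

lemma integral_logDeriv_xi_vertical (hc : 1 < c) (T : ℝ) :
    I * ∫ y : ℝ in 0..T, logDeriv xi (c + y * I) = logXi (c + T * I) - logXi c := by
  have hre (y : ℝ) : 1 < ((c : ℂ) + y * I).re := by simpa using hc
  have hcont := continuous_logDeriv_xi_comp (γ := fun y : ℝ => c + y * I) (by fun_prop)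
    fun y => xi_ne_zero_of_one_le_re (hre y).le
  have hderiv (y : ℝ) : HasDerivAt (fun y : ℝ => logXi (c + y * I))
      (I * logDeriv xi (c + y * I)) y := by
    have hline : HasDerivAt (fun y : ℝ => (c + y * I : ℂ)) I y := by
      simpa using hasDerivAt_vertical c 0 y
    rw [mul_comm I]
    exact HasDerivAt.comp y (hasDerivAt_logXi (hre y)) hline
  rw [← intervalIntegral.integral_const_mul]
  simpa using intervalIntegral.integral_eq_sub_of_hasDerivAt (fun y _ => hderiv y)
    ((continuous_const.mul hcont).intervalIntegrable 0 T)

/-- The continuation of `logXi` from `c + iT` along the line of imaginary part `T`. -/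
noncomputable def logXiLine (c T x : ℝ) : ℂ :=
  logXi (c + T * I) + ∫ u in c..x, logDeriv xi (u + T * I)

lemma hasDerivAt_logXiLine (hT : ∀ x : ℝ, xi (x + T * I) ≠ 0) (x : ℝ) :
    HasDerivAt (logXiLine c T) (logDeriv xi (x + T * I)) x :=
  have hcont := continuous_logDeriv_xi_horizontal hT
  (intervalIntegral.integral_hasDerivAt_right (hcont.intervalIntegrable _ _)
    (hcont.stronglyMeasurableAtFilter _ _) hcont.continuousAt).const_add _

lemma logXiLine_self (c T : ℝ) : logXiLine c T c = logXi (c + T * I) := by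
  rw [logXiLine, intervalIntegral.integral_same, add_zero]

lemma eq_exp_of_hasDerivAt_div {f f' w : ℝ → ℂ} (hf : ∀ x, HasDerivAt f (f' x) x)
    (hf0 : ∀ x, f x ≠ 0) (hw : ∀ x, HasDerivAt w (f' x / f x) x) (hc : f c = exp (w c)) (x : ℝ) :
    f x = exp (w x) := by
  have hd (x : ℝ) : HasDerivAt (fun x => f x * exp (-w x)) 0 x := by
    convert! (hf x).mul (hw x).neg.cexp using 1
    field_simp [hf0 x]
    ring
  have hconst := is_const_of_deriv_eq_zero (fun x => (hd x).differentiableAt)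
    (fun x => (hd x).deriv) x c
  simp only [hc, ← Complex.exp_add, add_neg_cancel, Complex.exp_zero] at hconst
  rwa [Complex.exp_neg, mul_inv_eq_one₀ (exp_ne_zero _)] at hconst

lemma xi_eq_exp_logXiLine (hc : 1 < c) (hT : ∀ x : ℝ, xi (x + T * I) ≠ 0) (x : ℝ) :
    xi (x + T * I) = exp (logXiLine c T x) := by
  have hline (x : ℝ) : HasDerivAt (fun x : ℝ => (x + T * I : ℂ)) 1 x := by
    simpa using hasDerivAt_horizontal T 0 x
  have hderiv (x : ℝ) : HasDerivAt (fun x : ℝ => xi (x + T * I)) (deriv xi (x + T * I)) x := by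
    simpa using! HasDerivAt.comp x (differentiable_xi _).hasDerivAt (hline x)
  refine eq_exp_of_hasDerivAt_div hderiv hT (hasDerivAt_logXiLine hT) (c := c) ?_ x
  rw [logXiLine_self, exp_logXi (by simpa using hc)]

lemma im_logXiLine_half (hc : 1 < c) (hT : ∀ x : ℝ, xi (x + T * I) ≠ 0) {n : ℝ}
    (hn : rectIntegral (logDeriv xi) (1 - c) c 0 T = 2 * π * I * n) :
    (logXiLine c T (1 / 2)).im = π * n := by
  have hvert := congrArg im (integral_logDeriv_xi_vertical hc T)
  rw [I_mul_im, sub_im, im_logXi_ofReal hc, sub_zero] at hvert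
  rw [pi_mul_eq_of_rectIntegral_logDeriv_xi hT hn, hvert, logXiLine,
    intervalIntegral.integral_symm, add_im, neg_im, sub_eq_add_neg]

lemma arg_add_arg_sub_one_of_re_eq_half (hs : s.re = 1 / 2) (ht : 0 < s.im) :
    arg s + arg (s - 1) = π := by
  have hreflect : s - 1 = -conj s := by
    apply Complex.ext
    · rw [sub_re, neg_re, conj_re, one_re, hs]
      norm_num
    · simp
  have harg : arg s ≠ π := fun h => ht.ne' (arg_eq_pi_iff.1 h).2
  rw [hreflect, arg_neg_eq_arg_add_pi_of_im_neg (by simpa using ht), arg_conj, if_neg harg]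
  ring

lemma exists_log_rotatedZeta (hc : 1 < c) (hT0 : 0 < T) (hT : ∀ x : ℝ, xi (x + T * I) ≠ 0)
    {n : ℝ} (hn : rectIntegral (logDeriv xi) (1 - c) c 0 T = 2 * π * I * n) :
    ∃ l : ℝ → ℂ, Continuous l ∧ (∀ x : ℝ, rotatedZeta (x + T * I) = exp (l x)) ∧
      l c = logRotatedZeta (c + T * I) ∧ (l (1 / 2)).im = π * (n - 1) := by
  have him (x : ℝ) : 0 < (x + T * I : ℂ).im := by simpa using hT0
  have hslit (x : ℝ) : (x + T * I : ℂ) ∈ slitPlane := Or.inr (him x).ne'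
  have hslit' (x : ℝ) : (x + T * I - 1 : ℂ) ∈ slitPlane := Or.inr (by simpa using hT0.ne')
  have hcont : Continuous (logXiLine c T) :=
    continuous_iff_continuousAt.2 fun x => (hasDerivAt_logXiLine hT x).continuousAt
  refine ⟨fun x => logXiLine c T x - (log (x + T * I) + log (x + T * I - 1) +
    π / 4 * (x + T * I - 1 / 2) * I), ?_, fun x => ?_, ?_, ?_⟩
  · exact hcont.sub (((Continuous.clog (by fun_prop) hslit).add
      (Continuous.clog (by fun_prop) hslit')).add (by fun_prop))
  · rw [Complex.exp_sub, ← xi_eq_exp_logXiLine hc hT,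
      xi_eq_mul_rotatedZeta (ne_zero_of_im_pos (him x)) (ne_one_of_im_pos (him x)),
      mul_div_cancel_right₀ _ (exp_ne_zero _)]
  · simp only [logXiLine_self, logXi, add_sub_cancel_right]
  · have harg := arg_add_arg_sub_one_of_re_eq_half (s := (1 / 2 : ℝ) + T * I) (by simp) (him _)
    rw [sub_im, add_im, add_im, log_im, log_im, harg, mul_I_im, re_pi_div_four_mul_sub_half,
      im_logXiLine_half hc hT hn, add_re, re_ofReal_mul, I_re, ofReal_re]
    ring

end Counting

/-! ### Bounding the argument variation -/

section ArgumentVariation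

open ComplexConjugate

variable {T : ℝ} {z : ℂ}

lemma analyticOnNhd_rotatedZeta : AnalyticOnNhd ℂ rotatedZeta {s : ℂ | 0 < s.im} :=
  DifferentiableOn.analyticOnNhd (fun _ hs => (differentiableAt_rotatedZeta
    (ne_zero_of_im_pos hs) (ne_one_of_im_pos hs)).differentiableWithinAt)
    (isOpen_lt continuous_const continuous_im)

lemma rotatedZeta_one_sub_add_mul_I (z : ℂ) (T : ℝ) :
    rotatedZeta (1 - z + T * I) = conj (rotatedZeta (conj z + T * I)) := by
  rw [← rotatedZeta_one_sub_conj]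
  congr 1
  simp only [map_add, map_mul, conj_conj, conj_ofReal, conj_I]
  ring

lemma abs_re_sub_le_and_abs_im_le {c R : ℝ} (hz : ‖z - c‖ ≤ R) : |z.re - c| ≤ R ∧ |z.im| ≤ R := by
  have hre := (abs_re_le_norm _).trans hz
  have him := (abs_im_le_norm _).trans hz
  rw [sub_re, ofReal_re] at hre
  rw [sub_im, ofReal_im, sub_zero] at him
  exact ⟨hre, him⟩

/-- The logarithm of the bound for `rotatedZeta` on the disc of radius `13/10` around
`23/20 + iT`, in terms of `z = s - iT`. -/
noncomputable def logRotatedZetaBound (T : ℝ) (z : ℂ) : ℝ :=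
  9 / 4 + Real.log 2 / 2 + 3 / 40 * Real.log ((T + 34 / 25) / (2 * π)) +
    max 0 ((z.re - (23 / 20 : ℝ)) / (13 / 10)) *
      (13 / 20 * Real.log ((T + 34 / 25) / (2 * π)) - 3 / 2)

lemma norm_add_mul_I_le (hT : 12 ≤ T) (hz : ‖z - (23 / 20 : ℝ)‖ ≤ 13 / 10) :
    ‖z + T * I‖ ≤ T + 34 / 25 := by
  have hcenter : ‖((23 / 20 : ℝ) : ℂ) + T * I‖ ≤ T + 3 / 50 := by
    rw [norm_add_mul_I]
    exact Real.sqrt_le_iff.2 ⟨by linarith, by nlinarith⟩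
  calc ‖z + T * I‖ = ‖(z - (23 / 20 : ℝ)) + ((23 / 20 : ℝ) + T * I)‖ := by
        rw [← add_assoc, sub_add_cancel]
    _ ≤ 13 / 10 + (T + 3 / 50) := (norm_add_le _ _).trans (add_le_add hz hcenter)
    _ = T + 34 / 25 := by ring

lemma norm_rotatedZeta_le_exp_logRotatedZetaBound (hT : 12 ≤ T)
    (hz : ‖z - (23 / 20 : ℝ)‖ ≤ 13 / 10) :
    ‖rotatedZeta (z + T * I)‖ ≤ Real.exp (logRotatedZetaBound T z) := by
  obtain ⟨hre, him⟩ := abs_re_sub_le_and_abs_im_le hz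
  rw [abs_le] at hre him
  have hsre : (z + T * I).re = z.re := by simp
  have hsim : (z + T * I).im = z.im + T := by simp
  have h := norm_rotatedZeta_le_exp (s := z + T * I) (by linarith) (by linarith) (by linarith)
    (norm_add_mul_I_le hT hz)
  rwa [hsre] at h

lemma log_div_two_pi_nonneg {x : ℝ} (hx : 8 ≤ x) : 0 ≤ Real.log (x / (2 * π)) :=
  Real.log_nonneg <| by
    rw [le_div_iff₀ (by positivity)]
    linarith [Real.pi_lt_four]

lemma logRotatedZetaBound_nonneg (hT : 12 ≤ T) (hz : ‖z - (23 / 20 : ℝ)‖ ≤ 13 / 10) :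
    0 ≤ logRotatedZetaBound T z := by
  have hlog : 0 ≤ Real.log ((T + 34 / 25) / (2 * π)) := log_div_two_pi_nonneg (by linarith)
  have hmax0 : 0 ≤ max 0 ((z.re - (23 / 20 : ℝ)) / (13 / 10)) := le_max_left _ _
  have hmax1 : max 0 ((z.re - (23 / 20 : ℝ)) / (13 / 10)) ≤ 1 := max_le zero_le_one <| by
    rw [div_le_one (by norm_num)]
    exact (le_abs_self _).trans (abs_re_sub_le_and_abs_im_le hz).1
  have : 0 < Real.log 2 := Real.log_pos one_lt_two
  unfold logRotatedZetaBound
  linarith [mul_nonneg hmax0 hlog]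

lemma circleAverage_logRotatedZetaBound (T : ℝ) :
    Real.circleAverage (logRotatedZetaBound T) (23 / 20 : ℝ) (13 / 10) =
      9 / 4 + Real.log 2 / 2 + 3 / 40 * Real.log ((T + 34 / 25) / (2 * π)) +
        (13 / 20 * Real.log ((T + 34 / 25) / (2 * π)) - 3 / 2) / π :=
  circleAverage_add_mul_max_re _ _ ((23 / 20 : ℝ) : ℂ) (by norm_num)

lemma abs_im_logRotatedZeta_sub_le_of_rectIntegral {n : ℝ} (hT : 12 ≤ T)
    (hne : ∀ x : ℝ, xi (x + T * I) ≠ 0)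
    (hn : rectIntegral (logDeriv xi) (1 - 23 / 20) (23 / 20) 0 T = 2 * π * I * n) :
    |(logRotatedZeta ((23 / 20 : ℝ) + T * I)).im - π * (n - 1)| / π * (2 * Real.log 2) +
      (logRotatedZeta ((23 / 20 : ℝ) + T * I)).re ≤
    9 / 4 + Real.log 2 / 2 + 3 / 40 * Real.log ((T + 34 / 25) / (2 * π)) +
      (13 / 20 * Real.log ((T + 34 / 25) / (2 * π)) - 3 / 2) / π := by
  obtain ⟨l, hlc, hl, hl_right, hl_half⟩ :=
    exists_log_rotatedZeta (by norm_num) (by linarith) hne hn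
  have hR : 2 * (23 / 20 : ℝ) - 1 = 13 / 10 := by norm_num
  have him {z : ℂ} (hz : z ∈ Metric.closedBall ((23 / 20 : ℝ) : ℂ) (13 / 10)) : |z.im| ≤ 13 / 10 :=
    (abs_re_sub_le_and_abs_im_le (mem_closedBall_iff_norm.1 hz)).2
  have hconj {z : ℂ} (hz : z ∈ Metric.sphere ((23 / 20 : ℝ) : ℂ) (13 / 10)) :
      ‖conj z - (23 / 20 : ℝ)‖ ≤ 13 / 10 := by
    rw [← conj_ofReal, ← map_sub, norm_conj]
    exact (mem_sphere_iff_norm.1 hz).le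
  have backlund := abs_im_sub_im_le_circleAverage (c := 23 / 20) (l := l)
    (g := fun z => rotatedZeta (z + T * I)) (B := logRotatedZetaBound T) (by norm_num)
  rw [hR, circleAverage_logRotatedZetaBound, hl_right, hl_half] at backlund
  refine backlund ?_ ?_ (fun x => ?_) hlc.continuousOn (fun x _ => hl x) ?_ ?_ ?_ ?_
  · refine analyticOnNhd_rotatedZeta.comp (f := fun z => z + T * I)
      (fun z _ => by fun_prop) fun z hz => ?_
    have := abs_le.1 (him hz)
    simp only [mem_ofPred_eq, add_im, mul_im, ofReal_re, ofReal_im, I_re, I_im]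
    linarith
  · refine analyticOnNhd_rotatedZeta.comp (f := fun z => 1 - z + T * I)
      (fun z _ => by fun_prop) fun z hz => ?_
    have := abs_le.1 (him hz)
    simp only [mem_ofPred_eq, add_im, sub_im, one_im, mul_im, ofReal_re, ofReal_im, I_re, I_im]
    linarith
  · simpa only [conj_ofReal] using rotatedZeta_one_sub_add_mul_I x T
  · unfold logRotatedZetaBound
    exact ContinuousOn.circleIntegrable (by norm_num) (by fun_prop)
  · exact fun z hz => logRotatedZetaBound_nonneg hT (mem_sphere_iff_norm.1 hz).le
  · exact fun z hz => norm_rotatedZeta_le_exp_logRotatedZetaBound hT (mem_sphere_iff_norm.1 hz).le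
  · intro z hz
    rw [rotatedZeta_one_sub_add_mul_I, norm_conj]
    simpa only [logRotatedZetaBound, conj_re] using
      norm_rotatedZeta_le_exp_logRotatedZetaBound hT (hconj hz)

end ArgumentVariation

/-! ### Numerical estimates -/

section Numerics

variable {T n : ℝ}

lemma le_inv_pi : 0.3183 ≤ π⁻¹ := by
  rw [le_inv_comm₀ (by norm_num) Real.pi_pos]
  exact Real.pi_lt_d4.le.trans (by norm_num)

lemma inv_pi_le : π⁻¹ ≤ 0.3184 := by
  rw [inv_le_comm₀ Real.pi_pos (by norm_num)]
  exact le_trans (by norm_num) Real.pi_gt_d4.le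

lemma log_div_two_pi_le (hT : 0 < T) : Real.log (T / (2 * π)) ≤ Real.log T - 2 * Real.log 2 := by
  rw [Real.log_div hT.ne' (by positivity), Real.log_mul two_ne_zero Real.pi_ne_zero]
  linarith [Real.log_le_log zero_lt_two Real.two_le_pi]

lemma log_add_div_two_pi_le (hT : 12 ≤ T) :
    Real.log ((T + 34 / 25) / (2 * π)) ≤ Real.log (T / (2 * π)) + 34 / 25 / 12 := by
  have hT0 : 0 < T := by linarith
  rw [Real.log_div (by positivity) (by positivity), Real.log_div hT0.ne' (by positivity)]
  have hshift := log_add_le_log_add_div hT0 (show (0 : ℝ) ≤ 34 / 25 by norm_num)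
  have : 34 / 25 / T ≤ 34 / 25 / 12 := by gcongr
  linarith

lemma neg_re_logRotatedZeta_le_of_twelve_le (hT : 12 ≤ T) :
    -(logRotatedZeta ((23 / 20 : ℝ) + T * I)).re ≤
      -(3 / 40 * Real.log (T / (2 * π))) - Real.log 2 / 2 + 1 / 25 +
        |(logZeta ((23 / 20 : ℝ) + T * I)).re| := by
  have hre : ((23 / 20 : ℝ) + T * I : ℂ).re = 23 / 20 := by simp
  have him : ((23 / 20 : ℝ) + T * I : ℂ).im = T := by simp
  have h := neg_re_logRotatedZeta_le (s := (23 / 20 : ℝ) + T * I) (by rw [hre]; norm_num)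
    (by rw [him]; linarith)
  rw [hre, him] at h
  have hsq : (23 / 20) ^ 3 / (2 * T ^ 2) ≤ (23 / 20) ^ 3 / (2 * 12 ^ 2) := by gcongr
  have hpi : π / (8 * T) ≤ 3.1416 / (8 * 12) := by
    gcongr
    exact Real.pi_lt_d4.le
  linarith [neg_abs_le (logZeta ((23 / 20 : ℝ) + T * I)).re]

lemma inv_pi_mul_abs_im_logRotatedZeta_sub_le (hT : 12 ≤ T) :
    π⁻¹ * |(logRotatedZeta ((23 / 20 : ℝ) + T * I)).im -
      T / 2 * (Real.log (T / (2 * π)) - 1) + π / 8 - (logZeta ((23 / 20 : ℝ) + T * I)).im| ≤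
        1 / 40 := by
  have hre : ((23 / 20 : ℝ) + T * I : ℂ).re = 23 / 20 := by simp
  have him : ((23 / 20 : ℝ) + T * I : ℂ).im = T := by simp
  have h := abs_im_logRotatedZeta_sub_le (s := (23 / 20 : ℝ) + T * I) (by rw [hre]; norm_num)
    (by rw [him]; linarith)
  rw [hre, him] at h
  have herror : ((23 / 20) ^ 2 / 4 + 23 / 20 * (23 / 20 - 1) / 2 + π / 8) / T ≤
      ((23 / 20) ^ 2 / 4 + 23 / 20 * (23 / 20 - 1) / 2 + 3.1416 / 8) / 12 := by
    gcongr
    exact Real.pi_lt_d4.le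
  exact (mul_le_mul inv_pi_le (h.trans herror) (abs_nonneg _) (by norm_num)).trans (by norm_num)

lemma abs_im_logRotatedZeta_sub_div_pi_le (hT : 12 ≤ T) (hne : ∀ x : ℝ, xi (x + T * I) ≠ 0)
    (hn : rectIntegral (logDeriv xi) (1 - 23 / 20) (23 / 20) 0 T = 2 * π * I * n) :
    |(logRotatedZeta ((23 / 20 : ℝ) + T * I)).im - π * (n - 1)| / π ≤
      0.15 * Real.log (T / (2 * π)) + 4 / 3 +
        0.7214 * |(logZeta ((23 / 20 : ℝ) + T * I)).re| := by
  have hvar := abs_im_logRotatedZeta_sub_le_of_rectIntegral hT hne hn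
  have hre := neg_re_logRotatedZeta_le_of_twelve_le hT
  have hlog := log_add_div_two_pi_le hT
  have hlog0 := log_div_two_pi_nonneg (x := T) (by linarith)
  set D := |(logRotatedZeta ((23 / 20 : ℝ) + T * I)).im - π * (n - 1)| / π
  have hD : D ≤ 0.7214 * (D * (2 * Real.log 2)) := by
    have : 0 ≤ D := by positivity
    nlinarith [Real.log_two_gt_d9]
  have hinv : (13 / 20 * Real.log ((T + 34 / 25) / (2 * π)) - 3 / 2) / π ≤
      13 / 20 * (0.3184 * (Real.log (T / (2 * π)) + 34 / 25 / 12)) - 3 / 2 * 0.3183 := by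
    have : π⁻¹ * Real.log ((T + 34 / 25) / (2 * π)) ≤
        0.3184 * (Real.log (T / (2 * π)) + 34 / 25 / 12) :=
      (mul_le_mul_of_nonneg_left hlog (by positivity)).trans
        (mul_le_mul_of_nonneg_right inv_pi_le (by linarith))
    rw [div_eq_inv_mul, mul_sub, mul_left_comm]
    linarith [le_inv_pi]
  linarith

lemma mul_abs_re_add_mul_abs_im_le {w : ℂ} (hw : ‖w‖ ≤ 2) :
    0.7214 * |w.re| + 0.3184 * |w.im| ≤ 1.6 := by
  have hsq : |w.re| ^ 2 + |w.im| ^ 2 ≤ 4 := by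
    rw [sq_abs, sq_abs, ← sq_norm_sub_sq_re, add_sub_cancel]
    nlinarith [norm_nonneg w]
  -- Cauchy–Schwarz, with `0.7214 ^ 2 + 0.3184 ^ 2 ≤ 0.8 ^ 2`
  refine (abs_le.1 (abs_le_of_sq_le_sq ?_ (by norm_num))).2
  nlinarith [sq_nonneg (0.7214 * |w.im| - 0.3184 * |w.re|)]

lemma abs_sub_main_term_le (n T Y q : ℝ) :
    |n - T / (2 * π) * (Real.log (T / (2 * π)) - 1) - 7 / 8| ≤
      π⁻¹ * |Y - T / 2 * (Real.log (T / (2 * π)) - 1) + π / 8 - q| + π⁻¹ * |q| +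
        |Y - π * (n - 1)| / π := by
  have hsplit : n - T / (2 * π) * (Real.log (T / (2 * π)) - 1) - 7 / 8 =
      π⁻¹ * (Y - T / 2 * (Real.log (T / (2 * π)) - 1) + π / 8 - q) + π⁻¹ * q -
        π⁻¹ * (Y - π * (n - 1)) := by
    field_simp
    ring
  have habs (x : ℝ) : π⁻¹ * |x| = |π⁻¹ * x| := by
    rw [abs_mul, abs_of_pos (inv_pos.2 Real.pi_pos)]
  rw [hsplit, div_eq_inv_mul |_|, habs, habs, habs]
  exact (abs_sub _ _).trans (add_le_add_left (abs_add_le _ _) _)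

lemma abs_sub_main_term_le_of_rectIntegral (hT : 12 ≤ T) (hne : ∀ x : ℝ, xi (x + T * I) ≠ 0)
    (hn : rectIntegral (logDeriv xi) (1 - 23 / 20) (23 / 20) 0 T = 2 * π * I * n) :
    |n - T / (2 * π) * (Real.log (T / (2 * π)) - 1) - 7 / 8| ≤ 0.15 * Real.log T + 2.8 := by
  have hnorm : ‖logZeta ((23 / 20 : ℝ) + T * I)‖ ≤ 2 := by
    have hre : ((23 / 20 : ℝ) + T * I : ℂ).re = 23 / 20 := by simp
    have h := norm_logZeta_le (s := (23 / 20 : ℝ) + T * I) (by rw [hre]; norm_num)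
    rw [hre] at h
    exact h.trans logZetaReal_le_two
  have hstirling := inv_pi_mul_abs_im_logRotatedZeta_sub_le hT
  have hvariation := abs_im_logRotatedZeta_sub_div_pi_le hT hne hn
  have heuler := mul_abs_re_add_mul_abs_im_le hnorm
  have hlog := log_div_two_pi_le (T := T) (by linarith)
  have htriangle := abs_sub_main_term_le n T (logRotatedZeta ((23 / 20 : ℝ) + T * I)).im
    (logZeta ((23 / 20 : ℝ) + T * I)).im
  have hinv := mul_le_mul_of_nonneg_right inv_pi_le
    (abs_nonneg (logZeta ((23 / 20 : ℝ) + T * I)).im)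
  linarith [Real.log_two_gt_d9]

end Numerics

/-! ### Counting zeros up to a given height -/

section ZeroCount

variable {x y T : ℝ} {ρ : ℂ}

/-- The zeros of the zeta function in the critical strip with imaginary part in `(0, T]`. -/
def zerosUpTo (T : ℝ) : Set ℂ :=
  {ρ | riemannZeta ρ = 0 ∧ 0 < ρ.re ∧ ρ.re < 1 ∧ 0 < ρ.im ∧ ρ.im ≤ T}

lemma finite_zerosUpTo (T : ℝ) : (zerosUpTo T).Finite := by
  refine ((isCompact_Icc (a := (0 : ℝ)) (b := 1)).reProdIm
    (isCompact_Icc (a := 0) (b := T))).inter_riemannZetaZeros_finite.subset ?_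
  rintro ρ ⟨hρ, hre0, hre1, him0, himT⟩
  exact ⟨mem_reProdIm.2 ⟨⟨hre0.le, hre1.le⟩, him0.le, himT⟩, hρ⟩

lemma zerosUpTo_mono : Monotone zerosUpTo :=
  fun _ _ hTU _ ⟨hρ, hre0, hre1, him0, himT⟩ => ⟨hρ, hre0, hre1, him0, himT.trans hTU⟩

lemma eventually_notMem_of_finite {S : Set ℝ} (hS : S.Finite) (x : ℝ) : ∀ᶠ T in 𝓝[>] x,
    ∀ y ∈ S, y ∉ Ioc x T := by
  refine (eventually_all_finite hS).2 fun y _ => ?_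
  rcases le_or_gt y x with hy | hy
  · exact Eventually.of_forall fun T h => hy.not_gt h.1
  · filter_upwards [nhdsWithin_le_nhds (Iio_mem_nhds hy)] with T hT h
    exact h.2.not_gt hT

lemma eventually_zerosUpTo_eq (hx : 0 ≤ x) : ∀ᶠ T in 𝓝[>] x,
    zerosUpTo T = zerosUpTo x ∧ ∀ u : ℝ, xi (u + T * I) ≠ 0 := by
  filter_upwards [eventually_notMem_of_finite ((finite_zerosUpTo (x + 1)).image im) x,
    nhdsWithin_le_nhds (Iio_mem_nhds (lt_add_one x)), self_mem_nhdsWithin] with T hgap hT1 hxT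
  refine ⟨(zerosUpTo_mono hxT.le).antisymm' fun ρ hρ => ?_, fun u hu => ?_⟩
  · obtain ⟨hρ0, hre0, hre1, him0, himT⟩ := hρ
    refine ⟨hρ0, hre0, hre1, him0, le_of_not_gt fun him => ?_⟩
    exact hgap _ (mem_image_of_mem im ⟨hρ0, hre0, hre1, him0, himT.trans hT1.le⟩) ⟨him, himT⟩
  · obtain ⟨hζ, hre0, hre1⟩ := xi_eq_zero_iff.1 hu
    have him : ((u : ℂ) + T * I).im = T := by simp
    refine hgap T ⟨u + T * I, ⟨hζ, hre0, hre1, ?_, ?_⟩, him⟩ ⟨hxT, le_rfl⟩ <;> rw [him]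
    exacts [hx.trans_lt hxT, hT1.le]

lemma analyticAt_Gammaℝ (hρ : 0 < ρ.re) : AnalyticAt ℂ Gammaℝ ρ := by
  simpa only [Pi.inv_def, inv_inv] using
    (differentiable_Gammaℝ_inv.analyticAt ρ).inv (inv_ne_zero (Gammaℝ_ne_zero_of_re_pos hρ))

lemma analyticOrderAt_xi (h0 : 0 < ρ.re) (h1 : ρ.re < 1) :
    analyticOrderAt xi ρ = analyticOrderAt riemannZeta ρ := by
  have hΓ := analyticAt_Gammaℝ h0
  have hfactor : xi =ᶠ[𝓝 ρ] (fun s => s * (s - 1) * Gammaℝ s) * riemannZeta := by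
    filter_upwards [(isOpen_lt continuous_const continuous_re).mem_nhds h0,
      (isOpen_lt continuous_re continuous_const).mem_nhds h1] with s hs0 hs1
    exact xi_eq_mul_riemannZeta hs0 (ne_one_of_re_lt_one hs1)
  have horder : analyticOrderAt (fun s => s * (s - 1) * Gammaℝ s) ρ = 0 :=
    analyticOrderAt_eq_zero.2 <| Or.inr <| mul_ne_zero
      (mul_ne_zero (ne_zero_of_re_pos h0) (sub_ne_zero.2 (ne_one_of_re_lt_one h1)))
      (Gammaℝ_ne_zero_of_re_pos h0)
  rw [analyticOrderAt_congr hfactor, analyticOrderAt_mul (by fun_prop)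
    (analyticOn_riemannZeta _ (ne_one_of_re_lt_one h1)),
    horder, zero_add]

/-- The number `N(T)` of zeros of the zeta function in the critical strip with imaginary part in
`(0, T]`, counted with multiplicity. -/
noncomputable def zeroCount (T : ℝ) : ℕ :=
  ∑ ρ ∈ (finite_zerosUpTo T).toFinset, analyticOrderNatAt riemannZeta ρ

lemma tsum_analyticOrderNatAt_zerosUpTo (T : ℝ) :
    ∑' ρ : zerosUpTo T, (analyticOrderNatAt riemannZeta ρ : ℝ) = zeroCount T := by
  rw [zeroCount, Nat.cast_sum, ← Finset.tsum_subtype', (finite_zerosUpTo T).coe_toFinset]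

lemma zeroCount_mono : Monotone zeroCount := fun _ _ hTU =>
  Finset.sum_le_sum_of_subset (Set.Finite.toFinset_subset_toFinset.2 (zerosUpTo_mono hTU))

lemma zeroCount_congr (h : zerosUpTo x = zerosUpTo y) : zeroCount x = zeroCount y := by
  simp only [zeroCount, h]

lemma rectIntegral_logDeriv_xi {c : ℝ} (hc : 1 < c) (hT0 : 0 ≤ T)
    (hT : ∀ u : ℝ, xi (u + T * I) ≠ 0) :
    rectIntegral (logDeriv xi) (1 - c) c 0 T = 2 * π * I * zeroCount T := by
  have hne_top {s : ℂ} (hs : xi s = 0) : s.im ≠ T := fun h => hT s.re <| by rwa [← h, re_add_im]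
  have hne_bot {s : ℂ} (hs : xi s = 0) : s.im ≠ 0 := fun h => xi_ofReal_ne_zero s.re <| by
    rwa [← ((ext rfl (by simp [h]) : s = s.re))]
  have hxi0 : xi ≠ 0 := fun h => one_ne_zero (xi_one.symm.trans (congrFun h 1))
  rw [rectIntegral_logDeriv differentiable_xi hxi0 (by linarith) hT0
    (Z := (finite_zerosUpTo T).toFinset), zeroCount, Nat.cast_sum]
  · congr 1
    refine Finset.sum_congr rfl fun ρ hρ => ?_
    obtain ⟨-, hre0, hre1, -, -⟩ := (finite_zerosUpTo T).mem_toFinset.1 hρ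
    rw [analyticOrderNatAt, analyticOrderNatAt, analyticOrderAt_xi hre0 hre1]
  · intro ρ hρ
    obtain ⟨hζ, hre0, hre1, him0, himT⟩ := (finite_zerosUpTo T).mem_toFinset.1 hρ
    exact ⟨⟨by linarith, by linarith⟩, him0,
      himT.lt_of_ne (hne_top (xi_eq_zero_iff.2 ⟨hζ, hre0, hre1⟩))⟩
  · intro s hs hz
    obtain ⟨hζ, hre0, hre1⟩ := xi_eq_zero_iff.1 hz
    exact (finite_zerosUpTo T).mem_toFinset.2
      ⟨hζ, hre0, hre1, hs.2.1.lt_of_ne' (hne_bot hz), hs.2.2⟩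

lemma abs_zeroCount_sub_le_of_twelve_le (hx : 12 ≤ x) :
    |zeroCount x - x / (2 * π) * (Real.log (x / (2 * π)) - 1) - 7 / 8| ≤
      0.15 * Real.log x + 2.8 := by
  have hx0 : 0 < x := by linarith
  have hx_ne : x ≠ 0 := hx0.ne'
  have hx_div_ne : x / (2 * π) ≠ 0 := by positivity
  have hright : ∀ᶠ T in 𝓝[>] x,
      |zeroCount x - T / (2 * π) * (Real.log (T / (2 * π)) - 1) - 7 / 8| ≤
        0.15 * Real.log T + 2.8 := by
    filter_upwards [eventually_zerosUpTo_eq hx0.le, self_mem_nhdsWithin] with T ⟨heq, hT⟩ hxT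
    have hxT : x < T := hxT
    rw [← zeroCount_congr heq]
    refine abs_sub_main_term_le_of_rectIntegral (by linarith) hT ?_
    exact_mod_cast rectIntegral_logDeriv_xi (by norm_num) (by linarith) hT
  have hleft : ContinuousAt
      (fun T => |zeroCount x - T / (2 * π) * (Real.log (T / (2 * π)) - 1) - 7 / 8|) x := by
    fun_prop (disch := assumption)
  have hbound : ContinuousAt (fun T => 0.15 * Real.log T + 2.8) x := by
    fun_prop (disch := assumption)
  exact le_of_tendsto_of_tendsto (hleft.tendsto.mono_left nhdsWithin_le_nhds)
    (hbound.tendsto.mono_left nhdsWithin_le_nhds) hright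

lemma log_div_two_pi_le_log_two (hx0 : 0 < x) (hx : x ≤ 12) :
    Real.log (x / (2 * π)) ≤ Real.log 2 := by
  refine Real.log_le_log (by positivity) ?_
  rw [div_le_iff₀ (by positivity)]
  linarith [Real.pi_gt_three]

lemma zeroCount_twelve_le : zeroCount 12 ≤ 3 := by
  have hmain := (abs_le.1 (abs_zeroCount_sub_le_of_twelve_le le_rfl)).2
  have hlog : Real.log 12 ≤ 4 * Real.log 2 := by
    rw [← Real.log_rpow two_pos]
    exact Real.log_le_log (by norm_num) (by norm_num)
  have hterm : 12 / (2 * π) * (Real.log (12 / (2 * π)) - 1) ≤ -0.5 := by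
    have hlog := log_div_two_pi_le_log_two (x := 12) (by norm_num) le_rfl
    have : (1.9 : ℝ) ≤ 12 / (2 * π) := by
      rw [le_div_iff₀ (by positivity)]
      linarith [Real.pi_lt_d2]
    nlinarith [Real.log_two_lt_d9]
  have hlt : (zeroCount 12 : ℝ) < (4 : ℕ) := by
    push_cast
    linarith [Real.log_two_lt_d9]
  exact Nat.le_of_lt_succ (Nat.cast_lt.1 hlt)

lemma neg_one_le_mul_log_sub_one (hx : 0 < x) : -1 ≤ x * (Real.log x - 1) := by
  have h := mul_le_mul_of_nonneg_left (Real.one_sub_inv_le_log_of_pos hx) hx.le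
  rw [mul_sub, mul_one, mul_inv_cancel₀ hx.ne'] at h
  linarith

lemma abs_zeroCount_sub_le_of_le_twelve (hx0 : 0 < x) (hx : x ≤ 12) :
    |zeroCount x - x / (2 * π) * (Real.log (x / (2 * π)) - 1) - 7 / 8| ≤ 25 / 8 := by
  have hcount : (zeroCount x : ℝ) ≤ 3 :=
    Nat.cast_le_ofNat.2 ((zeroCount_mono hx).trans zeroCount_twelve_le)
  have : (0 : ℝ) ≤ zeroCount x := Nat.cast_nonneg _
  have hlower := neg_one_le_mul_log_sub_one (show 0 < x / (2 * π) by positivity)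
  have hupper : x / (2 * π) * (Real.log (x / (2 * π)) - 1) ≤ 0 :=
    mul_nonpos_of_nonneg_of_nonpos (by positivity)
      (by linarith [log_div_two_pi_le_log_two hx0 hx, Real.log_two_lt_d9])
  rw [abs_le]
  constructor <;> linarith

lemma abs_zeroCount_sub_le (hx : Real.exp 1 ≤ x) :
    |zeroCount x - x / (2 * π) * (Real.log (x / (2 * π)) - 1) - 7 / 8| ≤
      0.15 * Real.log x + 3 := by
  have hx0 : 0 < x := (Real.exp_pos 1).trans_le hx
  have hlog : 1 ≤ Real.log x := (Real.le_log_iff_exp_le hx0).2 hx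
  rcases le_total 12 x with h12 | h12
  · linarith [abs_zeroCount_sub_le_of_twelve_le h12]
  · linarith [abs_zeroCount_sub_le_of_le_twelve hx0 h12]

lemma log_div_two_pi_mul_exp_one (hx : 0 < x) :
    Real.log (x / (2 * π * Real.exp 1)) = Real.log (x / (2 * π)) - 1 := by
  rw [← div_div, Real.log_div (by positivity) (by positivity), Real.log_exp]

lemma analyticOrderNatAt_riemannZeta_eq {m : ℕ} (hρ : ρ ≠ 1)
    (h : ∃ g : ℂ → ℂ, AnalyticAt ℂ g ρ ∧ g ρ ≠ 0 ∧
      ∀ᶠ z in 𝓝 ρ, riemannZeta z = (z - ρ) ^ m * g z) :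
    analyticOrderNatAt riemannZeta ρ = m := by
  rw [analyticOrderNatAt,
    (analyticOn_riemannZeta ρ hρ).analyticOrderAt_eq_natCast.2 h, ENat.toNat_natCast]

end ZeroCount

end ZetaZeroCount

open ZetaZeroCount

/-- The explicit zero-counting estimate |N(x) − (x/2π)log(x/2πe) − 7/8| ≤ 0.15 log x + 3,
where N(x) counts the zeros ρ = β + iγ of ζ with 0 < β < 1 and 0 < γ ≤ x, with
multiplicity. -/
theorem zero_counting_estimate
    (m : ℂ → ℕ)
    (hm : ∀ ρ : ℂ, 0 < ρ.re → ρ.re < 1 → riemannZeta ρ = 0 →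
      ∃ g : ℂ → ℂ, AnalyticAt ℂ g ρ ∧ g ρ ≠ 0 ∧
        ∀ᶠ z in nhds ρ, riemannZeta z = (z - ρ) ^ m ρ * g z)
    (N : ℝ → ℝ)
    (hN : ∀ x : ℝ, N x =
      ∑' ρ : {ρ : ℂ // riemannZeta ρ = 0 ∧ 0 < ρ.re ∧ ρ.re < 1 ∧ 0 < ρ.im ∧ ρ.im ≤ x},
        (m ρ : ℝ)) :
    ∀ x : ℝ, Real.exp 1 ≤ x →
      |N x - x / (2 * π) * Real.log (x / (2 * π * Real.exp 1)) - 7 / 8|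
        ≤ 0.15 * Real.log x + 3 := by
  intro x hx
  have hcount : N x = zeroCount x := by
    rw [hN, ← tsum_analyticOrderNatAt_zerosUpTo]
    refine tsum_congr fun ⟨ρ, hρ, hre0, hre1, _, _⟩ => ?_
    rw [analyticOrderNatAt_riemannZeta_eq (ne_one_of_re_lt_one hre1) (hm ρ hre0 hre1 hρ)]
  rw [hcount, log_div_two_pi_mul_exp_one ((Real.exp_pos 1).trans_le hx)]
  exact abs_zeroCount_sub_le hx
end

section
/- Let H : ℝ → ℝ be the continuous function H(x) = cos(2πx)/(1 − 16x²) (extended continuously to x = ±1/4), and let F(x) = H(x/0.9). Then (F(0) − 4·∫_{|t|≥1} |F̂(t)| dt)/‖F‖₁ > 25/22. -/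
open MeasureTheory Filter
open scoped FourierTransform Real

/-!
`H(x) = (π/4) (sinc (2πx + π/2) + sinc (2πx - π/2))` is the Fourier transform of
`(π/4) cos (πt/2)` truncated to `[-1, 1]`, so the tail integral of `F̂` is elementary. For the
`L¹`-norm, the two sinc terms are both nonnegative between the points `±π/2` and have opposite
signs beyond them, where `|sinc (y + π/2) + sinc (y - π/2)| = |sinc (y - π/2)| - |sinc (y + π/2)|`:
the integral telescopes, and `‖H‖₁ = (1/2) ∫₀^π sinc`. For `F(x) = H(x/a)` with `0 < a ≤ 1` this
makes the quotient explicit, and at `a = 0.9` a Taylor bound on `∫₀^π sinc` suffices.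
-/

section IntervalIntegral

variable {E : Type*} [NormedAddCommGroup E] [NormedSpace ℝ E]

lemma intervalIntegral_neg_self_of_even {f : ℝ → E} (hf : Function.Even f) {r : ℝ}
    (hint : IntervalIntegrable f volume 0 r) :
    ∫ x in (-r)..r, f x = (2 : ℝ) • ∫ x in (0 : ℝ)..r, f x := by
  have hint_neg : IntervalIntegrable f volume (-r) 0 := by
    simpa only [hf _, neg_zero] using ((IntervalIntegrable.iff_comp_neg).1 hint).symm
  have hneg : ∫ x in (-r)..0, f x = ∫ x in (0 : ℝ)..r, f x := by
    simpa only [hf _, neg_zero] using (intervalIntegral.integral_comp_neg (a := 0) (b := r) f).symm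
  rw [← intervalIntegral.integral_add_adjacent_intervals hint_neg hint, hneg, two_smul]

lemma tendsto_intervalIntegral_add_right {f : ℝ → E} (hf : Tendsto f atTop (nhds 0)) (c : ℝ) :
    Tendsto (fun r => ∫ y in r..(r + c), f y) atTop (nhds 0) := by
  rw [Metric.tendsto_atTop]
  intro ε hε
  obtain ⟨R, hR⟩ := Metric.tendsto_atTop.1 hf (ε / (|c| + 1)) (by positivity)
  refine ⟨R + |c|, fun r hr => ?_⟩
  rw [dist_zero_right]
  calc ‖∫ y in r..(r + c), f y‖ ≤ ε / (|c| + 1) * |r + c - r| := by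
        refine intervalIntegral.norm_integral_le_of_norm_le_const fun y hy => ?_
        have hRy : R ≤ min r (r + c) :=
          le_min (by linarith [abs_nonneg c]) (by linarith [neg_abs_le c])
        simpa using (hR y (hRy.trans hy.1.le)).le
    _ = ε * (|c| / (|c| + 1)) := by
        rw [add_sub_cancel_left]
        ring
    _ < ε := mul_lt_of_lt_one_right hε ((div_lt_one (by positivity)).2 (lt_add_one _))

lemma integral_eq_intervalIntegral_of_eq_zero {f : ℝ → E} {r : ℝ} (hr : 0 ≤ r)
    (hf : ∀ t, r ≤ |t| → f t = 0) :
    ∫ t, f t = ∫ t in (-r)..r, f t := by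
  rw [intervalIntegral.integral_of_le (by linarith),
    setIntegral_eq_integral_of_forall_compl_eq_zero fun t ht => hf t ?_]
  by_contra! hlt
  exact ht ⟨(abs_lt.1 hlt).1, (abs_lt.1 hlt).2.le⟩

lemma setIntegral_setOf_le_abs {f : ℝ → E} (hf : Integrable f) {r : ℝ} (hr : 0 ≤ r) :
    ∫ t in {t : ℝ | r ≤ |t|}, f t = (∫ t, f t) - ∫ t in (-r)..r, f t := by
  have hcompl : {t : ℝ | r ≤ |t|} = (Set.Ioo (-r) r)ᶜ := by
    ext t
    rw [Set.mem_compl_iff, Set.mem_Ioo, ← abs_lt, not_lt, Set.mem_ofPred_eq]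
  rw [hcompl, setIntegral_compl measurableSet_Ioo hf,
    intervalIntegral.integral_of_le (by linarith), integral_Ioc_eq_integral_Ioo]

end IntervalIntegral

section TaylorBounds

lemma nonneg_of_hasDerivAt_nonneg {f f' : ℝ → ℝ} {a x : ℝ}
    (hf : ∀ y, a ≤ y → HasDerivAt f (f' y) y) (ha : 0 ≤ f a) (hf' : ∀ y, a ≤ y → 0 ≤ f' y)
    (hx : a ≤ x) : 0 ≤ f x := by
  have hmono : MonotoneOn f (Set.Ici a) :=
    monotoneOn_of_hasDerivWithinAt_nonneg (convex_Ici a)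
      (fun y hy => (hf y hy).continuousAt.continuousWithinAt)
      (fun y hy => (hf y (interior_subset hy)).hasDerivWithinAt)
      fun y hy => hf' y (interior_subset hy)
  exact ha.trans (hmono Set.self_mem_Ici hx hx)

/-- The sum of the first `n` nonzero terms of the Taylor series of `cos` at `0`. -/
noncomputable def cosTaylor (n : ℕ) (x : ℝ) : ℝ :=
  ∑ k ∈ Finset.range n, (-1) ^ k * x ^ (2 * k) / (2 * k).factorial

/-- The sum of the first `n` nonzero terms of the Taylor series of `sin` at `0`. -/
noncomputable def sinTaylor (n : ℕ) (x : ℝ) : ℝ :=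
  ∑ k ∈ Finset.range n, (-1) ^ k * x ^ (2 * k + 1) / (2 * k + 1).factorial

/-- The sum of the first `n` nonzero terms of the Taylor series of `sinc` at `0`. -/
noncomputable def sincTaylor (n : ℕ) (x : ℝ) : ℝ :=
  ∑ k ∈ Finset.range n, (-1) ^ k * x ^ (2 * k) / (2 * k + 1).factorial

lemma cosTaylor_zero_right (n : ℕ) : cosTaylor (n + 1) 0 = 1 := by
  simp [cosTaylor, Finset.sum_range_succ']

lemma sinTaylor_zero_right (n : ℕ) : sinTaylor n 0 = 0 := by
  simp [sinTaylor]

lemma sinTaylor_eq_mul_sincTaylor (n : ℕ) (x : ℝ) : sinTaylor n x = x * sincTaylor n x := by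
  rw [sinTaylor, sincTaylor, Finset.mul_sum]
  exact Finset.sum_congr rfl fun k _ => by ring

@[fun_prop]
lemma continuous_sincTaylor (n : ℕ) : Continuous (sincTaylor n) := by
  unfold sincTaylor
  fun_prop

lemma hasDerivAt_sinTaylor (n : ℕ) (x : ℝ) : HasDerivAt (sinTaylor n) (cosTaylor n x) x := by
  refine HasDerivAt.fun_sum fun k _ => ?_
  refine (((hasDerivAt_pow (2 * k + 1) x).const_mul ((-1) ^ k)).div_const _).congr_deriv ?_
  rw [Nat.factorial_succ, Nat.add_sub_cancel]
  push_cast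
  field_simp

lemma hasDerivAt_cosTaylor_succ (n : ℕ) (x : ℝ) :
    HasDerivAt (cosTaylor (n + 1)) (-sinTaylor n x) x := by
  have hterm (k : ℕ) : HasDerivAt
      (fun y : ℝ => (-1) ^ (k + 1) * y ^ (2 * (k + 1)) / (2 * (k + 1)).factorial)
      (-((-1) ^ k * x ^ (2 * k + 1) / (2 * k + 1).factorial)) x := by
    refine (((hasDerivAt_pow (2 * (k + 1)) x).const_mul _).div_const _).congr_deriv ?_
    rw [show 2 * (k + 1) = 2 * k + 1 + 1 by ring, Nat.factorial_succ (2 * k + 1),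
      Nat.add_sub_cancel, pow_succ (-1 : ℝ) k]
    push_cast
    field_simp
  have hsum := (HasDerivAt.fun_sum fun k (_ : k ∈ Finset.range n) => hterm k).add_const
    ((-1 : ℝ) ^ 0 * x ^ (2 * 0) / (2 * 0).factorial)
  rw [Finset.sum_neg_distrib] at hsum
  exact hsum.congr_of_eventuallyEq (.of_forall fun y => Finset.sum_range_succ' _ n)

lemma neg_one_pow_mul_sin_sub_sinTaylor_nonneg_of_cos {n : ℕ}
    (hcos : ∀ y, 0 ≤ y → 0 ≤ (-1) ^ n * (Real.cos y - cosTaylor n y)) {x : ℝ} (hx : 0 ≤ x) :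
    0 ≤ (-1) ^ n * (Real.sin x - sinTaylor n x) :=
  nonneg_of_hasDerivAt_nonneg (f := fun y => (-1) ^ n * (Real.sin y - sinTaylor n y))
    (fun y _ => ((Real.hasDerivAt_sin y).sub (hasDerivAt_sinTaylor n y)).const_mul _)
    (by simp [sinTaylor_zero_right]) hcos hx

lemma neg_one_pow_mul_cos_sub_cosTaylor_nonneg_of_sin {n : ℕ}
    (hsin : ∀ y, 0 ≤ y → 0 ≤ (-1) ^ n * (Real.sin y - sinTaylor n y)) {x : ℝ} (hx : 0 ≤ x) :
    0 ≤ (-1) ^ (n + 1) * (Real.cos x - cosTaylor (n + 1) x) := by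
  refine nonneg_of_hasDerivAt_nonneg
    (f := fun y => (-1) ^ (n + 1) * (Real.cos y - cosTaylor (n + 1) y))
    (fun y _ => ((Real.hasDerivAt_cos y).sub (hasDerivAt_cosTaylor_succ n y)).const_mul _)
    (by simp [cosTaylor_zero_right]) (fun y hy => ?_) hx
  calc 0 ≤ (-1) ^ n * (Real.sin y - sinTaylor n y) := hsin y hy
    _ = (-1) ^ (n + 1) * (-Real.sin y - -sinTaylor n y) := by ring

lemma neg_one_pow_mul_sin_sub_sinTaylor_nonneg (n : ℕ) {x : ℝ} (hx : 0 ≤ x) :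
    0 ≤ (-1) ^ (n + 1) * (Real.sin x - sinTaylor (n + 1) x) := by
  induction n generalizing x with
  | zero => simpa [sinTaylor] using Real.sin_le hx
  | succ n ih =>
    exact neg_one_pow_mul_sin_sub_sinTaylor_nonneg_of_cos
      (fun _ hy => neg_one_pow_mul_cos_sub_cosTaylor_nonneg_of_sin (fun _ hz => ih hz) hy) hx

lemma neg_one_pow_mul_sinc_sub_sincTaylor_nonneg (n : ℕ) {x : ℝ} (hx : 0 ≤ x) :
    0 ≤ (-1) ^ (n + 1) * (Real.sinc x - sincTaylor (n + 1) x) := by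
  rcases hx.eq_or_lt with rfl | hpos
  · simp [sincTaylor, Finset.sum_range_succ']
  · have hsin := neg_one_pow_mul_sin_sub_sinTaylor_nonneg n hx
    rw [sinTaylor_eq_mul_sincTaylor] at hsin
    rw [Real.sinc_of_ne_zero hpos.ne']
    refine nonneg_of_mul_nonneg_right (hsin.trans_eq ?_) hpos
    field_simp

lemma integral_sincTaylor (n : ℕ) (x : ℝ) :
    ∫ y in (0 : ℝ)..x, sincTaylor n y = ∑ k ∈ Finset.range n,
      (-1) ^ k * x ^ (2 * k + 1) / ((2 * k + 1) * (2 * k + 1).factorial) := by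
  simp only [sincTaylor]
  rw [intervalIntegral.integral_finsetSum fun k _ =>
    Continuous.intervalIntegrable (by fun_prop) _ _]
  refine Finset.sum_congr rfl fun k _ => ?_
  rw [intervalIntegral.integral_div, intervalIntegral.integral_const_mul, integral_pow]
  push_cast
  field_simp
  simp

lemma integral_sinc_zero_pi_pos : 0 < ∫ y in (0 : ℝ)..π, Real.sinc y := by
  refine intervalIntegral.intervalIntegral_pos_of_pos_on
    (Real.continuous_sinc.intervalIntegrable _ _) (fun y hy => ?_) Real.pi_pos
  rw [Real.sinc_of_ne_zero hy.1.ne']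
  exact div_pos (Real.sin_pos_of_mem_Ioo hy) hy.1

lemma integral_sinc_zero_pi_lt : ∫ y in (0 : ℝ)..π, Real.sinc y < 1.854 := by
  have hpi_gt := Real.pi_gt_d4
  have hpi_lt := Real.pi_lt_d4
  calc ∫ y in (0 : ℝ)..π, Real.sinc y
      ≤ ∫ y in (0 : ℝ)..π, sincTaylor 5 y := by
        refine intervalIntegral.integral_mono_on Real.pi_pos.le
          (Real.continuous_sinc.intervalIntegrable _ _)
          ((continuous_sincTaylor 5).intervalIntegrable _ _) fun y hy => ?_
        have hsign := neg_one_pow_mul_sinc_sub_sincTaylor_nonneg 4 hy.1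
        rw [Odd.neg_one_pow (by decide)] at hsign
        linarith
    _ = π - π ^ 3 / 18 + π ^ 5 / 600 - π ^ 7 / 35280 + π ^ 9 / 3265920 := by
        rw [integral_sincTaylor]
        norm_num [Finset.sum_range_succ, Nat.factorial]
        ring
    _ ≤ 3.1416 - 3.1415 ^ 3 / 18 + 3.1416 ^ 5 / 600 - 3.1415 ^ 7 / 35280 +
          3.1416 ^ 9 / 3265920 := by
        gcongr
    _ < 1.854 := by norm_num

end TaylorBounds

section SincPair

lemma tendsto_sinc_atTop : Tendsto Real.sinc atTop (nhds 0) := by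
  refine squeeze_zero_norm' ?_ tendsto_inv_atTop_zero
  filter_upwards [eventually_gt_atTop 0] with y hy
  rw [Real.sinc_of_ne_zero hy.ne', norm_div, Real.norm_of_nonneg hy.le, ← one_div]
  exact div_le_div_of_nonneg_right (Real.abs_sin_le_one y) hy.le

lemma sinc_nonneg_of_abs_le_pi {y : ℝ} (hy : |y| ≤ π) : 0 ≤ Real.sinc y := by
  rcases eq_or_ne y 0 with rfl | hne
  · simp
  · have habs : Real.sinc y = Real.sinc |y| := by
      rcases abs_choice y with h | h <;> simp [h]
    rw [habs, Real.sinc_of_ne_zero (abs_ne_zero.2 hne)]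
    exact div_nonneg (Real.sin_nonneg_of_nonneg_of_le_pi (abs_nonneg y) hy) (abs_nonneg y)

/-- The sum of the two translates of `sinc` by `±π/2`: up to scaling, the Fourier transform of one
arch of the cosine. -/
noncomputable def sincPair (y : ℝ) : ℝ := Real.sinc (y + π / 2) + Real.sinc (y - π / 2)

@[fun_prop]
lemma continuous_sincPair : Continuous sincPair := by
  unfold sincPair
  fun_prop

lemma even_sincPair : Function.Even sincPair := fun y => by
  rw [sincPair, sincPair, ← Real.sinc_neg, ← Real.sinc_neg (-y - π / 2), add_comm]
  ring_nf

lemma sincPair_eq_div {y : ℝ} (hp : y + π / 2 ≠ 0) (hm : y - π / 2 ≠ 0) :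
    sincPair y = -(π * Real.cos y) / ((y + π / 2) * (y - π / 2)) := by
  rw [sincPair, Real.sinc_of_ne_zero hp, Real.sinc_of_ne_zero hm, Real.sin_add_pi_div_two,
    Real.sin_sub_pi_div_two, div_add_div _ _ hp hm]
  ring

lemma abs_sincPair_of_abs_le {y : ℝ} (hy : |y| ≤ π / 2) : |sincPair y| = sincPair y := by
  obtain ⟨hl, hr⟩ := abs_le.1 hy
  exact abs_of_nonneg (add_nonneg
    (sinc_nonneg_of_abs_le_pi (abs_le.2 ⟨by linarith, by linarith⟩))
    (sinc_nonneg_of_abs_le_pi (abs_le.2 ⟨by linarith, by linarith⟩)))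

lemma abs_sincPair_of_pi_div_two_le {y : ℝ} (hy : π / 2 ≤ y) :
    |sincPair y| = |Real.sinc (y - π / 2)| - |Real.sinc (y + π / 2)| := by
  have hpi := Real.pi_pos
  rcases hy.eq_or_lt with rfl | hlt
  · simp [sincPair, Real.sinc_of_ne_zero hpi.ne']
  · have hm : 0 < y - π / 2 := by linarith
    have hp : 0 < y + π / 2 := by linarith
    rw [sincPair_eq_div hp.ne' hm.ne', Real.sinc_of_ne_zero hm.ne', Real.sinc_of_ne_zero hp.ne',
      Real.sin_sub_pi_div_two, Real.sin_add_pi_div_two]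
    simp only [abs_div, abs_neg, abs_mul, abs_of_pos hm, abs_of_pos hp, abs_of_pos hpi]
    rw [div_sub_div _ _ hm.ne' hp.ne']
    ring

lemma integral_abs_sincPair_zero_pi_div_two :
    ∫ y in (0 : ℝ)..(π / 2), |sincPair y| = ∫ y in (0 : ℝ)..π, Real.sinc y := by
  have hint (a b : ℝ) : IntervalIntegrable Real.sinc volume a b :=
    Real.continuous_sinc.intervalIntegrable _ _
  have hreflect : ∫ y in (-(π / 2))..0, Real.sinc y = ∫ y in (0 : ℝ)..(π / 2), Real.sinc y := by
    simpa using (intervalIntegral.integral_comp_neg (a := 0) (b := π / 2) Real.sinc).symm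
  calc ∫ y in (0 : ℝ)..(π / 2), |sincPair y|
      = ∫ y in (0 : ℝ)..(π / 2), (Real.sinc (y + π / 2) + Real.sinc (y - π / 2)) := by
        refine intervalIntegral.integral_congr fun y hy => abs_sincPair_of_abs_le ?_
        rw [Set.uIcc_of_le (by positivity)] at hy
        rw [abs_of_nonneg hy.1]
        exact hy.2
    _ = (∫ y in (π / 2)..π, Real.sinc y) + ∫ y in (-(π / 2))..0, Real.sinc y := by
        rw [intervalIntegral.integral_add (Continuous.intervalIntegrable (by fun_prop) _ _)
          (Continuous.intervalIntegrable (by fun_prop) _ _),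
          intervalIntegral.integral_comp_add_right, intervalIntegral.integral_comp_sub_right,
          zero_add, add_halves, zero_sub, sub_self]
    _ = ∫ y in (0 : ℝ)..π, Real.sinc y := by
        rw [hreflect, add_comm,
          intervalIntegral.integral_add_adjacent_intervals (hint _ _) (hint _ _)]

lemma integral_abs_sincPair_pi_div_two_add {r : ℝ} (hr : 0 ≤ r) :
    ∫ y in (π / 2)..(r + π / 2), |sincPair y| =
      (∫ y in (0 : ℝ)..π, Real.sinc y) - ∫ y in r..(r + π), |Real.sinc y| := by
  have hint (a b : ℝ) : IntervalIntegrable (fun y => |Real.sinc y|) volume a b :=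
    Real.continuous_sinc.abs.intervalIntegrable _ _
  have habs : ∫ y in (0 : ℝ)..π, |Real.sinc y| = ∫ y in (0 : ℝ)..π, Real.sinc y := by
    refine intervalIntegral.integral_congr fun y hy => abs_of_nonneg (sinc_nonneg_of_abs_le_pi ?_)
    rw [Set.uIcc_of_le Real.pi_pos.le] at hy
    rw [abs_of_nonneg hy.1]
    exact hy.2
  calc ∫ y in (π / 2)..(r + π / 2), |sincPair y|
      = ∫ y in (π / 2)..(r + π / 2), (|Real.sinc (y - π / 2)| - |Real.sinc (y + π / 2)|) := by
        refine intervalIntegral.integral_congr fun y hy => abs_sincPair_of_pi_div_two_le ?_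
        rw [Set.uIcc_of_le (by linarith)] at hy
        exact hy.1
    _ = (∫ y in (0 : ℝ)..r, |Real.sinc y|) - ∫ y in π..(r + π), |Real.sinc y| := by
        rw [intervalIntegral.integral_sub (Continuous.intervalIntegrable (by fun_prop) _ _)
          (Continuous.intervalIntegrable (by fun_prop) _ _),
          intervalIntegral.integral_comp_sub_right (fun y => |Real.sinc y|),
          intervalIntegral.integral_comp_add_right (fun y => |Real.sinc y|),
          sub_self, add_sub_cancel_right, add_halves, add_assoc, add_halves]
    _ = (∫ y in (0 : ℝ)..π, |Real.sinc y|) - ∫ y in r..(r + π), |Real.sinc y| :=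
        intervalIntegral.integral_interval_sub_interval_comm (hint _ _) (hint _ _) (hint _ _)
    _ = (∫ y in (0 : ℝ)..π, Real.sinc y) - ∫ y in r..(r + π), |Real.sinc y| := by rw [habs]

lemma tendsto_integral_abs_sincPair :
    Tendsto (fun r => ∫ y in (-(r + π / 2))..(r + π / 2), |sincPair y|) atTop
      (nhds (4 * ∫ y in (0 : ℝ)..π, Real.sinc y)) := by
  have hint (a b : ℝ) : IntervalIntegrable (fun y => |sincPair y|) volume a b :=
    continuous_sincPair.abs.intervalIntegrable _ _
  have hsinc : Tendsto (fun y => |Real.sinc y|) atTop (nhds 0) := by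
    simpa using tendsto_sinc_atTop.abs
  have hwindow := tendsto_intervalIntegral_add_right hsinc π
  have hlim := (hwindow.const_mul 2).const_sub (4 * ∫ y in (0 : ℝ)..π, Real.sinc y)
  rw [mul_zero, sub_zero] at hlim
  refine hlim.congr' ?_
  filter_upwards [eventually_ge_atTop 0] with r hr
  have heven : Function.Even fun y => |sincPair y| := fun y =>
    congrArg abs (even_sincPair y)
  rw [intervalIntegral_neg_self_of_even heven (hint _ _), smul_eq_mul,
    ← intervalIntegral.integral_add_adjacent_intervals (hint 0 (π / 2)) (hint _ _),
    integral_abs_sincPair_zero_pi_div_two, integral_abs_sincPair_pi_div_two_add hr]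
  ring

lemma integrable_sincPair : Integrable sincPair :=
  integrable_of_intervalIntegral_norm_tendsto _
    (fun _ => continuous_sincPair.integrableOn_Icc.mono_set Set.Ioc_subset_Icc_self)
    (tendsto_neg_atTop_atBot.comp (tendsto_atTop_add_const_right _ _ tendsto_id))
    (tendsto_atTop_add_const_right _ _ tendsto_id) tendsto_integral_abs_sincPair

lemma integral_abs_sincPair : ∫ y, |sincPair y| = 4 * ∫ y in (0 : ℝ)..π, Real.sinc y :=
  tendsto_nhds_unique
    (intervalIntegral_tendsto_integral integrable_sincPair.abs
      (tendsto_neg_atTop_atBot.comp (tendsto_atTop_add_const_right _ _ tendsto_id))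
      (tendsto_atTop_add_const_right _ _ tendsto_id)) tendsto_integral_abs_sincPair

end SincPair

section FourierTransform

lemma fourier_comp_div {E : Type*} [NormedAddCommGroup E] [NormedSpace ℂ E] (f : ℝ → E) {a : ℝ}
    (ha : a ≠ 0) (t : ℝ) : 𝓕 (fun x => f (x / a)) t = |a| • 𝓕 f (a * t) := by
  rw [Real.fourier_real_eq, Real.fourier_real_eq,
    ← Measure.integral_comp_div (fun y => Real.fourierChar (-(y * (a * t))) • f y) a]
  refine integral_congr_ae (.of_forall fun x => ?_)
  simp only
  rw [← mul_assoc, div_mul_cancel₀ x ha]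

lemma integral_exp_mul_I_neg_one_one (c : ℝ) :
    ∫ t in (-1 : ℝ)..1, Complex.exp ((c * t : ℝ) * Complex.I) = 2 * Real.sinc c := by
  rcases eq_or_ne c 0 with rfl | hc
  · norm_num
  · have hc' : (c : ℂ) ≠ 0 := Complex.ofReal_ne_zero.2 hc
    rw [intervalIntegral.integral_comp_mul_left
      (fun s : ℝ => Complex.exp ((s : ℂ) * Complex.I)) hc, mul_neg, mul_one,
      integral_exp_mul_I_eq_sinc, Complex.real_smul, Complex.ofReal_inv]
    field_simp

lemma integral_exp_mul_I_mul_cos_neg_one_one (y b : ℝ) :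
    ∫ t in (-1 : ℝ)..1, Complex.exp ((y * t : ℝ) * Complex.I) * (Real.cos (b * t) : ℂ) =
      Real.sinc (y + b) + Real.sinc (y - b) := by
  have hexp (c : ℝ) : IntervalIntegrable
      (fun t : ℝ => Complex.exp ((c * t : ℝ) * Complex.I)) volume (-1) 1 :=
    Continuous.intervalIntegrable (by fun_prop) _ _
  calc ∫ t in (-1 : ℝ)..1, Complex.exp ((y * t : ℝ) * Complex.I) * (Real.cos (b * t) : ℂ)
      = ∫ t in (-1 : ℝ)..1, (1 / 2 : ℂ) * (Complex.exp (((y + b) * t : ℝ) * Complex.I) +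
          Complex.exp (((y - b) * t : ℝ) * Complex.I)) := by
        refine intervalIntegral.integral_congr fun t _ => ?_
        rw [Complex.ofReal_cos, Complex.cos, add_mul, sub_mul, sub_eq_add_neg]
        simp only [Complex.ofReal_add, Complex.ofReal_mul, Complex.ofReal_neg, add_mul,
          neg_mul, Complex.exp_add]
        ring
    _ = Real.sinc (y + b) + Real.sinc (y - b) := by
        rw [intervalIntegral.integral_const_mul, intervalIntegral.integral_add (hexp _) (hexp _),
          integral_exp_mul_I_neg_one_one, integral_exp_mul_I_neg_one_one]
        ring

/-- The function `(π/4) cos (πt/2)` on `[-1, 1]`, extended by zero: the Fourier transform of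
`cosKernel`. Truncating the argument rather than the function makes continuity evident. -/
noncomputable def cosArch (t : ℝ) : ℝ := π / 4 * Real.cos (π / 2 * min |t| 1)

/-- The function `H` of the theorem, i.e. the continuous extension of `cos (2πx) / (1 - 16x²)`.
Writing it with `sinc` absorbs the removable singularities at `±1/4`. -/
noncomputable def cosKernel (x : ℝ) : ℝ := π / 4 * sincPair (2 * π * x)

@[fun_prop]
lemma continuous_cosArch : Continuous cosArch := by
  unfold cosArch
  fun_prop

lemma even_cosArch : Function.Even cosArch := fun t => by simp only [cosArch, abs_neg]

lemma cosArch_of_abs_le_one {t : ℝ} (ht : |t| ≤ 1) : cosArch t = π / 4 * Real.cos (π / 2 * t) := by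
  rw [cosArch, min_eq_left ht, ← Real.cos_abs (π / 2 * t), abs_mul,
    abs_of_pos Real.pi_div_two_pos]

lemma cosArch_of_one_le_abs {t : ℝ} (ht : 1 ≤ |t|) : cosArch t = 0 := by
  rw [cosArch, min_eq_right ht, mul_one, Real.cos_pi_div_two, mul_zero]

lemma cosArch_nonneg (t : ℝ) : 0 ≤ cosArch t := by
  have hpi := Real.pi_pos
  have hmin : 0 ≤ min |t| 1 := by positivity
  refine mul_nonneg (by positivity) (Real.cos_nonneg_of_mem_Icc ⟨?_, ?_⟩)
  · nlinarith
  · exact mul_le_of_le_one_right (by positivity) (min_le_right _ _)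

lemma integrable_cosArch : Integrable cosArch := by
  refine continuous_cosArch.integrable_of_hasCompactSupport
    (HasCompactSupport.intro (isCompact_Icc (a := -1) (b := 1)) fun t ht =>
      cosArch_of_one_le_abs ?_)
  rw [Set.mem_Icc, ← abs_le] at ht
  exact (not_le.1 ht).le

lemma intervalIntegral_cosArch {r : ℝ} (h0 : 0 ≤ r) (h1 : r ≤ 1) :
    ∫ t in (-r)..r, cosArch t = Real.sin (π / 2 * r) := by
  calc ∫ t in (-r)..r, cosArch t = ∫ t in (-r)..r, π / 4 * Real.cos (π / 2 * t) := by
        refine intervalIntegral.integral_congr fun t ht => cosArch_of_abs_le_one ?_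
        rw [Set.uIcc_of_le (by linarith), Set.mem_Icc, ← abs_le] at ht
        exact ht.trans h1
    _ = Real.sin (π / 2 * r) := by
        rw [intervalIntegral.integral_const_mul, intervalIntegral.integral_comp_mul_left Real.cos
          Real.pi_div_two_pos.ne', integral_cos, mul_neg, Real.sin_neg, smul_eq_mul]
        field_simp
        ring

lemma integral_cosArch : ∫ t, cosArch t = 1 := by
  rw [integral_eq_intervalIntegral_of_eq_zero zero_le_one fun _ => cosArch_of_one_le_abs,
    intervalIntegral_cosArch zero_le_one le_rfl, mul_one, Real.sin_pi_div_two]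

lemma setIntegral_one_le_abs_cosArch_mul {a : ℝ} (h0 : 0 < a) (h1 : a ≤ 1) :
    ∫ t in {t : ℝ | 1 ≤ |t|}, a * cosArch (a * t) = 1 - Real.sin (π / 2 * a) := by
  have htotal : ∫ t, a * cosArch (a * t) = 1 := by
    rw [integral_const_mul, Measure.integral_comp_mul_left, integral_cosArch, smul_eq_mul,
      abs_of_pos (inv_pos.2 h0), mul_one, mul_inv_cancel₀ h0.ne']
  have hcenter : ∫ t in (-1 : ℝ)..1, a * cosArch (a * t) = Real.sin (π / 2 * a) := by
    rw [intervalIntegral.integral_const_mul, intervalIntegral.mul_integral_comp_mul_left,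
      mul_neg, mul_one, intervalIntegral_cosArch h0.le h1]
  rw [setIntegral_setOf_le_abs ((integrable_cosArch.comp_mul_left' h0.ne').const_mul a) zero_le_one,
    htotal, hcenter]

@[fun_prop]
lemma continuous_cosKernel : Continuous cosKernel := by
  unfold cosKernel
  fun_prop

lemma integrable_cosKernel : Integrable cosKernel :=
  (integrable_sincPair.comp_mul_left' (by positivity)).const_mul _

lemma cosKernel_eq_div {x : ℝ} (hx : 1 - 16 * x ^ 2 ≠ 0) :
    cosKernel x = Real.cos (2 * π * x) / (1 - 16 * x ^ 2) := by
  have hpi := Real.pi_pos.ne'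
  have hfactor : (2 * π * x + π / 2) * (2 * π * x - π / 2) = -(π ^ 2 / 4 * (1 - 16 * x ^ 2)) := by
    ring
  have hprod : (2 * π * x + π / 2) * (2 * π * x - π / 2) ≠ 0 := by
    rw [hfactor]
    exact neg_ne_zero.2 (mul_ne_zero (by positivity) hx)
  rw [cosKernel, sincPair_eq_div (left_ne_zero_of_mul hprod) (right_ne_zero_of_mul hprod), hfactor]
  field_simp

lemma cosKernel_zero : cosKernel 0 = 1 := by
  simpa using cosKernel_eq_div (x := 0) (by norm_num)

lemma integral_abs_cosKernel : ∫ x, |cosKernel x| = (∫ y in (0 : ℝ)..π, Real.sinc y) / 2 := by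
  simp only [cosKernel, abs_mul]
  rw [integral_const_mul, Measure.integral_comp_mul_left (fun y => |sincPair y|),
    integral_abs_sincPair, abs_of_pos (by positivity : 0 < (2 * π)⁻¹),
    abs_of_pos (by positivity : 0 < π / 4), smul_eq_mul]
  field_simp

lemma eq_cosKernel_of_continuous {H : ℝ → ℝ} (hHc : Continuous H)
    (hHval : ∀ x : ℝ, 1 - 16 * x ^ 2 ≠ 0 → H x = Real.cos (2 * π * x) / (1 - 16 * x ^ 2)) :
    H = cosKernel := by
  have hdense : Dense ({1 / 4, -1 / 4}ᶜ : Set ℝ) := (Set.toFinite _).countable.dense_compl ℝ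
  refine hHc.ext_on hdense continuous_cosKernel fun x hx => ?_
  simp only [Set.mem_compl_iff, Set.mem_insert_iff, Set.mem_singleton_iff, not_or] at hx
  have hne : 1 - 16 * x ^ 2 ≠ 0 := by
    rw [show 1 - 16 * x ^ 2 = -16 * ((x - 1 / 4) * (x - -1 / 4)) by ring]
    exact mul_ne_zero (by norm_num) (mul_ne_zero (sub_ne_zero.2 hx.1) (sub_ne_zero.2 hx.2))
  rw [hHval x hne, cosKernel_eq_div hne]

lemma fourier_cosArch (x : ℝ) : 𝓕 (fun t => (cosArch t : ℂ)) x = cosKernel x := by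
  rw [Real.fourier_eq', integral_eq_intervalIntegral_of_eq_zero zero_le_one fun t ht => by
    rw [cosArch_of_one_le_abs ht, Complex.ofReal_zero, smul_zero]]
  calc _ = ∫ t in (-1 : ℝ)..1, (π / 4 : ℂ) *
          (Complex.exp ((-(2 * π * x) * t : ℝ) * Complex.I) * (Real.cos (π / 2 * t) : ℂ)) := by
        refine intervalIntegral.integral_congr fun t ht => ?_
        rw [Set.uIcc_of_le (by norm_num), Set.mem_Icc, ← abs_le] at ht
        simp only [cosArch_of_abs_le_one ht, smul_eq_mul, RCLike.inner_apply, conj_trivial]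
        push_cast
        ring_nf
    _ = cosKernel x := by
        rw [intervalIntegral.integral_const_mul, integral_exp_mul_I_mul_cos_neg_one_one,
          cosKernel, ← even_sincPair (2 * π * x), sincPair]
        push_cast
        rfl

lemma fourier_cosKernel (t : ℝ) : 𝓕 (fun x => (cosKernel x : ℂ)) t = cosArch t := by
  have hfourier : 𝓕 (fun t => (cosArch t : ℂ)) = fun x => (cosKernel x : ℂ) :=
    funext fourier_cosArch
  have hinversion := Continuous.fourierInv_fourier_eq
    (by fun_prop : Continuous fun t => (cosArch t : ℂ)) integrable_cosArch.ofReal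
    (hfourier ▸ integrable_cosKernel.ofReal)
  rw [← neg_neg t, ← Real.fourierInv_eq_fourier_neg, ← hfourier, hinversion, neg_neg]
  exact congrArg Complex.ofReal (even_cosArch t)

lemma norm_fourier_cosKernel_comp_div {a : ℝ} (ha : 0 < a) (t : ℝ) :
    ‖𝓕 (fun x => (cosKernel (x / a) : ℂ)) t‖ = a * cosArch (a * t) := by
  rw [fourier_comp_div (fun x => (cosKernel x : ℂ)) ha.ne', fourier_cosKernel, norm_smul,
    Complex.norm_of_nonneg (cosArch_nonneg _), Real.norm_eq_abs, abs_abs, abs_of_pos ha]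

lemma cosKernel_comp_div_quotient_eq (A : ℝ) {a : ℝ} (h0 : 0 < a) (h1 : a ≤ 1) :
    (cosKernel 0 - A * ∫ t in {t : ℝ | 1 ≤ |t|}, ‖𝓕 (fun x => (cosKernel (x / a) : ℂ)) t‖) /
        ∫ x, |cosKernel (x / a)| =
      2 * (1 - A * (1 - Real.sin (π / 2 * a))) / (a * ∫ y in (0 : ℝ)..π, Real.sinc y) := by
  simp only [norm_fourier_cosKernel_comp_div h0]
  rw [setIntegral_one_le_abs_cosArch_mul h0 h1, cosKernel_zero,
    Measure.integral_comp_div (fun x => |cosKernel x|), integral_abs_cosKernel, abs_of_pos h0,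
    smul_eq_mul]
  field_simp

end FourierTransform

/-- The dilation F(x) = H(x/0.9) of H(x) = cos(2πx)/(1 − 16x²) satisfies
(F(0) − 4∫_{|t|≥1}|F̂|)/‖F‖₁ > 25/22. -/
theorem dilated_H_bound
    (H : ℝ → ℝ) (hHc : Continuous H)
    (hHval : ∀ x : ℝ, 1 - 16 * x ^ 2 ≠ 0 → H x = Real.cos (2 * π * x) / (1 - 16 * x ^ 2))
    (F : ℝ → ℝ) (hF : F = fun x => H (x / 0.9)) :
    25 / 22 <
      (F 0 - 4 * ∫ t in {t : ℝ | 1 ≤ |t|}, ‖𝓕 (fun x => (F x : ℂ)) t‖) /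
        (∫ x : ℝ, |F x|) := by
  obtain rfl := eq_cosKernel_of_continuous hHc hHval
  have hSi_pos := integral_sinc_zero_pi_pos
  have hSi_lt := integral_sinc_zero_pi_lt
  have hpi_sq : π ^ 2 < 3.1416 ^ 2 := by
    gcongr
    exact Real.pi_lt_d4
  have hsin : 1 - (π / 20) ^ 2 / 2 ≤ Real.sin (π / 2 * 0.9) := by
    rw [show π / 2 * 0.9 = π / 2 - π / 20 by ring, Real.sin_pi_div_two_sub]
    exact Real.one_sub_sq_div_two_le_cos
  simp only [hF, zero_div]
  rw [cosKernel_comp_div_quotient_eq 4 (by norm_num) (by norm_num), lt_div_iff₀ (by positivity)]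
  linarith
end
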